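/- Geometry near a potential splash (Proposition 2.5(i)): There exist constants ε₄, ε₅ ∈ (0,1) with ε₄ ≤ ε₅¹⁰⁰, depending only on A, T, σ, g, ρ¹, ρ², with the following property. Suppose t ∈ [0,T] and inf_{α,β∈ℝ} F(z)(α,β,t) = ε ≤ ε₄. Then there exist α₁, α₂ ∈ ℝ with |α₁ − α₂| ∈ [2ε₁, ε₁⁻¹/2] and |z(α₁,t) − z(α₂,t)| = inf{|z(α,t) − z(β,t)| : |α − β| ∈ [ε₁, ε₁⁻¹]} (here ε₁ = ε₁(A) > 0 is a constant such that |z(α,t) − z(β,t)| ≥ ε₁|α − β| whenever |α − β| ≤ ε₁, which exists by the local chord-arc bound), such that, setting d := |z(α₂,t) − z(α₁,t)| and e := (z(α₂,t) − z(α₁,t))/d, one has: d ≈ ε (i.e., C⁻¹ε ≤ d ≤ Cε for some C depending only on A, T, σ, g, ρ¹, ρ²); the open line segment between z(α₁,t) and z(α₂,t) is contained in Ω²(t); ∂_α z(α₁,t)·e = ∂_α z(α₂,t)·e = 0 and ∂_α z(α₁,t)·∂_α z(α₂,t) < 0; and the inclusions: {z(β,t) − ρe : |β − α₁| ≤ ε₅,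 ρ ∈ (0,ε₅)} ⊆ Ω¹(t), {z(β,t) + ρe : |β − α₂| ≤ ε₅, ρ ∈ (0,ε₅)} ⊆ Ω¹(t), {z(β,t) + ρe : |β − α₁| ≤ ε₅, ρ ∈ (0,d)} ⊆ Ω²(t), {z(β,t) − ρe : |β − α₂| ≤ ε₅, ρ ∈ (0,d)} ⊆ Ω²(t). -/

import Mathlib

noncomputable section
open Set MeasureTheory Filter

/-- The plane `ℝ²` with the Euclidean norm. -/
abbrev E2 : Type := EuclideanSpace ℝ (Fin 2)

/-- The real inner product on `ℝ²`. -/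
def rinner (x y : E2) : ℝ := inner ℝ x y

/-- The vector `(1,0)`. -/
def xvec : E2 := (EuclideanSpace.equiv (Fin 2) ℝ).symm ![1, 0]

/-- The vector `(0,1)`. -/
def e2vec : E2 := (EuclideanSpace.equiv (Fin 2) ℝ).symm ![0, 1]

/-- The period vector `(2π, 0)`. -/
def transl : E2 := (EuclideanSpace.equiv (Fin 2) ℝ).symm ![2 * Real.pi, 0]

/-- The rotation of a vector by `π/2`: `(x,y)^⊥ = (-y,x)`. -/
def perpv (w : E2) : E2 := (EuclideanSpace.equiv (Fin 2) ℝ).symm ![-(w 1), w 0]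

/-- The chord-arc function `F(z)` of a time-dependent curve. -/
def chordArcT (z : ℝ → ℝ → E2) (α β t : ℝ) : ℝ :=
  if α = β then ‖deriv (fun a => z a t) α‖ else ‖z α t - z β t‖ / |α - β|

/-- The two-fluid interface system on the time interval `[0,T]`, in the `2π`-periodic setting,
with densities `ρ1, ρ2`, surface tension coefficient `σ`, gravity constant `grav`, and
quantitative bounds measured by the constant `A`. -/
structure TwoFluid (ρ1 ρ2 σ grav T A : ℝ) where
  /-- the parametrization of the interface -/
  z : ℝ → ℝ → E2
  /-- the domain of the first fluid -/
  Ω1 : ℝ → Set E2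
  /-- the domain of the second fluid -/
  Ω2 : ℝ → Set E2
  /-- the velocity field of the first fluid -/
  u1 : E2 → ℝ → E2
  /-- the velocity field of the second fluid -/
  u2 : E2 → ℝ → E2
  /-- the pressure of the first fluid -/
  P1 : E2 → ℝ → ℝ
  /-- the pressure of the second fluid -/
  P2 : E2 → ℝ → ℝ
  hΩ1_open : ∀ t ∈ Icc (0:ℝ) T, IsOpen (Ω1 t)
  hΩ2_open : ∀ t ∈ Icc (0:ℝ) T, IsOpen (Ω2 t)
  hΩ1_conn : ∀ t ∈ Icc (0:ℝ) T, IsConnected (Ω1 t)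
  hΩ2_conn : ∀ t ∈ Icc (0:ℝ) T, IsConnected (Ω2 t)
  hΩ1_sc : ∀ t ∈ Icc (0:ℝ) T, SimplyConnectedSpace (Ω1 t)
  hΩ2_sc : ∀ t ∈ Icc (0:ℝ) T, SimplyConnectedSpace (Ω2 t)
  /-- `ℝ²` is the disjoint union of `Ω1 t`, `Ω2 t` and the interface `Γ_t` -/
  hUnion : ∀ t ∈ Icc (0:ℝ) T, Ω1 t ∪ Ω2 t ∪ range (fun α => z α t) = univ
  hDisj12 : ∀ t ∈ Icc (0:ℝ) T, Disjoint (Ω1 t) (Ω2 t)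
  hDisj1Γ : ∀ t ∈ Icc (0:ℝ) T, Disjoint (Ω1 t) (range (fun α => z α t))
  hDisj2Γ : ∀ t ∈ Icc (0:ℝ) T, Disjoint (Ω2 t) (range (fun α => z α t))
  hFront1 : ∀ t ∈ Icc (0:ℝ) T, frontier (Ω1 t) = range (fun α => z α t)
  hFront2 : ∀ t ∈ Icc (0:ℝ) T, frontier (Ω2 t) = range (fun α => z α t)
  /-- `Ω1` contains a lower half-plane and `Ω2` an upper half-plane -/
  hStrip : ∃ a : ℝ, 1 ≤ a ∧ ∀ t ∈ Icc (0:ℝ) T,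
      {x : E2 | x 1 ≤ -a} ⊆ Ω1 t ∧ {x : E2 | a ≤ x 1} ⊆ Ω2 t
  /-- `u1(·,t)` is `C³` on the closure of `Ω1 t` -/
  hu1_reg : ∀ t ∈ Icc (0:ℝ) T, ContDiffOn ℝ 3 (fun x => u1 x t) (closure (Ω1 t))
  hu2_reg : ∀ t ∈ Icc (0:ℝ) T, ContDiffOn ℝ 3 (fun x => u2 x t) (closure (Ω2 t))
  hP1_reg : ∀ t ∈ Icc (0:ℝ) T, ContDiffOn ℝ 1 (fun x => P1 x t) (closure (Ω1 t))
  hP2_reg : ∀ t ∈ Icc (0:ℝ) T, ContDiffOn ℝ 1 (fun x => P2 x t) (closure (Ω2 t))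
  /-- Euler's equation in `Ω1 t` -/
  hEuler1 : ∀ t ∈ Icc (0:ℝ) T, ∀ x ∈ Ω1 t,
      ρ1 • (deriv (fun s => u1 x s) t + fderiv ℝ (fun y => u1 y t) x (u1 x t)) =
        -gradient (fun y => P1 y t) x - (grav * ρ1) • e2vec
  /-- Euler's equation in `Ω2 t` -/
  hEuler2 : ∀ t ∈ Icc (0:ℝ) T, ∀ x ∈ Ω2 t,
      ρ2 • (deriv (fun s => u2 x s) t + fderiv ℝ (fun y => u2 y t) x (u2 x t)) =
        -gradient (fun y => P2 y t) x - (grav * ρ2) • e2vec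
  /-- incompressibility of the first fluid -/
  hdiv1 : ∀ t ∈ Icc (0:ℝ) T, ∀ x ∈ Ω1 t,
      fderiv ℝ (fun y => u1 y t) x (EuclideanSpace.single 0 1) 0 +
        fderiv ℝ (fun y => u1 y t) x (EuclideanSpace.single 1 1) 1 = 0
  hdiv2 : ∀ t ∈ Icc (0:ℝ) T, ∀ x ∈ Ω2 t,
      fderiv ℝ (fun y => u2 y t) x (EuclideanSpace.single 0 1) 0 +
        fderiv ℝ (fun y => u2 y t) x (EuclideanSpace.single 1 1) 1 = 0
  /-- irrotationality of the first fluid -/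
  hcurl1 : ∀ t ∈ Icc (0:ℝ) T, ∀ x ∈ Ω1 t,
      fderiv ℝ (fun y => u1 y t) x (EuclideanSpace.single 0 1) 1 -
        fderiv ℝ (fun y => u1 y t) x (EuclideanSpace.single 1 1) 0 = 0
  hcurl2 : ∀ t ∈ Icc (0:ℝ) T, ∀ x ∈ Ω2 t,
      fderiv ℝ (fun y => u2 y t) x (EuclideanSpace.single 0 1) 1 -
        fderiv ℝ (fun y => u2 y t) x (EuclideanSpace.single 1 1) 0 = 0
  /-- kinematic boundary condition for the first fluid -/
  hkin1 : ∀ t ∈ Icc (0:ℝ) T, ∀ α : ℝ,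
      rinner (deriv (fun s => z α s) t - u1 (z α t) t) (perpv (deriv (fun a => z a t) α)) = 0
  hkin2 : ∀ t ∈ Icc (0:ℝ) T, ∀ α : ℝ,
      rinner (deriv (fun s => z α s) t - u2 (z α t) t) (perpv (deriv (fun a => z a t) α)) = 0
  /-- the pressure jump at the interface is given by the surface tension times the curvature -/
  hjump : ∀ t ∈ Icc (0:ℝ) T, ∀ α : ℝ,
      P2 (z α t) t - P1 (z α t) t =
        -σ * (deriv (fun a => z a t) α 0 * deriv (fun a => deriv (fun b => z b t) a) α 1 -
              deriv (fun a => z a t) α 1 * deriv (fun a => deriv (fun b => z b t) a) α 0) /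
          ((deriv (fun a => z a t) α 0) ^ 2 + (deriv (fun a => z a t) α 1) ^ 2) ^ ((3:ℝ)/2)
  /-- `2π`-periodicity -/
  hper_z : ∀ t ∈ Icc (0:ℝ) T, ∀ α : ℝ, z (α + 2 * Real.pi) t = z α t + transl
  hper_Ω1 : ∀ t ∈ Icc (0:ℝ) T, (fun x => x + transl) '' Ω1 t = Ω1 t
  hper_Ω2 : ∀ t ∈ Icc (0:ℝ) T, (fun x => x + transl) '' Ω2 t = Ω2 t
  hper_u1 : ∀ t ∈ Icc (0:ℝ) T, ∀ x ∈ Ω1 t, u1 (x + transl) t = u1 x t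
  hper_u2 : ∀ t ∈ Icc (0:ℝ) T, ∀ x ∈ Ω2 t, u2 (x + transl) t = u2 x t
  /-- finite kinetic energy in a period -/
  hL2_1 : ∀ t ∈ Icc (0:ℝ) T,
      IntegrableOn (fun x => ‖u1 x t‖ ^ 2) (Ω1 t ∩ {x : E2 | x 0 ∈ Icc 0 (2 * Real.pi)})
  hL2_2 : ∀ t ∈ Icc (0:ℝ) T,
      IntegrableOn (fun x => ‖u2 x t‖ ^ 2) (Ω2 t ∩ {x : E2 | x 0 ∈ Icc 0 (2 * Real.pi)})
  /-- `z(α,t) - (α,0)` is `C⁴` with all derivatives of order `≤ 4` bounded by `A` -/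
  hz_smooth : ContDiffOn ℝ 4 (fun p : ℝ × ℝ => z p.1 p.2 - p.1 • xvec) (univ ×ˢ Icc (0:ℝ) T)
  hz_bound : ∀ p ∈ (univ ×ˢ Icc (0:ℝ) T : Set (ℝ × ℝ)), ∀ i : ℕ, i ≤ 4 →
      ‖iteratedFDerivWithin ℝ i (fun p : ℝ × ℝ => z p.1 p.2 - p.1 • xvec)
          (univ ×ˢ Icc (0:ℝ) T) p‖ ≤ A
  /-- the parametrization is regular -/
  hz_lower : ∀ t ∈ Icc (0:ℝ) T, ∀ α : ℝ, A⁻¹ ≤ ‖deriv (fun a => z a t) α‖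
  /-- `v¹(α,t) = u¹(z(α,t),t)` is `C³` with all derivatives of order `≤ 3` bounded by `A` -/
  hv1_smooth : ContDiffOn ℝ 3 (fun p : ℝ × ℝ => u1 (z p.1 p.2) p.2) (univ ×ˢ Icc (0:ℝ) T)
  hv1_bound : ∀ p ∈ (univ ×ˢ Icc (0:ℝ) T : Set (ℝ × ℝ)), ∀ i : ℕ, i ≤ 3 →
      ‖iteratedFDerivWithin ℝ i (fun p : ℝ × ℝ => u1 (z p.1 p.2) p.2)
          (univ ×ˢ Icc (0:ℝ) T) p‖ ≤ A
  /-- the chord-arc condition at time `0` -/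
  hchord0 : ∀ α β : ℝ, A⁻¹ ≤ chordArcT z α β 0
  /-- `u²` is bounded by `A` on the interface at time `0` -/
  hu2_init : ∀ α : ℝ, ‖u2 (z α 0) 0‖ ≤ A


structure Crv (A : ℝ) (z z' : ℝ → ℂ) (O1 O2 : Set ℂ) : Prop where
  hA : 1 ≤ A
  hd : ∀ α, HasDerivAt z (z' α) α
  hlip : ∀ α β, ‖z' α - z' β‖ ≤ A * |α - β|
  hlow : ∀ α, A⁻¹ ≤ ‖z' α‖
  hnear : ∀ α : ℝ, ‖z α - (α : ℂ)‖ ≤ A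
  hper : ∀ α, z (α + 2 * Real.pi) = z α + ((2 * Real.pi : ℝ) : ℂ)
  o1 : IsOpen O1
  o2 : IsOpen O2
  c1 : IsConnected O1
  c2 : IsConnected O2
  hun : O1 ∪ O2 ∪ range z = univ
  d12 : Disjoint O1 O2
  d1 : Disjoint O1 (range z)
  d2 : Disjoint O2 (range z)
  f1 : frontier O1 = range z
  f2 : frontier O2 = range z
  hst : ∃ a : ℝ, {x : ℂ | x.im ≤ -a} ⊆ O1 ∧ {x : ℂ | a ≤ x.im} ⊆ O2

namespace Crv
variable {A : ℝ} {z z' : ℝ → ℂ} {O1 O2 : Set ℂ}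

theorem cont (C : Crv A z z' O1 O2) : Continuous z :=
  continuous_iff_continuousAt.2 fun a => (C.hd a).continuousAt

theorem cont' (C : Crv A z z' O1 O2) : Continuous z' := by
  have : LipschitzWith (Real.toNNReal A) z' := by
    apply LipschitzWith.of_dist_le_mul
    intro x y
    rw [dist_eq_norm, Real.coe_toNNReal _ (by linarith [C.hA]), Real.dist_eq]
    exact C.hlip x y
  exact this.continuous

theorem taylor (C : Crv A z z' O1 O2) (α β γ r : ℝ) (h1 : |α - γ| ≤ r) (h2 : |β - γ| ≤ r) :
    ‖z α - z β - ((α - β : ℝ) : ℂ) * z' γ‖ ≤ A * r * |α - β| := by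
  have hA := C.hA
  have key := Convex.norm_image_sub_le_of_norm_hasDerivWithin_le (𝕜 := ℝ)
    (f := fun s : ℝ => z s - (s : ℂ) * z' γ)
    (f' := fun s : ℝ => z' s - z' γ) (s := uIcc β α) (C := A * r) (x := β) (y := α) ?_ ?_
    (convex_uIcc _ _) left_mem_uIcc right_mem_uIcc
  · have e : z α - z β - ((α - β : ℝ) : ℂ) * z' γ = (z α - (α : ℂ) * z' γ) - (z β - (β : ℂ) * z' γ) := by
      push_cast; ring
    rw [e]
    exact key
  · intro x _
    have : HasDerivAt (fun s : ℝ => (s : ℂ) * z' γ) (z' γ) x := by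
      simpa using (Complex.ofRealCLM.hasDerivAt (x := x)).mul_const (z' γ)
    exact ((C.hd x).sub this).hasDerivWithinAt
  · intro x hx
    refine (C.hlip x γ).trans ?_
    have : |x - γ| ≤ r := by
      rw [abs_le] at *
      rcases mem_uIcc.1 hx with h | h <;> constructor <;> linarith
    gcongr

theorem chord (C : Crv A z z' O1 O2) (α β : ℝ) (h : |α - β| ≤ 1 / (2 * A ^ 2)) :
    |α - β| / (2 * A) ≤ ‖z α - z β‖ := by
  have hA := C.hA
  have h1 := C.taylor α β β |α - β| le_rfl (by simp)
  have h2 : ‖((α - β : ℝ) : ℂ) * z' β‖ ≤ ‖z α - z β‖ + A * |α - β| * |α - β| := by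
    calc ‖((α - β : ℝ) : ℂ) * z' β‖ = ‖(z α - z β) - (z α - z β - ((α - β : ℝ) : ℂ) * z' β)‖ := by
          congr 1; ring
      _ ≤ _ := (norm_sub_le _ _).trans (by gcongr)
  rw [norm_mul, Complex.norm_real, Real.norm_eq_abs] at h2
  have h3 := C.hlow β
  have h4 : |α - β| * A⁻¹ ≤ |α - β| * ‖z' β‖ := by gcongr
  have h5 : A * |α - β| * |α - β| ≤ A * (1 / (2 * A ^ 2)) * |α - β| := by gcongr
  have h6 : A * (1 / (2 * A ^ 2)) * |α - β| = |α - β| / (2 * A) := by field_simp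
  have h7 : |α - β| * A⁻¹ = |α - β| / (2 * A) + |α - β| / (2 * A) := by field_simp; ring
  linarith

theorem far (C : Crv A z z' O1 O2) (α β : ℝ) : |α - β| - 2 * A ≤ ‖z α - z β‖ := by
  have h1 := C.hnear α
  have h2 := C.hnear β
  have : ((α - β : ℝ) : ℂ) = (z α - z β) - (z α - α) + (z β - β) := by push_cast; ring
  have h3 : |α - β| = ‖((α - β : ℝ) : ℂ)‖ := by rw [Complex.norm_real, Real.norm_eq_abs]
  rw [h3, this]
  have := norm_add_le ((z α - z β) - (z α - α)) (z β - β)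
  have := norm_sub_le (z α - z β) (z α - α)
  linarith

theorem proper (C : Crv A z z' O1 O2) : IsProperMap z := by
  rw [isProperMap_iff_tendsto_cocompact]
  refine ⟨C.cont, ?_⟩
  rw [← Metric.cobounded_eq_cocompact (α := ℂ), ← comap_norm_atTop (E := ℂ), tendsto_comap_iff]
  have h : Tendsto (fun x : ℝ => ‖x‖ - A) (cocompact ℝ) atTop :=
    tendsto_atTop_add_const_right _ _ (tendsto_norm_cocompact_atTop)
  refine tendsto_atTop_mono ?_ h
  intro x
  have := C.hnear x
  have h2 := norm_sub_norm_le (x : ℂ) (z x)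
  rw [norm_sub_rev, Complex.norm_real] at h2
  simp only [Function.comp]
  linarith

theorem side1 (C : Crv A z z' O1 O2) {S : Set ℂ} (hS : IsPreconnected S)
    (hd : ∀ x ∈ S, x ∉ range z) (hn : ∃ x ∈ S, x ∈ O1) : S ⊆ O1 := by
  refine hS.subset_left_of_subset_union C.o1 C.o2 C.d12 ?_ ?_
  · intro x hx
    have : x ∈ O1 ∪ O2 ∪ range z := by rw [C.hun]; trivial
    rcases this with h | h
    · exact h
    · exact absurd h (hd x hx)
  · obtain ⟨x, h1, h2⟩ := hn
    exact ⟨x, h1, h2⟩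

theorem side2 (C : Crv A z z' O1 O2) {S : Set ℂ} (hS : IsPreconnected S)
    (hd : ∀ x ∈ S, x ∉ range z) (hn : ∃ x ∈ S, x ∈ O2) : S ⊆ O2 := by
  refine hS.subset_right_of_subset_union C.o1 C.o2 C.d12 ?_ ?_
  · intro x hx
    have : x ∈ O1 ∪ O2 ∪ range z := by rw [C.hun]; trivial
    rcases this with h | h
    · exact h
    · exact absurd h (hd x hx)
  · obtain ⟨x, h1, h2⟩ := hn
    exact ⟨x, h1, h2⟩

end Crv

/-- winding integral -/
def wind (z z' : ℝ → ℂ) (a b : ℝ) (w : ℂ) : ℂ := ∫ s in a..b, z' s / (z s - w)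

theorem wind_intble {z z' : ℝ → ℂ} (hz : Continuous z) (hz' : Continuous z') {a b : ℝ} (hab : a ≤ b)
    {w : ℂ} (hw : ∀ s ∈ Icc a b, z s ≠ w) :
    IntervalIntegrable (fun s => z' s / (z s - w)) volume a b := by
  apply ContinuousOn.intervalIntegrable
  rw [uIcc_of_le hab]
  apply ContinuousOn.div hz'.continuousOn (by fun_prop)
  intro x hx
  exact sub_ne_zero.2 (hw x hx)

theorem wind_far {z z' : ℝ → ℂ} (hd : ∀ s, HasDerivAt z (z' s) s) (hz' : Continuous z') {a b : ℝ} (hab : a ≤ b)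
    (hcl : z a = z b) {w : ℂ} (hw : ∀ s ∈ Icc a b, ‖z s‖ < ‖w‖) : wind z z' a b w = 0 := by
  have hz : Continuous z := continuous_iff_continuousAt.2 fun a => (hd a).continuousAt
  have hne : ∀ s ∈ Icc a b, z s ≠ w := fun s hs h => by
    have := hw s hs; rw [h] at this; exact lt_irrefl _ this
  have hw0 : w ≠ 0 := by
    intro h
    have := hw a (left_mem_Icc.2 hab)
    rw [h, norm_zero] at this
    exact absurd this (not_lt.2 (norm_nonneg _))
  unfold wind
  rw [intervalIntegral.integral_eq_sub_of_hasDerivAt (f := fun s => Complex.log (1 - z s / w)) _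
    (wind_intble hz hz' hab hne)]
  · simp [hcl]
  · intro s hs
    rw [uIcc_of_le hab] at hs
    have hsl : 1 - z s / w ∈ Complex.slitPlane := by
      apply Complex.ball_one_subset_slitPlane
      rw [mem_ball_iff_norm]
      have : 1 - z s / w - 1 = - (z s / w) := by ring
      rw [this, norm_neg, norm_div, div_lt_one (norm_pos_iff.2 hw0)]
      exact hw s hs
    have h1 : HasDerivAt (fun s => 1 - z s / w) (- (z' s / w)) s := by
      simpa using ((hd s).div_const w).const_sub 1
    have := h1.clog_real hsl
    refine this.congr_deriv ?_
    have h2 : z s - w ≠ 0 := sub_ne_zero.2 (hne s hs)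
    have h3 : 1 - z s / w ≠ 0 := Complex.slitPlane_ne_zero hsl
    have h4 : w - z s ≠ 0 := sub_ne_zero.2 (hne s hs).symm
    have h5 : 1 - z s / w = (w - z s) / w := by field_simp
    rw [h5]
    field_simp
    ring

theorem wind_loc {z z' : ℝ → ℂ} (hd : ∀ s, HasDerivAt z (z' s) s) (hz' : Continuous z') {a b : ℝ} (hab : a ≤ b)
    (hcl : z a = z b) {w : ℂ} (hw : ∀ s ∈ Icc a b, z s ≠ w) :
    ∀ᶠ v in nhds w, wind z z' a b v = wind z z' a b w := by
  have hz : Continuous z := continuous_iff_continuousAt.2 fun a => (hd a).continuousAt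
  obtain ⟨s0, hs0, hmin⟩ := isCompact_Icc.exists_isMinOn (nonempty_Icc.2 hab)
    (f := fun s => ‖z s - w‖) (by fun_prop)
  have hr : 0 < ‖z s0 - w‖ := norm_pos_iff.2 (sub_ne_zero.2 (hw s0 hs0))
  filter_upwards [Metric.ball_mem_nhds w hr] with v hv
  rw [mem_ball_iff_norm] at hv
  have hm : ∀ s ∈ Icc a b, ‖v - w‖ < ‖z s - w‖ := fun s hs => lt_of_lt_of_le hv (hmin hs)
  have hv' : ∀ s ∈ Icc a b, z s ≠ v := fun s hs h => by
    have := hm s hs; rw [h] at this; exact lt_irrefl _ this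
  unfold wind
  rw [← sub_eq_zero, ← intervalIntegral.integral_sub (wind_intble hz hz' hab hv') (wind_intble hz hz' hab hw)]
  rw [intervalIntegral.integral_eq_sub_of_hasDerivAt (f := fun s => Complex.log (1 - (v - w) / (z s - w))) _
    ((wind_intble hz hz' hab hv').sub (wind_intble hz hz' hab hw))]
  · simp [hcl]
  · intro s hs
    rw [uIcc_of_le hab] at hs
    have h2 : z s - w ≠ 0 := sub_ne_zero.2 (hw s hs)
    have h4 : z s - v ≠ 0 := sub_ne_zero.2 (hv' s hs)
    have hsl : 1 - (v - w) / (z s - w) ∈ Complex.slitPlane := by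
      apply Complex.ball_one_subset_slitPlane
      rw [mem_ball_iff_norm]
      have : 1 - (v - w) / (z s - w) - 1 = - ((v - w) / (z s - w)) := by ring
      rw [this, norm_neg, norm_div, div_lt_one (norm_pos_iff.2 h2)]
      exact hm s hs
    have h1 : HasDerivAt (fun s => 1 - (v - w) / (z s - w))
        (- ((0 * (z s - w) - (v - w) * z' s) / (z s - w) ^ 2)) s := by
      have := ((hasDerivAt_const s (v - w)).div ((hd s).sub_const w) h2).const_sub 1
      simpa using this
    have := h1.clog_real hsl
    refine this.congr_deriv ?_
    have h3 : 1 - (v - w) / (z s - w) ≠ 0 := Complex.slitPlane_ne_zero hsl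
    have h5 : 1 - (v - w) / (z s - w) = (z s - v) / (z s - w) := by field_simp; ring
    rw [h5]
    field_simp
    ring


theorem jump_pt (σ δ : ℝ) (q p : ℂ) (hδ : 0 < δ) (h1 : ‖p - 1‖ ≤ 1 / 20) (h2 : ‖q - σ‖ ≤ |σ| / 20) :
    q ^ 2 + (δ : ℂ) ^ 2 ≠ 0 ∧ 0 ≤ (δ * p / (q ^ 2 + (δ : ℂ) ^ 2)).re ∧
      (|σ| ≤ δ → 1 / (8 * δ) ≤ (δ * p / (q ^ 2 + (δ : ℂ) ^ 2)).re) := by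
  set X : ℝ := σ ^ 2 + δ ^ 2 with hX
  have hXp : 0 < X := by positivity
  set D : ℂ := q ^ 2 + (δ : ℂ) ^ 2 with hD
  have hDX : ‖D - X‖ ≤ X / 8 := by
    have e : D - X = (q - σ) * (q - σ + 2 * σ) := by simp only [hD, hX]; push_cast; ring
    rw [e, norm_mul]
    have h3 : ‖q - σ + 2 * σ‖ ≤ |σ| / 20 + 2 * |σ| := by
      refine (norm_add_le _ _).trans ?_
      have : ‖(2 * σ : ℂ)‖ = 2 * |σ| := by simp
      linarith
    calc ‖q - σ‖ * ‖q - σ + 2 * σ‖ ≤ |σ| / 20 * (|σ| / 20 + 2 * |σ|) := by gcongr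
      _ = |σ| ^ 2 * (41 / 400) := by ring
      _ ≤ X / 8 := by rw [sq_abs]; simp only [hX]; nlinarith [sq_nonneg σ, sq_nonneg δ]
  have hDn : ‖D‖ ≤ 9 / 8 * X := by
    have : ‖D‖ ≤ ‖D - X‖ + ‖(X : ℂ)‖ := by simpa using norm_add_le (D - X) X
    rw [Complex.norm_real, Real.norm_eq_abs, abs_of_pos hXp] at this
    linarith
  have hDl : 7 / 8 * X ≤ ‖D‖ := by
    have := norm_sub_norm_le (X : ℂ) D
    rw [norm_sub_rev, Complex.norm_real, Real.norm_eq_abs, abs_of_pos hXp] at this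
    linarith
  have hD0 : D ≠ 0 := norm_pos_iff.1 (by linarith)
  have hre : 1 / (4 * X) ≤ (p / D).re := by
    have hns : 0 < Complex.normSq D := Complex.normSq_pos.2 hD0
    have e : (p / D).re = (p * (starRingEnd ℂ) D).re / Complex.normSq D := by
      rw [Complex.div_re]; simp only [Complex.mul_re, Complex.conj_re, Complex.conj_im]; field_simp; ring
    have h4 : X / 2 ≤ (p * (starRingEnd ℂ) D).re := by
      have e2 : p * (starRingEnd ℂ) D = X + ((starRingEnd ℂ) (D - X) + (p - 1) * (starRingEnd ℂ) D) := by
        simp only [map_sub, Complex.conj_ofReal]; ring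
      rw [e2, Complex.add_re, Complex.ofReal_re]
      have h5 := Complex.abs_re_le_norm ((starRingEnd ℂ) (D - X) + (p - 1) * (starRingEnd ℂ) D)
      have h6 := norm_add_le ((starRingEnd ℂ) (D - X)) ((p - 1) * (starRingEnd ℂ) D)
      rw [norm_mul, Complex.norm_conj, Complex.norm_conj] at h6
      have h7 : ‖p - 1‖ * ‖D‖ ≤ 1 / 20 * (9 / 8 * X) := by gcongr
      have h8 := (abs_le.1 h5).1
      linarith
    have h9 : Complex.normSq D ≤ 2 * X ^ 2 := by
      rw [Complex.normSq_eq_norm_sq]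
      calc ‖D‖ ^ 2 ≤ (9 / 8 * X) ^ 2 := by gcongr
        _ ≤ 2 * X ^ 2 := by nlinarith [sq_nonneg X]
    rw [e, div_le_div_iff₀ (by positivity) hns]
    nlinarith
  have e3 : (δ * p / D).re = δ * (p / D).re := by
    rw [mul_div_assoc, Complex.re_ofReal_mul]
  rw [e3]
  refine ⟨hD0, ?_, ?_⟩
  · have : 0 < 1 / (4 * X) := by positivity
    have : 0 < (p / D).re := by linarith
    positivity
  · intro hs
    have h10 : X ≤ 2 * δ ^ 2 := by
      have := pow_le_pow_left₀ (abs_nonneg σ) hs 2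
      rw [sq_abs] at this
      simp only [hX]; linarith
    calc 1 / (8 * δ) = δ * (1 / (4 * (2 * δ ^ 2))) := by field_simp; ring
      _ ≤ δ * (1 / (4 * X)) := by gcongr
      _ ≤ _ := by gcongr

theorem jump_core (q q' : ℝ → ℂ) (hq : Continuous q) (hq' : Continuous q') (a b g r : ℝ) (hr : 0 < r)
    (hag : a ≤ g - r) (hgb : g + r ≤ b)
    (h1 : ∀ s, |s - g| ≤ r → ‖q' s - 1‖ ≤ 1 / 20 ∧ ‖q s - ((s - g : ℝ) : ℂ)‖ ≤ |s - g| / 20)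
    (h0 : ∀ s ∈ Icc a b, s ≠ g → q s ≠ 0) :
    ∃ δ : ℝ, 0 < δ ∧ (∀ s ∈ Icc a b, q s ^ 2 + (δ : ℂ) ^ 2 ≠ 0) ∧
      0 < (∫ s in a..b, δ * q' s / (q s ^ 2 + (δ : ℂ) ^ 2)).re := by
  have hab : a ≤ b := by linarith
  have hK : IsCompact {s | s ∈ Icc a b ∧ r ≤ |s - g|} :=
    isCompact_Icc.inter_right (t := {s | r ≤ |s - g|}) (isClosed_le (by fun_prop) (by fun_prop))
  obtain ⟨c, hc, hcb⟩ := hK.exists_forall_le' (f := fun s => ‖q s‖) (a := 0) (by fun_prop) (by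
    intro s hs
    refine norm_pos_iff.2 (h0 s hs.1 ?_)
    rintro rfl
    have := hs.2
    simp at this; linarith)
  obtain ⟨Q, hQ⟩ := isCompact_Icc.exists_bound_of_continuousOn (s := Icc a b) (f := q') hq'.continuousOn
  have hQ0 : 0 ≤ Q := (norm_nonneg _).trans (hQ a (left_mem_Icc.2 hab))
  set K : ℝ := 2 * Q / c ^ 2 with hKd
  have hK0 : 0 ≤ K := by positivity
  obtain ⟨δ, hδ, hδr, hδc, hδK⟩ : ∃ δ : ℝ, 0 < δ ∧ δ ≤ r ∧ δ ≤ c / 2 ∧ K * δ * (b - a) < 1 / 4 := by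
    refine ⟨min (min r (c / 2)) (1 / (8 * (K * (b - a) + 1))), ?_, ?_, ?_, ?_⟩
    · have : 0 ≤ K * (b - a) := mul_nonneg hK0 (by linarith)
      positivity
    · exact (min_le_left _ _).trans (min_le_left _ _)
    · exact (min_le_left _ _).trans (min_le_right _ _)
    · have h3 : 0 ≤ K * (b - a) := mul_nonneg hK0 (by linarith)
      have h4 := min_le_right (min r (c / 2)) (1 / (8 * (K * (b - a) + 1)))
      calc _ = K * (b - a) * min (min r (c / 2)) (1 / (8 * (K * (b - a) + 1))) := by ring
        _ ≤ K * (b - a) * (1 / (8 * (K * (b - a) + 1))) := by gcongr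
        _ < 1 / 4 := by
          rw [mul_one_div, div_lt_div_iff₀ (by positivity) (by norm_num)]; linarith
  have hfarD : ∀ s ∈ Icc a b, r ≤ |s - g| → c ^ 2 / 2 ≤ ‖q s ^ 2 + (δ : ℂ) ^ 2‖ := by
    intro s hs hsr
    have h2 := hcb s ⟨hs, hsr⟩
    have h3 := norm_sub_norm_le (q s ^ 2) (-(δ : ℂ) ^ 2)
    have e : q s ^ 2 - -(δ : ℂ) ^ 2 = q s ^ 2 + (δ : ℂ) ^ 2 := by ring
    rw [e, norm_neg, norm_pow, norm_pow, Complex.norm_real, Real.norm_eq_abs, abs_of_pos hδ] at h3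
    have h4 : c ^ 2 ≤ ‖q s‖ ^ 2 := by gcongr
    have h5 : δ ^ 2 ≤ (c / 2) ^ 2 := by gcongr
    nlinarith
  have hne : ∀ s ∈ Icc a b, q s ^ 2 + (δ : ℂ) ^ 2 ≠ 0 := by
    intro s hs
    rcases le_total |s - g| r with h | h
    · exact (jump_pt (s - g) δ (q s) (q' s) hδ (h1 s h).1 (h1 s h).2).1
    · have := hfarD s hs h
      exact norm_pos_iff.1 (lt_of_lt_of_le (by positivity) this)
  refine ⟨δ, hδ, hne, ?_⟩
  set F : ℝ → ℂ := fun s => δ * q' s / (q s ^ 2 + (δ : ℂ) ^ 2) with hF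
  have hFc : ContinuousOn F (Icc a b) := by
    apply ContinuousOn.div (by fun_prop) (by fun_prop) hne
  have hFi : IntervalIntegrable F volume a b := by
    apply ContinuousOn.intervalIntegrable; rwa [uIcc_of_le hab]
  have hre : (∫ s in a..b, F s).re = ∫ s in a..b, (F s).re := by
    have := Complex.reCLM.intervalIntegral_comp_comm hFi
    simpa using this.symm
  have hFri : IntervalIntegrable (fun s => (F s).re) volume a b := by
    apply ContinuousOn.intervalIntegrable; rw [uIcc_of_le hab]
    exact Complex.continuous_re.comp_continuousOn hFc
  have hpos : ∀ s ∈ Icc a b, 0 ≤ (F s).re + K * δ := by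
    intro s hs
    rcases le_total |s - g| r with h | h
    · have := (jump_pt (s - g) δ (q s) (q' s) hδ (h1 s h).1 (h1 s h).2).2.1
      have : 0 ≤ K * δ := by positivity
      linarith
    · have h2 := hfarD s hs h
      have h3 : ‖F s‖ ≤ K * δ := by
        simp only [hF, norm_div, norm_mul, Complex.norm_real, Real.norm_eq_abs, abs_of_pos hδ]
        calc δ * ‖q' s‖ / ‖q s ^ 2 + (δ : ℂ) ^ 2‖ ≤ δ * Q / (c ^ 2 / 2) := by
              have := hQ s hs
              gcongr
          _ = K * δ := by simp only [hKd]; field_simp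
      have := (abs_le.1 (Complex.abs_re_le_norm (F s))).1
      linarith
  have hi2 : IntervalIntegrable (fun s => (F s).re + K * δ) volume a b :=
    hFri.add intervalIntegrable_const
  have h5 : ∫ s in (g - δ)..(g + δ), ((F s).re + K * δ) ≤ ∫ s in a..b, ((F s).re + K * δ) := by
    apply intervalIntegral.integral_mono_interval (by linarith) (by linarith) (by linarith) _ hi2
    rw [EventuallyLE, ae_restrict_iff' measurableSet_Ioc]
    filter_upwards with s hs
    exact hpos s (Ioc_subset_Icc_self hs)
  have h6 : ∫ s in (g - δ)..(g + δ), (1 / (8 * δ)) ≤ ∫ s in (g - δ)..(g + δ), ((F s).re + K * δ) := by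
    apply intervalIntegral.integral_mono_on (by linarith) intervalIntegrable_const
    · apply hi2.mono_set
      rw [uIcc_of_le (by linarith), uIcc_of_le hab]
      exact Icc_subset_Icc (by linarith) (by linarith)
    · intro s hs
      have hs' : |s - g| ≤ δ := by rw [abs_le]; constructor <;> linarith [hs.1, hs.2]
      have h := hs'.trans hδr
      have := (jump_pt (s - g) δ (q s) (q' s) hδ (h1 s h).1 (h1 s h).2).2.2 hs'
      have h7 : 0 ≤ K * δ := by positivity
      have h8 : F s = δ * q' s / (q s ^ 2 + (δ : ℂ) ^ 2) := rfl
      rw [h8]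
      linarith
  rw [intervalIntegral.integral_const] at h6
  rw [intervalIntegral.integral_add hFri intervalIntegrable_const, intervalIntegral.integral_const] at h5
  rw [hre]
  have h9 : (g + δ - (g - δ)) • (1 / (8 * δ)) = 1 / 4 := by rw [smul_eq_mul]; field_simp; ring
  rw [h9] at h6
  rw [smul_eq_mul] at h5
  nlinarith

namespace Crv
variable {A : ℝ} {z z' : ℝ → ℂ} {O1 O2 : Set ℂ}

theorem wind_zero (C : Crv A z z' O1 O2) {a b : ℝ} (hab : a ≤ b) (hcl : z a = z b) (w : ℂ)
    (hw : ∀ s ∈ Icc a b, z s ≠ w) : wind z z' a b w = 0 := by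
  obtain ⟨R, hR⟩ := isCompact_Icc.exists_bound_of_continuousOn (s := Icc a b) (f := z) C.cont.continuousOn
  obtain ⟨st, hst1, hst2⟩ := C.hst
  set L : ℝ := |R| + |st| + 1 with hL
  have hLp : 0 < L := by positivity
  have hd : ∀ w, (∀ s ∈ Icc a b, z s ≠ w) → HasDerivAt (wind z z' a b) 0 w := by
    intro w hw
    exact (hasDerivAt_const w (wind z z' a b w)).congr_of_eventuallyEq
      (wind_loc C.hd C.cont' hab hcl hw)
  have hfar : ∀ w : ℂ, ‖w‖ = L → wind z z' a b w = 0 := by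
    intro w hw
    apply wind_far C.hd C.cont' hab hcl
    intro s hs
    have := hR s hs
    rw [hw]
    have := le_abs_self R
    have := abs_nonneg st
    linarith
  have key : ∀ O : Set ℂ, IsOpen O → IsConnected O → Disjoint O (range z) → (∃ p ∈ O, ‖p‖ = L) →
      ∀ w ∈ O, wind z z' a b w = 0 := by
    intro O ho hc hdj ⟨p, hp, hpL⟩ w hw
    have hdO : ∀ x ∈ O, HasDerivAt (wind z z' a b) 0 x := fun x hx =>
      hd x fun s _ h => Set.disjoint_left.1 hdj hx ⟨s, h⟩
    have := ho.is_const_of_deriv_eq_zero hc.isPreconnected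
      (fun x hx => (hdO x hx).differentiableAt.differentiableWithinAt)
      (fun x hx => (hdO x hx).deriv) hw hp
    rw [this, hfar p hpL]
  have k1 : ∀ w ∈ O1, wind z z' a b w = 0 := by
    apply key O1 C.o1 C.c1 C.d1
    refine ⟨-(L : ℂ) * Complex.I, hst1 ?_, by simp [abs_of_pos hLp]⟩
    have := le_abs_self st
    have := abs_nonneg R
    simp; linarith
  have k2 : ∀ w ∈ O2, wind z z' a b w = 0 := by
    apply key O2 C.o2 C.c2 C.d2
    refine ⟨(L : ℂ) * Complex.I, hst2 ?_, by simp [abs_of_pos hLp]⟩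
    have := le_abs_self st
    have := abs_nonneg R
    simp; linarith
  have : w ∈ O1 ∪ O2 ∪ range z := by rw [C.hun]; trivial
  rcases this with (h | h) | h
  · exact k1 w h
  · exact k2 w h
  · rw [← C.f1] at h
    have hcl1 : w ∈ closure O1 := frontier_subset_closure h
    have hl := wind_loc C.hd C.cont' hab hcl hw
    rw [mem_closure_iff_nhds] at hcl1
    obtain ⟨v, hv1, hv2⟩ := hcl1 _ hl
    have hv1' : wind z z' a b v = wind z z' a b w := hv1
    rw [← hv1', k1 v hv2]

theorem inj (C : Crv A z z' O1 O2) : Function.Injective z := by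
  have hA := C.hA
  have hA0 : 0 < A := by linarith
  by_contra hni
  rw [Function.Injective] at hni
  push Not at hni
  obtain ⟨x, y, hxy, hne⟩ := hni
  wlog hlt : x < y generalizing x y
  · exact this y x hxy.symm hne.symm (lt_of_le_of_ne (not_lt.1 hlt) hne.symm)
  set e : ℝ := 1 / (2 * A ^ 2) with he
  have he0 : 0 < e := by positivity
  have hloc : ∀ s t, |s - t| ≤ e → z s = z t → s = t := by
    intro s t h1 h2
    have := C.chord s t h1
    rw [h2, sub_self, norm_zero] at this
    have h3 : |s - t| ≤ 0 := by
      by_contra h; push Not at h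
      have : 0 < |s - t| / (2 * A) := by positivity
      linarith
    linarith [abs_eq_zero.1 (le_antisymm h3 (abs_nonneg _))]
  have hcomp : IsCompact {p : ℝ × ℝ | p ∈ Icc x y ×ˢ Icc x y ∧ p.1 + e ≤ p.2 ∧ z p.1 = z p.2} := by
    have hzc := C.cont
    refine (isCompact_Icc.prod isCompact_Icc).inter_right
      (t := {p : ℝ × ℝ | p.1 + e ≤ p.2} ∩ {p : ℝ × ℝ | z p.1 = z p.2}) ?_
    exact (isClosed_le (by fun_prop) (by fun_prop)).inter (isClosed_eq (by fun_prop) (by fun_prop))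
  have hbig : ∀ s t, s < t → z s = z t → s + e ≤ t := by
    intro s t h1 h2
    by_contra h
    push Not at h
    have := hloc s t (by rw [abs_le]; constructor <;> linarith) h2
    linarith
  obtain ⟨⟨a, b⟩, ⟨⟨ha, hb⟩, hab, hzab⟩, hmin⟩ := hcomp.exists_isMinOn
    ⟨(x, y), ⟨⟨by simp [hlt.le], by simp [hlt.le]⟩, hbig x y hlt hxy, hxy⟩⟩
    (f := fun p : ℝ × ℝ => p.2 - p.1) (by fun_prop)
  simp only at ha hb hab hzab
  have hab' : a < b := by linarith
  set g : ℝ := (a + b) / 2 with hg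
  have hsimple : ∀ s ∈ Icc a b, s ≠ g → z s ≠ z g := by
    intro s hs hsg hz
    rcases lt_or_gt_of_ne hsg with h | h
    · have := hmin (show (s, g) ∈ _ from ⟨⟨⟨by linarith [ha.1, hs.1], by linarith [hb.2, hs.2]⟩,
        ⟨by simp only; linarith [ha.1], by simp only; linarith [hb.2]⟩⟩, hbig s g h hz, hz⟩)
      simp only [mem_ofPred_eq] at this
      linarith [hs.1]
    · have := hmin (show (g, s) ∈ _ from ⟨⟨⟨by simp only; linarith [ha.1], by simp only; linarith [hb.2]⟩,
        ⟨by linarith [ha.1, hs.1], by linarith [hb.2, hs.2]⟩⟩, hbig g s h hz.symm, hz.symm⟩)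
      simp only [mem_ofPred_eq] at this
      linarith [hs.2]
  have hz0 : z' g ≠ 0 := norm_pos_iff.1 (lt_of_lt_of_le (by positivity) (C.hlow g))
  have hinv : ‖z' g‖⁻¹ ≤ A := by
    have := C.hlow g
    exact inv_le_of_inv_le₀ hA0 this
  set q : ℝ → ℂ := fun s => (z s - z g) / z' g with hq
  set q' : ℝ → ℂ := fun s => z' s / z' g with hq'
  have hzc := C.cont
  have hzc' := C.cont'
  set r : ℝ := min (1 / (20 * A ^ 2)) ((b - a) / 2) with hr
  have hr0 : 0 < r := by
    have : 0 < b - a := by linarith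
    positivity
  have hrA : A * r * A ≤ 1 / 20 := by
    have : r ≤ 1 / (20 * A ^ 2) := min_le_left _ _
    calc A * r * A ≤ A * (1 / (20 * A ^ 2)) * A := by gcongr
      _ = 1 / 20 := by field_simp
  have hrb : r ≤ (b - a) / 2 := min_le_right _ _
  obtain ⟨δ, hδ, hDne, hpos⟩ := jump_core q q' (by fun_prop) (by fun_prop) a b g r hr0
    (by linarith) (by linarith) (by
      intro s hs
      constructor
      · have e1 : q' s - 1 = (z' s - z' g) / z' g := by simp only [hq']; field_simp
        rw [e1, norm_div, div_eq_mul_inv]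
        calc ‖z' s - z' g‖ * ‖z' g‖⁻¹ ≤ (A * r) * A := by
              have := (C.hlip s g).trans (mul_le_mul_of_nonneg_left hs hA0.le)
              gcongr
          _ ≤ _ := hrA
      · have e1 : q s - ((s - g : ℝ) : ℂ) = (z s - z g - ((s - g : ℝ) : ℂ) * z' g) / z' g := by
          simp only [hq]; field_simp
        rw [e1, norm_div, div_eq_mul_inv]
        have := C.taylor s g g r hs (by simpa using hr0.le)
        calc _ ≤ (A * r * |s - g|) * A := by gcongr
          _ = (A * r * A) * |s - g| := by ring
          _ ≤ 1 / 20 * |s - g| := by gcongr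
          _ = _ := by ring)
    (by
      intro s hs hsg
      exact div_ne_zero (sub_ne_zero.2 (hsimple s hs hsg)) hz0)
  set wp : ℂ := z g + δ * Complex.I * z' g with hwp
  set wm : ℂ := z g - δ * Complex.I * z' g with hwm
  have hfac : ∀ s, (z s - wp) * (z s - wm) = (q s ^ 2 + (δ : ℂ) ^ 2) * z' g ^ 2 := by
    intro s
    simp only [hwp, hwm, hq]
    field_simp
    linear_combination (-(δ : ℂ) ^ 2 * z' g ^ 2) * Complex.I_sq
  have hprod : ∀ s ∈ Icc a b, (z s - wp) * (z s - wm) ≠ 0 := by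
    intro s hs
    rw [hfac]
    exact mul_ne_zero (hDne s hs) (pow_ne_zero _ hz0)
  have hp : ∀ s ∈ Icc a b, z s ≠ wp := fun s hs => sub_ne_zero.1 (left_ne_zero_of_mul (hprod s hs))
  have hm : ∀ s ∈ Icc a b, z s ≠ wm := fun s hs => sub_ne_zero.1 (right_ne_zero_of_mul (hprod s hs))
  have w1 := C.wind_zero hab'.le hzab wp hp
  have w2 := C.wind_zero hab'.le hzab wm hm
  have hdiff : wind z z' a b wp - wind z z' a b wm =
      2 * Complex.I * ∫ s in a..b, δ * q' s / (q s ^ 2 + (δ : ℂ) ^ 2) := by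
    unfold wind
    rw [← intervalIntegral.integral_sub (wind_intble hzc hzc' hab'.le hp) (wind_intble hzc hzc' hab'.le hm),
      ← intervalIntegral.integral_const_mul]
    apply intervalIntegral.integral_congr
    intro s hs
    rw [uIcc_of_le hab'.le] at hs
    have n1 := sub_ne_zero.2 (hp s hs)
    have n2 := sub_ne_zero.2 (hm s hs)
    have n3 := hDne s hs
    have n4 := hfac s
    simp only
    have e1 : z' s / (z s - wp) - z' s / (z s - wm) = z' s * (wp - wm) / ((z s - wp) * (z s - wm)) := by
      field_simp; ring
    rw [e1, n4]
    have e2 : wp - wm = 2 * (δ * Complex.I * z' g) := by simp only [hwp, hwm]; ring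
    rw [e2]
    simp only [hq']
    field_simp
  rw [w1, w2, sub_zero] at hdiff
  have : (∫ s in a..b, δ * q' s / (q s ^ 2 + (δ : ℂ) ^ 2)) = 0 := by
    have := hdiff.symm
    simpa using this
  rw [this] at hpos
  simp at hpos

end Crv


def dot (x y : ℂ) : ℝ := x.re * y.re + x.im * y.im

theorem hasDerivAt_re' {f : ℝ → ℂ} {f' : ℂ} {s : Set ℝ} {x : ℝ} (h : HasDerivWithinAt f f' s x) :
    HasDerivWithinAt (fun t => (f t).re) f'.re s x :=
  (Complex.reCLM.hasFDerivAt (x := f x)).comp_hasDerivWithinAt x h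

theorem hasDerivAt_im' {f : ℝ → ℂ} {f' : ℂ} {s : Set ℝ} {x : ℝ} (h : HasDerivWithinAt f f' s x) :
    HasDerivWithinAt (fun t => (f t).im) f'.im s x :=
  (Complex.imCLM.hasFDerivAt (x := f x)).comp_hasDerivWithinAt x h

theorem hasDerivWithinAt_normSq {f : ℝ → ℂ} {f' : ℂ} {s : Set ℝ} {x : ℝ} (h : HasDerivWithinAt f f' s x) :
    HasDerivWithinAt (fun t => ‖f t‖ ^ 2) (2 * dot f' (f x)) s x := by
  have h1 := (hasDerivAt_re' h).mul (hasDerivAt_re' h)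
  have h2 := (hasDerivAt_im' h).mul (hasDerivAt_im' h)
  have h3 := h1.add h2
  refine (h3.congr_deriv ?_).congr_of_eventuallyEq ?_ ?_
  · simp only [dot]; ring
  · filter_upwards with t
    rw [← Complex.normSq_eq_norm_sq, Complex.normSq_apply]; rfl
  · rw [← Complex.normSq_eq_norm_sq, Complex.normSq_apply]; rfl

theorem perp_of_min {f : ℝ → ℂ} {f' : ℂ} {m : ℂ} {x : ℝ} (h : HasDerivAt f f' x)
    (hm : IsLocalMin (fun t => ‖f t - m‖ ^ 2) x) : dot f' (f x - m) = 0 := by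
  have h1 := hasDerivWithinAt_normSq (s := univ) (h.sub_const m).hasDerivWithinAt
  rw [hasDerivWithinAt_univ] at h1
  have := hm.hasDerivAt_eq_zero h1
  linarith

namespace Crv
variable {A : ℝ} {z z' : ℝ → ℂ} {O1 O2 : Set ℂ}

theorem sep (C : Crv A z z' O1 O2) (α δ : ℝ) (hδ : 0 < δ) :
    ∃ c > 0, ∀ γ, δ ≤ |γ - α| → c ≤ ‖z γ - z α‖ := by
  have hc : IsClosed (z '' {γ | δ ≤ |γ - α|}) :=
    C.proper.isClosedMap _ (isClosed_le (by fun_prop) (by fun_prop))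
  have hn : z α ∈ (z '' {γ | δ ≤ |γ - α|})ᶜ := by
    rintro ⟨γ, h1, h2⟩
    have := C.inj h2
    subst this
    simp at h1
    linarith
  obtain ⟨c, hc0, hcb⟩ := Metric.isOpen_iff.1 hc.isOpen_compl _ hn
  refine ⟨c, hc0, fun γ hγ => ?_⟩
  by_contra h
  push Not at h
  exact hcb (mem_ball_iff_norm.2 h) ⟨γ, hγ, rfl⟩

theorem offG (C : Crv A z z' O1 O2) (α : ℝ) : ∃ δ > 0, ∀ (β ρ : ℝ) (e : ℂ), |β - α| < δ → ρ ≠ 0 → |ρ| < δ →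
    ‖e - Complex.I * z' α‖ < δ → z β + ρ * e ∉ range z := by
  have hA := C.hA
  have hA0 : 0 < A := by linarith
  set r : ℝ := 1 / (4 * A ^ 2) with hr
  have hr0 : 0 < r := by positivity
  obtain ⟨c, hc, hcb⟩ := C.sep α r hr0
  have hcont := (C.hd α).continuousAt
  rw [Metric.continuousAt_iff] at hcont
  obtain ⟨δ1, hδ1, hδ1b⟩ := hcont (c / 2) (by linarith)
  set L := ‖z' α‖ with hL
  have hL0 : A⁻¹ ≤ L := C.hlow α
  have hLp : 0 < L := lt_of_lt_of_le (by positivity) hL0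
  have hz0 : z' α ≠ 0 := norm_pos_iff.1 hLp
  have hLi : L⁻¹ ≤ A := inv_le_of_inv_le₀ hA0 hL0
  refine ⟨min (min r δ1) (min (1 / (4 * A)) (c / (2 * (L + 1)))), by positivity, ?_⟩
  rintro β ρ e hβ hρ0 hρ he ⟨γ, hγ⟩
  simp only [lt_min_iff] at hβ hρ he
  by_cases hγr : r ≤ |γ - α|
  · have h1 := hcb γ hγr
    rw [hγ] at h1
    have h2 := hδ1b (x := β) (by rw [Real.dist_eq]; exact hβ.1.2)
    rw [dist_eq_norm] at h2
    have h3 : ‖e‖ ≤ L + 1 := by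
      have : ‖e‖ ≤ ‖e - Complex.I * z' α‖ + ‖Complex.I * z' α‖ := by
        simpa using norm_add_le (e - Complex.I * z' α) (Complex.I * z' α)
      rw [norm_mul, Complex.norm_I, one_mul] at this
      have h4 : 1 / (4 * A) ≤ 1 := by rw [div_le_one (by positivity)]; linarith
      linarith [he.2.1]
    have h5 : |ρ| * ‖e‖ ≤ c / 2 := by
      calc |ρ| * ‖e‖ ≤ c / (2 * (L + 1)) * (L + 1) := by
            gcongr; exact hρ.2.2.le
        _ = c / 2 := by field_simp
    have h6 : ‖z β + ρ * e - z α‖ ≤ ‖z β - z α‖ + |ρ| * ‖e‖ := by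
      have e1 : z β + ρ * e - z α = (z β - z α) + ρ * e := by ring
      rw [e1]
      refine (norm_add_le _ _).trans ?_
      rw [norm_mul, Complex.norm_real, Real.norm_eq_abs]
    linarith
  · push Not at hγr
    have ht := C.taylor γ β α r hγr.le hβ.1.1.le
    set E1 := (z γ - z β - ((γ - β : ℝ) : ℂ) * z' α) / z' α with hE1
    set E2 := (e - Complex.I * z' α) / z' α with hE2
    have hE1b : ‖E1‖ ≤ |γ - β| / 4 := by
      rw [hE1, norm_div, div_eq_mul_inv]
      calc _ ≤ (A * r * |γ - β|) * A := by gcongr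
        _ = _ := by rw [hr]; field_simp
    have hE2b : ‖E2‖ ≤ 1 / 4 := by
      rw [hE2, norm_div, div_eq_mul_inv]
      calc _ ≤ (1 / (4 * A)) * A := by gcongr; exact he.2.1.le
        _ = _ := by field_simp
    have heq : ((γ - β : ℝ) : ℂ) + E1 = ρ * (Complex.I + E2) := by
      rw [hE1, hE2]
      field_simp
      rw [hγ]
      push_cast
      ring
    have hre := congrArg Complex.re heq
    have him := congrArg Complex.im heq
    simp only [Complex.add_re, Complex.add_im, Complex.ofReal_re, Complex.ofReal_im,
      Complex.re_ofReal_mul, Complex.im_ofReal_mul, Complex.I_re, Complex.I_im] at hre him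
    have a1 := (Complex.abs_re_le_norm E1).trans hE1b
    have a2 := (Complex.abs_im_le_norm E1).trans hE1b
    have a3 := (Complex.abs_re_le_norm E2).trans hE2b
    have a4 := (Complex.abs_im_le_norm E2).trans hE2b
    have b1 : |ρ * E2.re| ≤ |ρ| * (1 / 4) := by rw [abs_mul]; gcongr
    have b2 : |ρ * E2.im| ≤ |ρ| * (1 / 4) := by rw [abs_mul]; gcongr
    have c1 : |γ - β| ≤ |ρ| / 4 + |γ - β| / 4 := by
      have : γ - β = ρ * E2.re - E1.re := by linarith
      calc |γ - β| = |ρ * E2.re - E1.re| := by rw [← this]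
        _ ≤ |ρ * E2.re| + |E1.re| := abs_sub _ _
        _ ≤ _ := by linarith
    have c2 : |ρ| ≤ |ρ| / 4 + |γ - β| / 4 := by
      have : ρ = E1.im - ρ * E2.im := by linarith
      calc |ρ| = |E1.im - ρ * E2.im| := by rw [← this]
        _ ≤ |E1.im| + |ρ * E2.im| := abs_sub _ _
        _ ≤ _ := by linarith
    have := abs_pos.2 hρ0
    linarith

/-- two-sided collar predicate -/
def Sd (z z' : ℝ → ℂ) (O O' : Set ℂ) (δ α : ℝ) : Prop :=
  ∀ (β ρ : ℝ) (e : ℂ), |β - α| < δ → 0 < ρ → ρ < δ → ‖e - Complex.I * z' α‖ < δ →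
    z β + ρ * e ∈ O ∧ z β - ρ * e ∈ O'

theorem two_sides (C : Crv A z z' O1 O2) (α : ℝ) :
    (∃ δ > 0, Sd z z' O1 O2 δ α) ∨ (∃ δ > 0, Sd z z' O2 O1 δ α) := by
  obtain ⟨δ, hδ, hoff⟩ := C.offG α
  have hA0 : 0 < A := by linarith [C.hA]
  have hz0 : z' α ≠ 0 := norm_pos_iff.1 (lt_of_lt_of_le (by positivity) (C.hlow α))
  have hzc := C.cont
  set e0 := Complex.I * z' α with he0
  have hconv : IsPreconnected ((Ioo (α - δ) (α + δ) ×ˢ Ioo 0 δ) ×ˢ Metric.ball e0 δ : Set ((ℝ × ℝ) × ℂ)) :=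
    (((convex_Ioo _ _).prod (convex_Ioo _ _)).prod (convex_ball _ _)).isPreconnected
  set Fp : (ℝ × ℝ) × ℂ → ℂ := fun p => z p.1.1 + p.1.2 * p.2 with hFp
  set Fm : (ℝ × ℝ) × ℂ → ℂ := fun p => z p.1.1 - p.1.2 * p.2 with hFm
  have hP := hconv.image Fp (by fun_prop)
  have hM := hconv.image Fm (by fun_prop)
  set P := Fp '' ((Ioo (α - δ) (α + δ) ×ˢ Ioo 0 δ) ×ˢ Metric.ball e0 δ) with hPd
  set M := Fm '' ((Ioo (α - δ) (α + δ) ×ˢ Ioo 0 δ) ×ˢ Metric.ball e0 δ) with hMd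
  have habs : ∀ β, β ∈ Ioo (α - δ) (α + δ) ↔ |β - α| < δ := by
    intro β; rw [abs_lt, mem_Ioo]; constructor <;> rintro ⟨h1, h2⟩ <;> constructor <;> linarith
  have hPo : ∀ x ∈ P, x ∉ range z := by
    rintro x ⟨⟨⟨β, ρ⟩, e⟩, ⟨⟨h1, h2⟩, h3⟩, rfl⟩
    exact hoff β ρ e ((habs β).1 h1) h2.1.ne' (by rw [abs_of_pos h2.1]; exact h2.2) (mem_ball_iff_norm.1 h3)
  have hMo : ∀ x ∈ M, x ∉ range z := by
    rintro x ⟨⟨⟨β, ρ⟩, e⟩, ⟨⟨h1, h2⟩, h3⟩, rfl⟩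
    have := hoff β (-ρ) e ((habs β).1 h1) (neg_ne_zero.2 h2.1.ne') (by rw [abs_neg, abs_of_pos h2.1]; exact h2.2)
      (mem_ball_iff_norm.1 h3)
    simpa [hFm, sub_eq_add_neg] using this
  -- open mapping
  have hstrict : HasStrictDerivAt z (z' α) α :=
    hasStrictDerivAt_of_hasDerivAt_of_continuousAt (Eventually.of_forall C.hd) C.cont'.continuousAt
  have hnb : ∀ O : Set ℂ, z α ∈ closure O → Disjoint O (range z) →
      (∃ x ∈ P, x ∈ O) ∨ (∃ x ∈ M, x ∈ O) := by
    intro O hcl hdj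
    set F : ℝ × ℝ → ℂ := fun p => z p.1 + (p.2 : ℂ) * e0 with hF
    have hs1 : HasStrictFDerivAt F
      (((ContinuousLinearMap.toSpanSingleton ℝ (z' α)).comp (ContinuousLinearMap.fst ℝ ℝ ℝ)) +
        ((ContinuousLinearMap.toSpanSingleton ℝ e0).comp (ContinuousLinearMap.snd ℝ ℝ ℝ))) (α, 0) := by
      have t1 : HasStrictFDerivAt (fun p : ℝ × ℝ => z p.1)
          ((ContinuousLinearMap.toSpanSingleton ℝ (z' α)).comp (ContinuousLinearMap.fst ℝ ℝ ℝ)) (α, 0) :=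
        HasStrictFDerivAt.comp (g := z) (f := Prod.fst) (α, (0:ℝ)) hstrict.hasStrictFDerivAt
          (ContinuousLinearMap.fst ℝ ℝ ℝ).hasStrictFDerivAt
      have t2 : HasStrictFDerivAt (fun p : ℝ × ℝ => (p.2 : ℂ) * e0)
          ((ContinuousLinearMap.toSpanSingleton ℝ e0).comp (ContinuousLinearMap.snd ℝ ℝ ℝ)) (α, 0) := by
        have := ((ContinuousLinearMap.toSpanSingleton ℝ e0).comp (ContinuousLinearMap.snd ℝ ℝ ℝ)).hasStrictFDerivAt (x := (α, (0:ℝ)))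
        refine this.congr_of_eventuallyEq ?_
        filter_upwards with p
        simp
      exact t1.add t2
    have hmap := hs1.map_nhds_eq_of_surj (by
      rw [LinearMap.range_eq_top]
      intro v
      refine ⟨((v / z' α).re, (v / z' α).im), ?_⟩
      simp only [ContinuousLinearMap.coe_coe, ContinuousLinearMap.add_apply, ContinuousLinearMap.comp_apply,
        ContinuousLinearMap.coe_fst', ContinuousLinearMap.coe_snd', ContinuousLinearMap.toSpanSingleton_apply,
        Complex.real_smul, he0]
      have := Complex.re_add_im (v / z' α)
      calc _ = (((v / z' α).re : ℂ) + (v / z' α).im * Complex.I) * z' α := by ring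
        _ = v := by rw [this]; field_simp)
    have hbox : F '' (Ioo (α - δ) (α + δ) ×ˢ Ioo (-δ) δ) ∈ nhds (z α) := by
      have e1 : z α = F (α, 0) := by simp [hF]
      rw [e1, ← hmap]
      apply image_mem_map
      apply prod_mem_nhds <;> apply Ioo_mem_nhds <;> linarith
    obtain ⟨x, ⟨⟨β, ρ⟩, ⟨hβ, hρ⟩, rfl⟩, hxO⟩ := mem_closure_iff_nhds.1 hcl _ hbox
    simp only at hβ hρ
    rcases lt_trichotomy ρ 0 with h | h | h
    · right
      refine ⟨_, ⟨⟨⟨β, -ρ⟩, e0⟩, ⟨⟨hβ, ⟨by simp only; linarith, by simp only; linarith [hρ.1]⟩⟩, Metric.mem_ball_self hδ⟩, rfl⟩, ?_⟩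
      simpa [hFm, hF] using hxO
    · exfalso
      subst h
      refine Set.disjoint_left.1 hdj hxO ⟨β, by simp [hF]⟩
    · left
      exact ⟨_, ⟨⟨⟨β, ρ⟩, e0⟩, ⟨⟨hβ, ⟨h, hρ.2⟩⟩, Metric.mem_ball_self hδ⟩, rfl⟩, hxO⟩
  have hc1 : z α ∈ closure O1 := frontier_subset_closure (by rw [C.f1]; exact ⟨α, rfl⟩)
  have hc2 : z α ∈ closure O2 := frontier_subset_closure (by rw [C.f2]; exact ⟨α, rfl⟩)
  have fin : ∀ O O' : Set ℂ, P ⊆ O → M ⊆ O' → Sd z z' O O' δ α := by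
    intro O O' h1 h2 β ρ e hb hr1 hr2 he
    exact ⟨h1 ⟨⟨⟨β, ρ⟩, e⟩, ⟨⟨(habs β).2 hb, hr1, hr2⟩, mem_ball_iff_norm.2 he⟩, rfl⟩,
      h2 ⟨⟨⟨β, ρ⟩, e⟩, ⟨⟨(habs β).2 hb, hr1, hr2⟩, mem_ball_iff_norm.2 he⟩, rfl⟩⟩
  rcases hnb O1 hc1 C.d1 with h1 | h1
  · have hP1 := C.side1 hP hPo h1
    rcases hnb O2 hc2 C.d2 with ⟨x, hx, hx2⟩ | h2
    · exact absurd hx2 (Set.disjoint_left.1 C.d12 (hP1 hx))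
    · exact Or.inl ⟨δ, hδ, fin _ _ hP1 (C.side2 hM hMo h2)⟩
  · have hM1 := C.side1 hM hMo h1
    rcases hnb O2 hc2 C.d2 with h2 | ⟨x, hx, hx2⟩
    · exact Or.inr ⟨δ, hδ, fin _ _ (C.side2 hP hPo h2) hM1⟩
    · exact absurd hx2 (Set.disjoint_left.1 C.d12 (hM1 hx))

theorem Sd_open (C : Crv A z z' O1 O2) (O O' : Set ℂ) : IsOpen {α | ∃ δ > 0, Sd z z' O O' δ α} := by
  have hA0 : 0 < A := by linarith [C.hA]
  rw [Metric.isOpen_iff]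
  rintro α ⟨δ, hδ, h⟩
  refine ⟨min (δ / 2) (δ / (2 * A)), by positivity, ?_⟩
  intro α' hα'
  rw [Metric.mem_ball, Real.dist_eq, lt_min_iff] at hα'
  refine ⟨δ / 2, by positivity, ?_⟩
  intro β ρ e h1 h2 h3 h4
  refine h β ρ e ?_ h2 (by linarith) ?_
  · have := abs_add_le (β - α') (α' - α)
    rw [sub_add_sub_cancel] at this
    linarith [hα'.1]
  · have h5 : ‖Complex.I * z' α' - Complex.I * z' α‖ ≤ δ / 2 := by
      rw [← mul_sub, norm_mul, Complex.norm_I, one_mul]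
      refine (C.hlip _ _).trans ?_
      calc A * |α' - α| ≤ A * (δ / (2 * A)) := by gcongr; exact hα'.2.le
        _ = δ / 2 := by field_simp
    have := norm_add_le (e - Complex.I * z' α') (Complex.I * z' α' - Complex.I * z' α)
    rw [sub_add_sub_cancel] at this
    linarith

theorem orient (C : Crv A z z' O1 O2) :
    (∀ α, ∃ δ > 0, Sd z z' O1 O2 δ α) ∨ (∀ α, ∃ δ > 0, Sd z z' O2 O1 δ α) := by
  have hcl : IsClopen {α | ∃ δ > 0, Sd z z' O1 O2 δ α} := by
    refine ⟨⟨?_⟩, C.Sd_open _ _⟩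
    have : {α | ∃ δ > 0, Sd z z' O1 O2 δ α}ᶜ = {α | ∃ δ > 0, Sd z z' O2 O1 δ α} := by
      ext α
      constructor
      · intro h
        exact (C.two_sides α).resolve_left h
      · rintro ⟨δ, hδ, h⟩ ⟨δ', hδ', h'⟩
        set m := min δ δ' / 2 with hm
        have hm0 : 0 < m := by positivity
        have hm1 : m < δ := by have := min_le_left δ δ'; have := lt_min hδ hδ'; simp only [hm]; linarith
        have hm2 : m < δ' := by have := min_le_right δ δ'; have := lt_min hδ hδ'; simp only [hm]; linarith
        have a1 := (h α m (Complex.I * z' α) (by simpa using hδ) hm0 hm1 (by simpa using hδ)).1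
        have a2 := (h' α m (Complex.I * z' α) (by simpa using hδ') hm0 hm2 (by simpa using hδ')).1
        exact Set.disjoint_left.1 C.d12 a2 a1
    rw [this]
    exact C.Sd_open _ _
  rcases isClopen_iff.1 hcl with h | h
  · right
    intro α
    refine (C.two_sides α).resolve_left ?_
    intro h2
    have : α ∈ {α | ∃ δ > 0, Sd z z' O1 O2 δ α} := h2
    rw [h] at this
    exact this
  · left
    intro α
    have : α ∈ {α | ∃ δ > 0, Sd z z' O1 O2 δ α} := by rw [h]; trivial
    exact this

end Crv


def eps1 (A : ℝ) : ℝ := 1 / (8 * A ^ 2)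

def Adm (z : ℝ → ℂ) (O2 : Set ℂ) (A : ℝ) (α β : ℝ) : Prop :=
  eps1 A ≤ |α - β| ∧ |α - β| ≤ 8 * A ^ 2 ∧ ∀ p ∈ segment ℝ (z α) (z β), p ∉ O2

namespace Crv
variable {A : ℝ} {z z' : ℝ → ℂ} {O1 O2 : Set ℂ}

theorem eps1_pos (C : Crv A z z' O1 O2) : 0 < eps1 A := by
  have := C.hA
  unfold eps1; positivity

theorem eps1_le (C : Crv A z z' O1 O2) : eps1 A ≤ 1 / 8 := by
  have := C.hA
  unfold eps1
  rw [div_le_div_iff₀ (by positivity) (by norm_num)]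
  nlinarith

theorem chord4 (C : Crv A z z' O1 O2) {α β : ℝ} (h : |α - β| ≤ 4 * eps1 A) :
    |α - β| ≤ 2 * A * ‖z α - z β‖ := by
  have hA := C.hA
  have := C.chord α β (by
    refine h.trans (le_of_eq ?_); unfold eps1; field_simp; norm_num)
  rw [div_le_iff₀ (by positivity)] at this
  linarith

/-- small distance gives dichotomy -/
theorem near_or (C : Crv A z z' O1 O2) {α β : ℝ} (h : ‖z α - z β‖ < eps1 A / (2 * A)) :
    |α - β| < eps1 A ∨ 4 * eps1 A < |α - β| := by
  have hA := C.hA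
  by_contra! hc
  have h1 := C.chord4 hc.2
  rw [lt_div_iff₀ (by positivity)] at h
  nlinarith [hc.1]

theorem far_le (C : Crv A z z' O1 O2) {α β : ℝ} (h : ‖z α - z β‖ ≤ 1) : |α - β| ≤ 4 * A ^ 2 := by
  have hA := C.hA
  have := C.far α β
  nlinarith

theorem ball_lemma (C : Crv A z z' O1 O2) (α β : ℝ) (had : Adm z O2 A α β)
    (hd : ‖z α - z β‖ < eps1 A / (4 * A))
    (hmin : ∀ γ γ', Adm z O2 A γ γ' → ‖z α - z β‖ ≤ ‖z γ - z γ'‖) :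
    Metric.ball (midpoint ℝ (z α) (z β)) (‖z α - z β‖ / 2) ⊆ O1 := by
  have hA := C.hA
  have he := C.eps1_pos
  have he8 := C.eps1_le
  set d := ‖z α - z β‖ with hdd
  have hd0 : 0 ≤ d := norm_nonneg _
  have hd4 : 4 * A * d < eps1 A := by
    rw [lt_div_iff₀ (by positivity)] at hd; linarith
  have hd1 : d ≤ 1 := by nlinarith
  have hcl1 : IsClosed (z '' {γ | |γ - α| ≤ eps1 A}) :=
    C.proper.isClosedMap _ (isClosed_le (by fun_prop) (by fun_prop))
  have hcl2 : IsClosed (z '' {γ | eps1 A ≤ |γ - α|}) :=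
    C.proper.isClosedMap _ (isClosed_le (by fun_prop) (by fun_prop))
  have hclG : IsClosed (range z) := C.proper.isClosedMap.isClosed_range
  have hne1 : (z '' {γ | |γ - α| ≤ eps1 A}).Nonempty := ⟨z α, α, by simp [he.le], rfl⟩
  have hb : eps1 A ≤ |β - α| := by rw [abs_sub_comm]; exact had.1
  have hne2 : (z '' {γ | eps1 A ≤ |γ - α|}).Nonempty := ⟨z β, β, hb, rfl⟩
  have hma : z α ∈ (z '' {γ | |γ - α| ≤ eps1 A}) := ⟨α, by simp [he.le], rfl⟩
  have hmb : z β ∈ (z '' {γ | eps1 A ≤ |γ - α|}) := ⟨β, hb, rfl⟩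
  have hneG : (range z).Nonempty := ⟨z α, α, rfl⟩
  have hpc := isPreconnected_closed_iff.1 (convex_segment (𝕜 := ℝ) (z α) (z β)).isPreconnected
    {p | Metric.infDist p (z '' {γ | |γ - α| ≤ eps1 A}) ≤ Metric.infDist p (range z)}
    {p | Metric.infDist p (z '' {γ | eps1 A ≤ |γ - α|}) ≤ Metric.infDist p (range z)}
    (isClosed_le (Metric.continuous_infDist_pt _) (Metric.continuous_infDist_pt _))
    (isClosed_le (Metric.continuous_infDist_pt _) (Metric.continuous_infDist_pt _))
    (by
      intro p hp
      obtain ⟨q, ⟨γ, rfl⟩, hq⟩ := hclG.exists_infDist_eq_dist hneG p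
      rcases le_total (|γ - α|) (eps1 A) with h | h
      · left
        rw [mem_ofPred_eq]
        rw [hq]; exact Metric.infDist_le_dist_of_mem ⟨γ, h, rfl⟩
      · right
        rw [mem_ofPred_eq]
        rw [hq]; exact Metric.infDist_le_dist_of_mem ⟨γ, h, rfl⟩)
    ⟨z α, left_mem_segment _ _ _, by
      rw [mem_ofPred_eq]
      rw [Metric.infDist_zero_of_mem hma]
      exact Metric.infDist_nonneg⟩
    ⟨z β, right_mem_segment _ _ _, by
      rw [mem_ofPred_eq]
      rw [Metric.infDist_zero_of_mem hmb]
      exact Metric.infDist_nonneg⟩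
  obtain ⟨p, hp, hp1, hp2⟩ := hpc
  obtain ⟨_, ⟨γ, hγ, rfl⟩, hq1⟩ := hcl1.exists_infDist_eq_dist hne1 p
  obtain ⟨_, ⟨γ', hγ', rfl⟩, hq2⟩ := hcl2.exists_infDist_eq_dist hne2 p
  replace hp1 : dist p (z γ) ≤ Metric.infDist p (range z) := hq1 ▸ hp1
  replace hp2 : dist p (z γ') ≤ Metric.infDist p (range z) := hq2 ▸ hp2
  set r := Metric.infDist p (range z) with hr
  have hrx : r ≤ dist p (z α) := Metric.infDist_le_dist_of_mem ⟨α, rfl⟩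
  have hry : r ≤ dist p (z β) := Metric.infDist_le_dist_of_mem ⟨β, rfl⟩
  have hsum : dist (z α) p + dist p (z β) = dist (z α) (z β) := dist_add_dist_of_mem_segment hp
  rw [dist_comm (z α) p, dist_eq_norm (z α), ← hdd] at hsum
  have hpa := dist_nonneg (x := p) (y := z α)
  have hpb := dist_nonneg (x := p) (y := z β)
  have hγγ : ‖z γ - z γ'‖ ≤ 2 * r := by
    rw [← dist_eq_norm]
    have := dist_triangle_left (z γ) (z γ') p
    linarith
  have h1 : ‖z γ' - z α‖ ≤ 2 * d := by
    rw [← dist_eq_norm]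
    have := dist_triangle_left (z γ') (z α) p
    linarith
  have h2 : 4 * eps1 A < |γ' - α| := by
    rcases C.near_or (α := γ') (β := α) (by rw [lt_div_iff₀ (by positivity)]; nlinarith) with h | h
    · exact absurd hγ' (not_le.2 h)
    · exact h
  have h3 : eps1 A ≤ |γ - γ'| := by
    have := abs_sub_le γ' γ α
    rw [abs_sub_comm γ' γ] at this
    have h5 : |γ - α| ≤ eps1 A := hγ
    linarith
  have h4 : |γ - γ'| ≤ 8 * A ^ 2 := by
    have := C.far_le (α := γ) (β := γ') (by linarith)
    nlinarith
  have hr0 : 0 < r := by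
    rcases lt_or_ge 0 r with h | h
    · exact h
    exfalso
    have : z γ = z γ' := by
      have := norm_nonneg (z γ - z γ')
      exact sub_eq_zero.1 (norm_eq_zero.1 (by linarith))
    have := C.inj this
    rw [this] at h3; simp at h3; linarith
  have hpG : p ∉ range z := by
    intro h
    have := Metric.infDist_zero_of_mem h
    linarith
  have hpO1 : p ∈ O1 := by
    have := C.hun.symm ▸ mem_univ p
    rcases this with (h | h) | h
    · exact h
    · exact absurd h (had.2.2 p hp)
    · exact absurd h hpG
  have hball : Metric.ball p r ⊆ O1 := by
    refine C.side1 (convex_ball p r).isPreconnected ?_ ⟨p, Metric.mem_ball_self hr0, hpO1⟩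
    intro q hq hqG
    have : r ≤ dist p q := Metric.infDist_le_dist_of_mem hqG
    rw [Metric.mem_ball, dist_comm] at hq
    linarith
  have hcb : ∀ q ∈ Metric.closedBall p r, q ∉ O2 := by
    intro q hq
    rw [← closure_ball p hr0.ne'] at hq
    have : Disjoint (closure O1) O2 := C.d12.closure_left C.o2
    exact Set.disjoint_left.1 this (closure_mono hball hq)
  have hadm : Adm z O2 A γ γ' := by
    refine ⟨h3, h4, fun q hq => hcb q ?_⟩
    refine (convex_closedBall p r).segment_subset ?_ ?_ hq
    · rw [Metric.mem_closedBall, dist_comm]; exact hp1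
    · rw [Metric.mem_closedBall, dist_comm]; exact hp2
  have h6 := hmin _ _ hadm
  have hr2 : r = d / 2 := by linarith
  have hm : p = midpoint ℝ (z α) (z β) := by
    apply eq_midpoint_of_dist_eq_half
    · rw [dist_comm, dist_eq_norm (z α), ← hdd]; linarith
    · rw [dist_eq_norm (z α), ← hdd]; linarith
  rw [← hm, ← hr2]
  exact hball

theorem perp_lemma (C : Crv A z z' O1 O2) (α β : ℝ) 
    (hb : Metric.ball (midpoint ℝ (z α) (z β)) (‖z α - z β‖ / 2) ⊆ O1) :
    dot (z' α) (z α - z β) = 0 ∧ dot (z' β) (z α - z β) = 0 := by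
  have key : ∀ γ, ‖z α - z β‖ / 2 ≤ ‖z γ - midpoint ℝ (z α) (z β)‖ := by
    intro γ
    by_contra! h
    have : z γ ∈ O1 := hb (by rw [Metric.mem_ball, dist_eq_norm]; exact h)
    exact Set.disjoint_left.1 C.d1 this ⟨γ, rfl⟩
  have e1 : z α - midpoint ℝ (z α) (z β) = (z α - z β) / 2 := by
    rw [midpoint_eq_smul_add, Complex.real_smul]; push_cast [invOf_eq_inv]; ring
  have e2 : z β - midpoint ℝ (z α) (z β) = -((z α - z β) / 2) := by
    rw [midpoint_eq_smul_add, Complex.real_smul]; push_cast [invOf_eq_inv]; ring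
  have n1 : ‖z α - midpoint ℝ (z α) (z β)‖ = ‖z α - z β‖ / 2 := by rw [e1]; simp
  have n2 : ‖z β - midpoint ℝ (z α) (z β)‖ = ‖z α - z β‖ / 2 := by rw [e2, norm_neg]; simp
  have p1 := perp_of_min (C.hd α) (m := midpoint ℝ (z α) (z β)) (by
    refine Filter.Eventually.of_forall fun t => ?_
    show ‖_‖ ^ 2 ≤ ‖_‖ ^ 2
    rw [n1]; exact pow_le_pow_left₀ (by positivity) (key t) 2)
  have p2 := perp_of_min (C.hd β) (m := midpoint ℝ (z α) (z β)) (by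
    refine Filter.Eventually.of_forall fun t => ?_
    show ‖_‖ ^ 2 ≤ ‖_‖ ^ 2
    rw [n2]; exact pow_le_pow_left₀ (by positivity) (key t) 2)
  rw [e1] at p1
  rw [e2] at p2
  unfold dot at *
  have r1 : ((z α - z β) / 2).re = (z α - z β).re / 2 := by simp
  have r2 : ((z α - z β) / 2).im = (z α - z β).im / 2 := by simp
  rw [Complex.neg_re, Complex.neg_im] at p2
  rw [r1, r2] at p1 p2
  constructor <;> linarith

theorem openSeg_ball (x y : ℂ) (hxy : x ≠ y) : openSegment ℝ x y ⊆ Metric.ball (midpoint ℝ x y) (‖x - y‖ / 2) := by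
  intro p hp
  obtain ⟨a, b, ha, hb, hab, rfl⟩ := hp
  rw [Metric.mem_ball, dist_eq_norm]
  have : a • x + b • y - midpoint ℝ x y = ((a - 1 / 2 : ℝ) : ℂ) * (x - y) := by
    have hb' : b = 1 - a := by linarith
    rw [midpoint_eq_smul_add, Complex.real_smul, Complex.real_smul, Complex.real_smul, hb']; push_cast [invOf_eq_inv]; ring
  rw [this, norm_mul, Complex.norm_real, Real.norm_eq_abs]
  have h0 : 0 < ‖x - y‖ := norm_pos_iff.2 (sub_ne_zero.2 hxy)
  have : |a - 1 / 2| < 1 / 2 := by rw [abs_lt]; constructor <;> linarith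
  nlinarith

end Crv


structure Dyn (A T a : ℝ) (z zp zt : ℝ → ℝ → ℂ) (O1 O2 : ℝ → Set ℂ) : Prop where
  hT : 0 < T
  hA : 1 ≤ A
  crv : ∀ t ∈ Icc 0 T, Crv A (fun α => z α t) (fun α => zp α t) (O1 t) (O2 t)
  strip : ∀ t ∈ Icc 0 T, {x : ℂ | x.im ≤ -a} ⊆ O1 t ∧ {x : ℂ | a ≤ x.im} ⊆ O2 t
  ltz : ∀ t ∈ Icc 0 T, ∀ s ∈ Icc 0 T, ∀ α, ‖z α t - z α s‖ ≤ A * |t - s|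
  ltp : ∀ t ∈ Icc 0 T, ∀ s ∈ Icc 0 T, ∀ α, ‖zp α t - zp α s‖ ≤ A * |t - s|
  hzt : ∀ t ∈ Icc 0 T, ∀ α, HasDerivWithinAt (fun s => z α s) (zt α t) (Icc 0 T) t
  hper : ∀ t ∈ Icc 0 T, ∀ x : ℂ, x + ((2 * Real.pi : ℝ) : ℂ) ∈ O2 t ↔ x ∈ O2 t
  hvel : ∀ t ∈ Ioc 0 T, ∀ α β, openSegment ℝ (z α t) (z β t) ⊆ O1 t →
    dot (zp α t) (z α t - z β t) = 0 → dot (zp β t) (z α t - z β t) = 0 →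
    |dot (zt α t - zt β t) (z α t - z β t)| ≤ A ^ 2 * ‖z α t - z β t‖ ^ 2
  h0 : ∀ α β, |α - β| / A ≤ ‖z α 0 - z β 0‖

theorem tendsto_dot {ι : Type*} {l : Filter ι} {f g : ι → ℂ} {x y : ℂ} (hf : Tendsto f l (nhds x))
    (hg : Tendsto g l (nhds y)) : Tendsto (fun i => dot (f i) (g i)) l (nhds (dot x y)) := by
  unfold dot
  have r := Complex.continuous_re
  have i := Complex.continuous_im
  exact (((r.tendsto _).comp hf).mul ((r.tendsto _).comp hg)).add (((i.tendsto _).comp hf).mul ((i.tendsto _).comp hg))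

theorem dot_self (x : ℂ) : dot x x = ‖x‖ ^ 2 := by
  unfold dot; rw [← Complex.normSq_eq_norm_sq, Complex.normSq_apply]

theorem dot_abs_le (x y : ℂ) : |dot x y| ≤ ‖x‖ * ‖y‖ := by
  apply abs_le_of_sq_le_sq _ (by positivity)
  rw [mul_pow, ← dot_self, ← dot_self]
  unfold dot
  nlinarith [sq_nonneg (x.re * y.im - x.im * y.re)]

namespace Dyn
variable {A T a : ℝ} {z zp zt : ℝ → ℝ → ℂ} {O1 O2 : ℝ → Set ℂ}

theorem open_core (D : Dyn A T a z zp zt O1 O2) (O : ℝ → Set ℂ) (y0 : ℂ)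
    (hy0 : ∀ t ∈ Icc 0 T, y0 ∈ O t) (ho : ∀ t ∈ Icc 0 T, IsOpen (O t)) (hc : ∀ t ∈ Icc 0 T, IsConnected (O t))
    (hd : ∀ t ∈ Icc 0 T, Disjoint (O t) (range fun α => z α t))
    (hs : ∀ t ∈ Icc 0 T, ∀ S : Set ℂ, IsPreconnected S → (∀ x ∈ S, x ∉ range fun α => z α t) →
      (S ∩ O t).Nonempty → S ⊆ O t)
    (t0 : ℝ) (ht0 : t0 ∈ Icc 0 T) (x : ℂ) (hx : x ∈ O t0) :
    ∃ δ > 0, ∀ t ∈ Icc 0 T, |t - t0| < δ → ∀ y, ‖y - x‖ < δ → y ∈ O t := by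
  have hA := D.hA
  have hpc := (ho t0 ht0).isConnected_iff_isPathConnected.1 (hc t0 ht0)
  obtain ⟨γ, hγ⟩ := hpc.joinedIn x hx y0 (hy0 t0 ht0)
  have hK : IsCompact (range γ) := isCompact_range γ.continuous
  have hKO : range γ ⊆ O t0 := by rintro _ ⟨s, rfl⟩; exact hγ s
  obtain ⟨η, hη, hth⟩ := hK.exists_thickening_subset_open (ho t0 ht0) hKO
  have hxK : x ∈ range γ := ⟨0, by simp⟩
  have hyK : y0 ∈ range γ := ⟨1, by simp⟩
  refine ⟨η / (4 * A), by positivity, fun t ht htt y hy => ?_⟩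
  rw [lt_div_iff₀ (by positivity)] at htt hy
  have hsub : range γ ∪ Metric.ball x (η / 2) ⊆ O t := by
    refine hs t ht _ ?_ ?_ ⟨y0, Or.inl hyK, hy0 t ht⟩
    · exact (isPreconnected_range γ.continuous).union x hxK (Metric.mem_ball_self (by positivity))
        (convex_ball _ _).isPreconnected
    · rintro q hq ⟨α, rfl⟩
      have : ∃ k ∈ range γ, dist (z α t) k < η / 2 := by
        rcases hq with hq | hq
        · exact ⟨_, hq, by simp [hη]⟩
        · exact ⟨x, hxK, hq⟩
      obtain ⟨k, hk, hkd⟩ := this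
      have h1 := D.ltz t ht t0 ht0 α
      have h2 : z α t0 ∈ O t0 := by
        apply hth
        rw [Metric.mem_thickening_iff]
        refine ⟨k, hk, ?_⟩
        have := dist_triangle_left (z α t0) k (z α t)
        rw [dist_eq_norm (z α t) (z α t0)] at this
        nlinarith
      exact Set.disjoint_left.1 (hd t0 ht0) h2 ⟨α, rfl⟩
  apply hsub
  right
  rw [Metric.mem_ball, dist_eq_norm]
  nlinarith [norm_nonneg (y - x)]

theorem open1 (D : Dyn A T a z zp zt O1 O2) (t0 : ℝ) (ht0 : t0 ∈ Icc 0 T) (x : ℂ) (hx : x ∈ O1 t0) :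
    ∃ δ > 0, ∀ t ∈ Icc 0 T, |t - t0| < δ → ∀ y, ‖y - x‖ < δ → y ∈ O1 t :=
  D.open_core O1 (⟨0, -a⟩ : ℂ) (fun t ht => (D.strip t ht).1 (by rw [mem_ofPred_eq]))
    (fun t ht => (D.crv t ht).o1) (fun t ht => (D.crv t ht).c1) (fun t ht => (D.crv t ht).d1)
    (fun t ht S h1 h2 h3 => (D.crv t ht).side1 h1 h2 h3) t0 ht0 x hx

theorem open2 (D : Dyn A T a z zp zt O1 O2) (t0 : ℝ) (ht0 : t0 ∈ Icc 0 T) (x : ℂ) (hx : x ∈ O2 t0) :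
    ∃ δ > 0, ∀ t ∈ Icc 0 T, |t - t0| < δ → ∀ y, ‖y - x‖ < δ → y ∈ O2 t :=
  D.open_core O2 (⟨0, a⟩ : ℂ) (fun t ht => (D.strip t ht).2 (by rw [mem_ofPred_eq]))
    (fun t ht => (D.crv t ht).o2) (fun t ht => (D.crv t ht).c2) (fun t ht => (D.crv t ht).d2)
    (fun t ht S h1 h2 h3 => (D.crv t ht).side2 h1 h2 h3) t0 ht0 x hx

theorem tendsto_z (D : Dyn A T a z zp zt O1 O2) {ι : Type*} {l : Filter ι} {γ s : ι → ℝ} {γ0 s0 : ℝ}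
    (hs0 : s0 ∈ Icc 0 T) (hs : ∀ i, s i ∈ Icc 0 T) (h1 : Tendsto γ l (nhds γ0)) (h2 : Tendsto s l (nhds s0)) :
    Tendsto (fun i => z (γ i) (s i)) l (nhds (z γ0 s0)) := by
  have hz := (((D.crv s0 hs0).cont).tendsto γ0).comp h1
  have : Tendsto (fun i => z (γ i) (s i) - z (γ i) s0) l (nhds 0) := by
    refine squeeze_zero_norm (a := fun i => A * |s i - s0|) (fun i => D.ltz _ (hs i) _ hs0 _) ?_
    have := ((h2.sub_const s0).abs).const_mul A
    simpa using this
  have h3 := this.add hz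
  simpa [Function.comp_def] using h3

theorem tendsto_zp (D : Dyn A T a z zp zt O1 O2) {ι : Type*} {l : Filter ι} {s : ι → ℝ} {γ0 s0 : ℝ}
    (hs0 : s0 ∈ Icc 0 T) (hs : ∀ i, s i ∈ Icc 0 T) (h2 : Tendsto s l (nhds s0)) :
    Tendsto (fun i => zp γ0 (s i)) l (nhds (zp γ0 s0)) := by
  have : Tendsto (fun i => zp γ0 (s i) - zp γ0 s0) l (nhds 0) := by
    refine squeeze_zero_norm (a := fun i => A * |s i - s0|) (fun i => D.ltp _ (hs i) _ hs0 _) ?_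
    have := ((h2.sub_const s0).abs).const_mul A
    simpa using this
  simpa using this.add_const (zp γ0 s0)

theorem seg_core (D : Dyn A T a z zp zt O1 O2) {ι : Type*} {l : Filter ι} [l.NeBot] {γ s lam : ι → ℝ} {α β s0 : ℝ}
    (hs0 : s0 ∈ Icc 0 T) (hs : ∀ i, s i ∈ Icc 0 T) (h1 : Tendsto γ l (nhds α)) (h2 : Tendsto s l (nhds s0))
    (hab : α ≠ β) (hperp : dot (zp α s0) (z β s0 - z α s0) = 0) (hl : ∀ i, 0 < lam i)
    (heq : ∀ i, z (γ i) (s i) = z α (s i) + (lam i : ℂ) * (z β (s i) - z α (s i))) : False := by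
  have hA := D.hA
  have tα := D.tendsto_z (γ := fun _ => α) hs0 hs tendsto_const_nhds h2
  have tβ := D.tendsto_z (γ := fun _ => β) hs0 hs tendsto_const_nhds h2
  have tv := tβ.sub tα
  have tp := D.tendsto_zp (γ0 := α) hs0 hs h2
  have tκ := (tendsto_dot tp tv).abs
  rw [hperp, abs_zero] at tκ
  have tτ := (h1.sub_const α).abs
  rw [sub_self, abs_zero] at tτ
  have hv0 : ‖z β s0 - z α s0‖ ≠ 0 := by
    rw [norm_ne_zero_iff, sub_ne_zero]
    exact fun h => hab ((D.crv s0 hs0).inj h.symm)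
  have lim := (((tκ.add ((tτ.const_mul A).mul tv.norm)).mul tκ).div (tv.norm.pow 2) (by positivity)).add
    ((tτ.const_mul A).mul tp.norm)
  simp only [mul_zero, zero_mul, add_zero, zero_div] at lim
  have hge : (A⁻¹) ^ 2 ≤ (0 : ℝ) := by
    refine ge_of_tendsto' lim fun i => ?_
    have C := D.crv (s i) (hs i)
    have hv : 0 < ‖z β (s i) - z α (s i)‖ := by
      rw [norm_pos_iff, sub_ne_zero]
      exact fun h => hab (C.inj h.symm)
    have ht := C.taylor (γ i) α α |γ i - α| le_rfl (by simp)
    rw [heq i, add_sub_cancel_left] at ht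
    set v := z β (s i) - z α (s i) with hvd
    set p := zp α (s i) with hpd
    set τ := γ i - α with hτ
    set lm := lam i with hlm
    have hlm0 : 0 < lm := hl i
    have hτ0 : 0 < |τ| := by
      rw [abs_pos]
      intro h
      rw [h] at ht
      simp only [Complex.ofReal_zero, zero_mul, sub_zero, abs_zero, mul_zero] at ht
      have : (lm : ℂ) * v = 0 := norm_le_zero_iff.1 ht
      rcases mul_eq_zero.1 this with h | h
      · exact hlm0.ne' (by exact_mod_cast h)
      · rw [h] at hv; simp at hv
    have e1 := dot_abs_le ((lm : ℂ) * v - (τ : ℂ) * p) v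
    have e2 := dot_abs_le ((lm : ℂ) * v - (τ : ℂ) * p) p
    have d1 : dot ((lm : ℂ) * v - (τ : ℂ) * p) v = lm * ‖v‖ ^ 2 - τ * dot p v := by
      rw [← dot_self]; unfold dot
      simp only [Complex.sub_re, Complex.sub_im, Complex.re_ofReal_mul, Complex.im_ofReal_mul]; ring
    have d2 : dot ((lm : ℂ) * v - (τ : ℂ) * p) p = lm * dot p v - τ * ‖p‖ ^ 2 := by
      rw [← dot_self]; unfold dot
      simp only [Complex.sub_re, Complex.sub_im, Complex.re_ofReal_mul, Complex.im_ofReal_mul]; ring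
    rw [d1] at e1
    rw [d2] at e2
    have hp : A⁻¹ ≤ ‖p‖ := C.hlow α
    have hp2 : (A⁻¹) ^ 2 ≤ ‖p‖ ^ 2 := pow_le_pow_left₀ (by positivity) hp 2
    refine hp2.trans ?_
    set κ := dot p v
    have f1 : lm * ‖v‖ ^ 2 ≤ |τ| * (|κ| + A * |τ| * ‖v‖) := by
      have a1 := (abs_le.1 e1).2
      have a2 : τ * κ ≤ |τ| * |κ| := by rw [← abs_mul]; exact le_abs_self _
      have a3 := mul_le_mul_of_nonneg_right ht hv.le
      nlinarith
    have f2 : |τ| * ‖p‖ ^ 2 ≤ lm * |κ| + A * |τ| * |τ| * ‖p‖ := by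
      have a1 : |τ * ‖p‖ ^ 2| ≤ |lm * κ| + |lm * κ - τ * ‖p‖ ^ 2| := by
        have := abs_sub_le (τ * ‖p‖ ^ 2) (lm * κ) 0
        rw [sub_zero, sub_zero, abs_sub_comm (τ * ‖p‖ ^ 2)] at this
        linarith
      rw [abs_mul, abs_mul, abs_of_pos hlm0, abs_of_nonneg (by positivity : 0 ≤ ‖p‖ ^ 2)] at a1
      have a3 := mul_le_mul_of_nonneg_right ht (norm_nonneg p)
      linarith
    have f3 : lm ≤ |τ| * (|κ| + A * |τ| * ‖v‖) / ‖v‖ ^ 2 := by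
      rw [le_div_iff₀ (by positivity)]; exact f1
    have f4 : |τ| * ‖p‖ ^ 2 ≤ |τ| * ((|κ| + A * |τ| * ‖v‖) * |κ| / ‖v‖ ^ 2 + A * |τ| * ‖p‖) := by
      have := mul_le_mul_of_nonneg_right f3 (abs_nonneg κ)
      refine f2.trans (le_of_le_of_eq (add_le_add this le_rfl) ?_)
      field_simp
    exact le_of_mul_le_mul_left f4 hτ0
  have : 0 < (A⁻¹) ^ 2 := by positivity
  linarith

theorem seg_stable (D : Dyn A T a z zp zt O1 O2) {α β s0 : ℝ} (hs0 : s0 ∈ Icc 0 T) (hab : α ≠ β)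
    (ho : openSegment ℝ (z α s0) (z β s0) ⊆ O1 s0)
    (hp1 : dot (zp α s0) (z α s0 - z β s0) = 0) (hp2 : dot (zp β s0) (z α s0 - z β s0) = 0) :
    ∀ᶠ s in nhdsWithin s0 (Icc 0 T), ∀ p ∈ segment ℝ (z α s) (z β s), p ∉ O2 s := by
  by_contra hcon
  rw [not_eventually] at hcon
  have hmid : ∀ᶠ s in nhdsWithin s0 (Icc 0 T), midpoint ℝ (z α s) (z β s) ∈ O1 s := by
    have hm0 : midpoint ℝ (z α s0) (z β s0) ∈ O1 s0 := by
      apply ho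
      rw [midpoint_eq_smul_add]
      refine ⟨2⁻¹, 2⁻¹, by norm_num, by norm_num, by norm_num, by simp [invOf_eq_inv]⟩
    obtain ⟨δ, hδ, hδO⟩ := D.open1 s0 hs0 _ hm0
    have c1 : ContinuousWithinAt (fun s => midpoint ℝ (z α s) (z β s)) (Icc 0 T) s0 := by
      simp only [midpoint_eq_smul_add]
      exact (((D.hzt s0 hs0 α).continuousWithinAt).add ((D.hzt s0 hs0 β).continuousWithinAt)).const_smul _
    have c2 := Metric.tendsto_nhds.1 c1 δ hδ
    have c3 : ∀ᶠ s in nhdsWithin s0 (Icc 0 T), |s - s0| < δ :=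
      mem_nhdsWithin_of_mem_nhds (Metric.ball_mem_nhds s0 hδ)
    filter_upwards [c2, c3, self_mem_nhdsWithin] with s h1 h2 h3
    exact hδO s h3 h2 _ (by rw [← dist_eq_norm]; exact h1)
  obtain ⟨s, hst, hsP⟩ := exists_seq_forall_of_frequently ((hcon.and_eventually (hmid.and self_mem_nhdsWithin)))
  have hs : ∀ i, s i ∈ Icc 0 T := fun i => (hsP i).2.2
  have hst' : Tendsto s atTop (nhds s0) := hst.mono_right nhdsWithin_le_nhds
  have hhit : ∀ i, ∃ q : ℝ × ℝ, q ∈ (Icc (-(|α| + |β| + 3 * A)) (|α| + |β| + 3 * A)) ×ˢ Icc (0 : ℝ) 1 ∧ 0 < q.2 ∧ q.2 < 1 ∧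
      z q.1 (s i) = z α (s i) + (q.2 : ℂ) * (z β (s i) - z α (s i)) := by
    intro i
    have C := D.crv (s i) (hs i)
    have hne : ∃ p ∈ openSegment ℝ (z α (s i)) (z β (s i)), p ∈ range (fun α => z α (s i)) := by
      by_contra! hno
      have hO : openSegment ℝ (z α (s i)) (z β (s i)) ⊆ O1 (s i) := by
        refine C.side1 (convex_openSegment _ _).isPreconnected hno ⟨_, ?_, (hsP i).2.1⟩
        rw [midpoint_eq_smul_add]
        exact ⟨2⁻¹, 2⁻¹, by norm_num, by norm_num, by norm_num, by simp [invOf_eq_inv]⟩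
      apply (hsP i).1
      intro p hp hpO
      rw [← insert_endpoints_openSegment] at hp
      rcases hp with rfl | rfl | hp
      · exact Set.disjoint_left.1 C.d2 hpO ⟨α, rfl⟩
      · exact Set.disjoint_left.1 C.d2 hpO ⟨β, rfl⟩
      · exact Set.disjoint_left.1 C.d12 (hO hp) hpO
    obtain ⟨p, ⟨u, w, hu, hw, huw, rfl⟩, γ, hγ⟩ := hne
    simp only at hγ
    have hnα := C.hnear α
    have hnβ := C.hnear β
    have hnγ := C.hnear γ
    refine ⟨(γ, w), ⟨?_, hw.le, by simp; linarith⟩, hw, by simp; linarith, ?_⟩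
    · simp only
      rw [mem_Icc, ← abs_le]
      have t1 : ‖(γ : ℂ)‖ ≤ ‖z γ (s i)‖ + ‖z γ (s i) - γ‖ := by
        have := norm_sub_le (z γ (s i)) (z γ (s i) - γ); simpa using this
      have t2 : ‖z α (s i)‖ ≤ ‖z α (s i) - α‖ + ‖(α : ℂ)‖ := by
        have := norm_add_le (z α (s i) - α) α; simpa using this
      have t3 : ‖z β (s i)‖ ≤ ‖z β (s i) - β‖ + ‖(β : ℂ)‖ := by
        have := norm_add_le (z β (s i) - β) β; simpa using this
      rw [Complex.norm_real, Real.norm_eq_abs] at t1 t2 t3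
      have t4 : ‖z γ (s i)‖ ≤ ‖z α (s i)‖ + ‖z β (s i)‖ := by
        rw [hγ]
        refine (norm_add_le _ _).trans ?_
        rw [norm_smul, norm_smul, Real.norm_eq_abs, Real.norm_eq_abs, abs_of_pos hu, abs_of_pos hw]
        nlinarith [norm_nonneg (z α (s i)), norm_nonneg (z β (s i))]
      linarith
    · simp only
      rw [hγ, Complex.real_smul, Complex.real_smul]
      have : u = 1 - w := by linarith
      rw [this]; push_cast; ring
  choose q hqK hq0 hq1 hqz using hhit
  obtain ⟨q0, hq0K, φ, hφ, hlim⟩ := (isCompact_Icc.prod isCompact_Icc).tendsto_subseq hqK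
  have l1 : Tendsto (fun i => (q (φ i)).1) atTop (nhds q0.1) := (continuous_fst.tendsto _).comp hlim
  have l2 : Tendsto (fun i => (q (φ i)).2) atTop (nhds q0.2) := (continuous_snd.tendsto _).comp hlim
  have ls : Tendsto (fun i => s (φ i)) atTop (nhds s0) := hst'.comp hφ.tendsto_atTop
  have hsφ : ∀ i, s (φ i) ∈ Icc 0 T := fun i => hs _
  have z1 := D.tendsto_z hs0 hsφ l1 ls
  have zα := D.tendsto_z (γ := fun _ => α) hs0 hsφ tendsto_const_nhds ls
  have zβ := D.tendsto_z (γ := fun _ => β) hs0 hsφ tendsto_const_nhds ls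
  have z2 := zα.add (((Complex.continuous_ofReal.tendsto _).comp l2).mul (zβ.sub zα))
  have hlimeq : z q0.1 s0 = z α s0 + (q0.2 : ℂ) * (z β s0 - z α s0) := by
    refine tendsto_nhds_unique z1 (z2.congr fun i => ?_)
    exact (hqz (φ i)).symm
  have C0 := D.crv s0 hs0
  have hdn : ∀ x y : ℂ, dot x (-y) = - dot x y := by intro x y; simp [dot]; ring
  rcases eq_or_lt_of_le hq0K.2.1 with h | h
  · rw [← h] at hlimeq
    have : q0.1 = α := C0.inj (by simpa using hlimeq)
    rw [this] at l1
    refine D.seg_core hs0 hsφ l1 ls hab ?_ (fun i => hq0 _) (fun i => hqz (φ i))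
    rw [← neg_sub, hdn, hp1, neg_zero]
  rcases eq_or_lt_of_le hq0K.2.2 with h' | h'
  · rw [h'] at hlimeq
    have : q0.1 = β := C0.inj (by simpa using hlimeq)
    rw [this] at l1
    refine D.seg_core (lam := fun i => 1 - (q (φ i)).2) hs0 hsφ l1 ls hab.symm hp2 (fun i => by linarith [hq1 (φ i)]) (fun i => ?_)
    rw [hqz (φ i)]; push_cast; ring
  · have : z q0.1 s0 ∈ O1 s0 := by
      apply ho
      refine ⟨1 - q0.2, q0.2, by linarith, h, by ring, ?_⟩
      rw [hlimeq, Complex.real_smul, Complex.real_smul]; push_cast; ring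
    exact Set.disjoint_left.1 C0.d1 this ⟨q0.1, rfl⟩
end Dyn


theorem Crv.hperZ {A : ℝ} {z z' : ℝ → ℂ} {O1 O2 : Set ℂ} (C : Crv A z z' O1 O2) (k : ℤ) (α : ℝ) :
    z (α + k * (2 * Real.pi)) = z α + ((k * (2 * Real.pi) : ℝ) : ℂ) := by
  induction k using Int.induction_on with
  | zero => simp
  | succ n ih =>
    have := C.hper (α + (n : ℤ) * (2 * Real.pi))
    rw [ih] at this
    have e : α + ((n : ℤ) + 1 : ℤ) * (2 * Real.pi) = α + (n : ℤ) * (2 * Real.pi) + 2 * Real.pi := by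
      push_cast; ring
    rw [e, this]; push_cast; ring
  | pred n ih =>
    have := C.hper (α + (-(n : ℤ) - 1 : ℤ) * (2 * Real.pi))
    have e : α + (-(n : ℤ) - 1 : ℤ) * (2 * Real.pi) + 2 * Real.pi = α + (-(n : ℤ) : ℤ) * (2 * Real.pi) := by
      push_cast; ring
    rw [e, ih] at this
    rw [← sub_eq_iff_eq_add] at this
    rw [← this]; push_cast; ring

namespace Dyn
variable {A T a : ℝ} {z zp zt : ℝ → ℝ → ℂ} {O1 O2 : ℝ → Set ℂ}

theorem hperO (D : Dyn A T a z zp zt O1 O2) {t : ℝ} (ht : t ∈ Icc 0 T) (k : ℤ) (x : ℂ) :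
    x + ((k * (2 * Real.pi) : ℝ) : ℂ) ∈ O2 t ↔ x ∈ O2 t := by
  induction k using Int.induction_on with
  | zero => simp
  | succ n ih =>
    rw [← ih, ← D.hper t ht (x + (((n : ℤ) * (2 * Real.pi) : ℝ) : ℂ))]
    have e : x + ((((n : ℤ) + 1 : ℤ) * (2 * Real.pi) : ℝ) : ℂ) = x + (((n : ℤ) * (2 * Real.pi) : ℝ) : ℂ) + ((2 * Real.pi : ℝ) : ℂ) := by
      push_cast; ring
    rw [e]
  | pred n ih =>
    rw [← ih, ← D.hper t ht (x + (((-(n : ℤ) - 1 : ℤ) * (2 * Real.pi) : ℝ) : ℂ))]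
    have e : x + (((-(n : ℤ) - 1 : ℤ) * (2 * Real.pi) : ℝ) : ℂ) + ((2 * Real.pi : ℝ) : ℂ) = x + (((-(n : ℤ) : ℤ) * (2 * Real.pi) : ℝ) : ℂ) := by
      push_cast; ring
    rw [e]

theorem adm_shift (D : Dyn A T a z zp zt O1 O2) {t : ℝ} (ht : t ∈ Icc 0 T) (k : ℤ) {α β : ℝ}
    (h : Adm (fun α => z α t) (O2 t) A α β) :
    Adm (fun α => z α t) (O2 t) A (α + k * (2 * Real.pi)) (β + k * (2 * Real.pi)) := by
  obtain ⟨h1, h2, h3⟩ := h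
  refine ⟨by simpa using h1, by simpa using h2, ?_⟩
  rintro p ⟨u, w, hu, hw, huw, rfl⟩ hp
  have C := D.crv t ht
  have e1 := C.hperZ k α
  have e2 := C.hperZ k β
  simp only [e1, e2] at hp
  refine h3 (u • z α t + w • z β t) ⟨u, w, hu, hw, huw, rfl⟩ ((D.hperO ht k _).1 ?_)
  refine mem_of_eq_of_mem ?_ hp
  have : u = 1 - w := by linarith
  simp only [Complex.real_smul]
  rw [this]; push_cast; ring

def cc (A T : ℝ) : ℝ := eps1 A / (4 * A) * Real.exp (-((A ^ 2 + 1) * T))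

theorem adm_closed (D : Dyn A T a z zp zt O1 O2) :
    IsClosed {q : ℝ × ℝ × ℝ | q.1 ∈ Icc 0 T ∧ Adm (fun α => z α q.1) (O2 q.1) A q.2.1 q.2.2} := by
  apply IsSeqClosed.isClosed
  intro q q0 hq hlim
  have l1 : Tendsto (fun i => (q i).1) atTop (nhds q0.1) := (continuous_fst.tendsto _).comp hlim
  have l2 : Tendsto (fun i => (q i).2.1) atTop (nhds q0.2.1) :=
    ((continuous_fst.comp continuous_snd).tendsto _).comp hlim
  have l3 : Tendsto (fun i => (q i).2.2) atTop (nhds q0.2.2) :=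
    ((continuous_snd.comp continuous_snd).tendsto _).comp hlim
  have ht : q0.1 ∈ Icc 0 T := isClosed_Icc.mem_of_tendsto l1 (Eventually.of_forall fun i => (hq i).1)
  refine ⟨ht, ge_of_tendsto' (l2.sub l3).abs fun i => (hq i).2.1,
    le_of_tendsto' (l2.sub l3).abs fun i => (hq i).2.2.1, ?_⟩
  rintro p ⟨u, w, hu, hw, huw, rfl⟩ hp
  obtain ⟨δ, hδ, hδO⟩ := D.open2 _ ht _ hp
  have z1 := D.tendsto_z ht (fun i => (hq i).1) l2 l1
  have z2 := D.tendsto_z ht (fun i => (hq i).1) l3 l1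
  have z3 := (z1.const_smul u).add (z2.const_smul w)
  have c2 := Metric.tendsto_nhds.1 z3 δ hδ
  have c1 := Metric.tendsto_nhds.1 l1 δ hδ
  obtain ⟨i, h1, h2⟩ := (c1.and c2).exists
  have := hδO _ (hq i).1 h1 _ (by rw [← dist_eq_norm]; exact h2)
  exact (hq i).2.2.2 _ ⟨u, w, hu, hw, huw, rfl⟩ this

theorem lower (D : Dyn A T a z zp zt O1 O2) {t : ℝ} (ht : t ∈ Icc 0 T) {α β : ℝ}
    (h : Adm (fun α => z α t) (O2 t) A α β) : cc A T ≤ ‖z α t - z β t‖ := by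
  have hA := D.hA
  have hT := D.hT
  have he : 0 < eps1 A := (D.crv t ht).eps1_pos
  set K := A ^ 2 + 1 with hK
  have hK0 : 0 < K := by positivity
  let Φ : ℝ × ℝ × ℝ → ℝ := fun q => ‖z q.2.1 q.1 - z q.2.2 q.1‖ ^ 2 * Real.exp (2 * K * q.1)
  set c1 := eps1 A / (4 * A) with hc1
  have hc10 : 0 < c1 := by positivity
  -- enough to bound Φ
  suffices H : ∀ q : ℝ × ℝ × ℝ, q.1 ∈ Icc 0 T → Adm (fun α => z α q.1) (O2 q.1) A q.2.1 q.2.2 → c1 ^ 2 ≤ Φ q by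
    have h1 : c1 ^ 2 ≤ ‖z α t - z β t‖ ^ 2 * Real.exp (2 * K * t) := H (t, α, β) ht h
    have h2 : c1 ^ 2 ≤ (‖z α t - z β t‖ * Real.exp (K * t)) ^ 2 := by
      rw [mul_pow, ← Real.exp_nat_mul]
      convert h1 using 3
      push_cast; ring
    have h3 : c1 ≤ ‖z α t - z β t‖ * Real.exp (K * t) :=
      le_of_sq_le_sq h2 (by positivity)
    have h4 : Real.exp (K * t) ≤ Real.exp (K * T) := Real.exp_le_exp.2 (by nlinarith [ht.2])
    have h5 : c1 ≤ ‖z α t - z β t‖ * Real.exp (K * T) := h3.trans (by gcongr)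
    unfold cc
    rw [← hc1, ← hK, Real.exp_neg, ← div_eq_mul_inv, div_le_iff₀ (Real.exp_pos _)]
    exact h5
  let S : Set (ℝ × ℝ × ℝ) := {q | q.1 ∈ Icc 0 T ∧ Adm (fun α => z α q.1) (O2 q.1) A q.2.1 q.2.2} ∩
    (Icc 0 T ×ˢ Icc 0 (2 * Real.pi) ×ˢ Icc (-(8 * A ^ 2)) (2 * Real.pi + 8 * A ^ 2))
  have hSc : IsCompact S :=
    (isCompact_Icc.prod (isCompact_Icc.prod isCompact_Icc)).inter_left D.adm_closed
  have hred : ∀ q : ℝ × ℝ × ℝ, q.1 ∈ Icc 0 T → Adm (fun α => z α q.1) (O2 q.1) A q.2.1 q.2.2 →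
      ∃ q' ∈ S, Φ q' = Φ q ∧ q'.1 = q.1 := by
    rintro ⟨s, γ, γ'⟩ hs had
    simp only at hs had
    obtain ⟨k, hk, -⟩ := existsUnique_add_zsmul_mem_Ico Real.two_pi_pos γ 0
    rw [zsmul_eq_mul, zero_add] at hk
    have had' := D.adm_shift hs k had
    have C := D.crv s hs
    have e1 := C.hperZ k γ
    have e2 := C.hperZ k γ'
    refine ⟨(s, γ + k * (2 * Real.pi), γ' + k * (2 * Real.pi)), ⟨⟨hs, had'⟩, hs, ⟨hk.1, hk.2.le⟩, ?_⟩, ?_, rfl⟩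
    · have := abs_le.1 had'.2.1
      have h1 := hk.1
      have h2 := hk.2
      constructor <;> simp only <;> linarith [this.1, this.2]
    · simp only [Φ]
      rw [e1, e2, add_sub_add_right_eq_sub]
  intro q hq hqa
  obtain ⟨q', hq'S, hq'Φ, -⟩ := hred q hq hqa
  have hcont : ContinuousOn Φ S := by
    intro q0 hq0
    have hval : Tendsto (fun q : S => Φ q) (nhds ⟨q0, hq0⟩) (nhds (Φ q0)) := by
      have l1 : Tendsto (fun q : S => q.1.1) (nhds ⟨q0, hq0⟩) (nhds q0.1) :=
        (by fun_prop : Continuous fun q : S => q.1.1).tendsto _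
      have l2 : Tendsto (fun q : S => q.1.2.1) (nhds ⟨q0, hq0⟩) (nhds q0.2.1) :=
        (by fun_prop : Continuous fun q : S => q.1.2.1).tendsto _
      have l3 : Tendsto (fun q : S => q.1.2.2) (nhds ⟨q0, hq0⟩) (nhds q0.2.2) :=
        (by fun_prop : Continuous fun q : S => q.1.2.2).tendsto _
      have z1 := D.tendsto_z hq0.1.1 (fun i : S => i.2.1.1) l2 l1
      have z2 := D.tendsto_z hq0.1.1 (fun i : S => i.2.1.1) l3 l1
      exact ((z1.sub z2).norm.pow 2).mul ((Real.continuous_exp.tendsto _).comp (l1.const_mul (2 * K)))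
    rw [continuousWithinAt_iff_continuousAt_domRestrict _ hq0]
    exact hval
  obtain ⟨m, hmS, hmin⟩ := hSc.exists_isMinOn ⟨q', hq'S⟩ hcont
  have hminA : ∀ q : ℝ × ℝ × ℝ, q.1 ∈ Icc 0 T → Adm (fun α => z α q.1) (O2 q.1) A q.2.1 q.2.2 → Φ m ≤ Φ q := by
    intro q h1 h2
    obtain ⟨q', h3, h4, -⟩ := hred q h1 h2
    rw [← h4]; exact hmin h3
  refine le_trans ?_ (hminA q hq hqa)
  obtain ⟨s, α', β'⟩ := m
  obtain ⟨⟨hs, had⟩, -⟩ := hmS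
  simp only at hs had
  by_contra! hlt
  have hexp : 1 ≤ Real.exp (2 * K * s) := Real.one_le_exp (by have := hs.1; positivity)
  have hlt' : ‖z α' s - z β' s‖ ^ 2 * Real.exp (2 * K * s) < c1 ^ 2 := hlt
  have hds : ‖z α' s - z β' s‖ < c1 := by
    refine lt_of_pow_lt_pow_left₀ 2 hc10.le (lt_of_le_of_lt ?_ hlt')
    nlinarith [sq_nonneg ‖z α' s - z β' s‖]
  have hs0 : 0 < s := by
    rcases eq_or_lt_of_le hs.1 with h | h
    · exfalso
      rw [← h] at hds had
      have h1 := D.h0 α' β'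
      have h2 : eps1 A / A ≤ |α' - β'| / A := by gcongr; exact had.1
      have h3 : c1 ≤ eps1 A / A := by
        rw [hc1]; gcongr; linarith
      linarith
    · exact h
  have C := D.crv s hs
  have hne : α' ≠ β' := by
    rintro rfl
    have := had.1
    simp at this; linarith
  have hball := C.ball_lemma α' β' had hds (by
    intro γ γ' hg
    have : ‖z α' s - z β' s‖ ^ 2 * Real.exp (2 * K * s) ≤ ‖z γ s - z γ' s‖ ^ 2 * Real.exp (2 * K * s) :=
      hminA (s, γ, γ') hs hg
    exact le_of_sq_le_sq (le_of_mul_le_mul_right this (Real.exp_pos _)) (norm_nonneg _))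
  have hperp := C.perp_lemma α' β' hball
  have hos : openSegment ℝ (z α' s) (z β' s) ⊆ O1 s :=
    (Crv.openSeg_ball _ _ (fun h => hne (C.inj h))).trans hball
  have hv := D.hvel s ⟨hs0, hs.2⟩ α' β' hos hperp.1 hperp.2
  have hder := (hasDerivWithinAt_normSq ((D.hzt s hs α').sub (D.hzt s hs β'))).mul
    (((Real.hasDerivAt_exp (2 * K * s)).comp s ((hasDerivAt_id s).const_mul (2 * K))).hasDerivWithinAt (s := Icc 0 T))
  have hdpos : 0 < ‖z α' s - z β' s‖ := by
    rw [norm_pos_iff, sub_ne_zero]; exact fun h => hne (C.inj h)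
  have hstab := D.seg_stable hs hne hos hperp.1 hperp.2
  rw [hasDerivWithinAt_iff_tendsto_slope] at hder
  have hev := hder.eventually (lt_mem_nhds (a := 0) (by
    have := (abs_le.1 hv).1
    have e := Real.exp_pos (2 * K * s)
    simp only [Function.comp, id, mul_one, Pi.sub_apply]
    have : 0 < (2 * dot (zt α' s - zt β' s) (z α' s - z β' s) + ‖z α' s - z β' s‖ ^ 2 * (2 * K)) * Real.exp (2 * K * s) := by
      apply mul_pos _ e
      rw [hK]; nlinarith [sq_pos_of_pos hdpos]
    linarith))
  have hstab' : ∀ᶠ s' in nhdsWithin s (Icc 0 T \ {s}), ∀ p ∈ segment ℝ (z α' s') (z β' s'), p ∉ O2 s' :=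
    hstab.filter_mono (nhdsWithin_mono _ sdiff_subset)
  have hnb : (nhdsWithin s (Ico 0 s)).NeBot := by
    rw [← mem_closure_iff_nhdsWithin_neBot, closure_Ico hs0.ne]; exact ⟨hs0.le, le_rfl⟩
  have hle : nhdsWithin s (Ico 0 s) ≤ nhdsWithin s (Icc 0 T \ {s}) :=
    nhdsWithin_mono _ (fun x hx => ⟨⟨hx.1, hx.2.le.trans hs.2⟩, hx.2.ne⟩)
  have h3 := ((hev.and hstab').filter_mono hle).and (self_mem_nhdsWithin (s := Ico 0 s) (a := s))
  obtain ⟨s', ⟨hsl, hseg⟩, hs'⟩ := h3.exists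
  have hs'T : s' ∈ Icc 0 T := ⟨hs'.1, hs'.2.le.trans hs.2⟩
  have hfin := hminA (s', α', β') hs'T ⟨had.1, had.2.1, hseg⟩
  rw [slope_def_field] at hsl
  have hneg : s' - s < 0 := by linarith [hs'.2]
  have := (div_pos_iff.1 hsl)
  rcases this with h | h
  · linarith [h.2]
  · have h1 := h.1
    simp only [Φ] at hfin
    simp only [Pi.mul_apply, Pi.sub_apply, Function.comp, id] at h1
    linarith
end Dyn


theorem perp_dir {p e : ℂ} (h : dot p e = 0) (he : ‖e‖ = 1) :
    Complex.I * p = (‖p‖ : ℂ) * e ∨ Complex.I * p = -((‖p‖ : ℂ) * e) := by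
  have h1 : e.re ^ 2 + e.im ^ 2 = 1 := by
    have := dot_self e; rw [he] at this; unfold dot at this; nlinarith
  unfold dot at h
  set c := -p.im * e.re + p.re * e.im with hc
  have hI : Complex.I * p = (c : ℂ) * e := by
    apply Complex.ext
    · simp; rw [hc]; linear_combination p.im * h1 - e.im * h
    · simp; rw [hc]; linear_combination (-p.re) * h1 + e.re * h
  have hn : |c| = ‖p‖ := by
    have := congrArg norm hI
    rw [norm_mul, norm_mul, Complex.norm_I, he, Complex.norm_real, Real.norm_eq_abs] at this
    linarith
  rcases abs_choice c with h | h
  · left; rw [hI, ← hn, h]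
  · right; rw [hI, ← hn, h]; push_cast; ring

namespace Crv
variable {A : ℝ} {z z' : ℝ → ℂ} {O1 O2 : Set ℂ}

theorem graph (C : Crv A z z' O1 O2) {α β γ ρ : ℝ} {e : ℂ} (hp : dot (z' α) e = 0) (h1 : |β - α| ≤ eps1 A)
    (h2 : |γ - β| ≤ eps1 A) (h : z γ = z β + (ρ : ℂ) * e) : γ = β := by
  have hA := C.hA
  by_contra hne
  have h3 : |γ - α| ≤ 2 * eps1 A := by
    have := abs_sub_le γ β α; linarith
  have ht := C.taylor γ β α (2 * eps1 A) h3 (by linarith [C.eps1_pos])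
  rw [h, add_sub_cancel_left] at ht
  have hpos : 0 < |γ - β| := abs_pos.2 (sub_ne_zero.2 hne)
  have hd := dot_abs_le ((ρ : ℂ) * e - ((γ - β : ℝ) : ℂ) * z' α) (z' α)
  have e1 : dot ((ρ : ℂ) * e - ((γ - β : ℝ) : ℂ) * z' α) (z' α) = - ((γ - β) * ‖z' α‖ ^ 2) + ρ * dot (z' α) e := by
    rw [← dot_self]; unfold dot
    simp only [Complex.sub_re, Complex.sub_im, Complex.re_ofReal_mul, Complex.im_ofReal_mul]; ring
  rw [e1, hp, mul_zero, add_zero, abs_neg, abs_mul, abs_of_nonneg (by positivity : 0 ≤ ‖z' α‖ ^ 2)] at hd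
  have hl := C.hlow α
  have hz : 0 < ‖z' α‖ := lt_of_lt_of_le (by positivity) hl
  have h4 : |γ - β| * ‖z' α‖ ^ 2 ≤ A * (2 * eps1 A) * |γ - β| * ‖z' α‖ := hd.trans (by gcongr)
  have h5 : ‖z' α‖ ≤ A * (2 * eps1 A) := by
    have : (|γ - β| * ‖z' α‖) * ‖z' α‖ ≤ (|γ - β| * ‖z' α‖) * (A * (2 * eps1 A)) := by linarith
    exact le_of_mul_le_mul_left this (by positivity)
  have h6 : A * (2 * eps1 A) = A⁻¹ * (1 / 4) := by unfold eps1; field_simp; norm_num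
  have : 0 < A⁻¹ := by positivity
  rw [h6] at h5
  linarith

structure MP (A : ℝ) (z z' : ℝ → ℂ) (O2 : Set ℂ) (α1 α2 : ℝ) : Prop where
  dpos : 0 < ‖z α2 - z α1‖
  near : ∀ γ γ', ‖z γ - z γ'‖ < ‖z α2 - z α1‖ → |γ - γ'| < eps1 A
  perp : dot (z' α1) (z α2 - z α1) = 0
  seg : openSegment ℝ (z α1) (z α2) ⊆ O2

theorem strip_pre (C : Crv A z z' O1 O2) (α w r : ℝ) (e : ℂ) :
    IsPreconnected ((fun q : ℝ × ℝ => z q.1 + (q.2 : ℂ) * e) '' (Metric.closedBall α w ×ˢ Ioo 0 r)) := by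
  apply IsPreconnected.image
  · exact ((convex_closedBall α w).prod (convex_Ioo 0 r)).isPreconnected
  · have := C.cont
    exact Continuous.continuousOn (by fun_prop)

theorem collar2 (C : Crv A z z' O1 O2) {α1 α2 w : ℝ} (M : MP A z z' O2 α1 α2) (hw0 : 0 < w) (hw : w ≤ eps1 A)
    {β ρ : ℝ} (hβ : |β - α1| ≤ w) (hρ : 0 < ρ) (hρd : ρ < ‖z α2 - z α1‖) :
    z β + (ρ : ℂ) * ((z α2 - z α1) / (‖z α2 - z α1‖ : ℂ)) ∈ O2 := by
  set d := ‖z α2 - z α1‖ with hd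
  have hd0 : 0 < d := M.dpos
  have hdC : (d : ℂ) ≠ 0 := by exact_mod_cast hd0.ne'
  set e := (z α2 - z α1) / (d : ℂ) with he
  have hen : ‖e‖ = 1 := by
    rw [he, norm_div, Complex.norm_real, ← hd, Real.norm_eq_abs, abs_of_pos hd0, div_self hd0.ne']
  have hpe : dot (z' α1) e = 0 := by
    have : e = ((d⁻¹ : ℝ) : ℂ) * (z α2 - z α1) := by rw [he]; push_cast; field_simp
    have h1 := M.perp
    rw [this]; unfold dot at *
    simp only [Complex.re_ofReal_mul, Complex.im_ofReal_mul]
    linear_combination d⁻¹ * h1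
  refine C.side2 (C.strip_pre α1 w d e) ?_ ?_ ⟨(β, ρ), ⟨by rw [Metric.mem_closedBall, Real.dist_eq]; exact hβ, hρ, hρd⟩, rfl⟩
  · rintro _ ⟨⟨b, r⟩, ⟨hb, hr0, hrd⟩, rfl⟩ ⟨γ, hγ⟩
    simp only at hγ hr0 hrd
    rw [Metric.mem_closedBall, Real.dist_eq] at hb
    have hn : |γ - b| < eps1 A := by
      apply M.near
      rw [hγ, add_sub_cancel_left, norm_mul, hen, Complex.norm_real, Real.norm_eq_abs, abs_of_pos hr0, mul_one]
      exact hrd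
    have := C.graph hpe (hb.trans hw) hn.le hγ
    rw [this] at hγ
    have h0 : (r : ℂ) * e = 0 := by simpa using hγ
    rcases mul_eq_zero.1 h0 with h | h
    · exact hr0.ne' (by exact_mod_cast h)
    · rw [h] at hen; simp at hen
  · refine ⟨z α1 + ((d / 2 : ℝ) : ℂ) * e, ⟨(α1, d / 2), ⟨by simpa using hw0.le, by simp only; constructor <;> linarith⟩, rfl⟩, M.seg ?_⟩
    refine ⟨1 / 2, 1 / 2, by norm_num, by norm_num, by norm_num, ?_⟩
    rw [he, Complex.real_smul, Complex.real_smul]; push_cast; field_simp; ring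

theorem unit_e {α1 α2 : ℝ} (M : MP A z z' O2 α1 α2) :
    ‖(z α2 - z α1) / (‖z α2 - z α1‖ : ℂ)‖ = 1 ∧ dot (z' α1) ((z α2 - z α1) / (‖z α2 - z α1‖ : ℂ)) = 0 := by
  have hd0 : 0 < ‖z α2 - z α1‖ := M.dpos
  have hdC : (‖z α2 - z α1‖ : ℂ) ≠ 0 := by exact_mod_cast hd0.ne'
  constructor
  · rw [norm_div, Complex.norm_real, norm_norm, div_self hd0.ne']
  · have : (z α2 - z α1) / (‖z α2 - z α1‖ : ℂ) = ((‖z α2 - z α1‖⁻¹ : ℝ) : ℂ) * (z α2 - z α1) := by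
      push_cast; field_simp
    have h1 := M.perp
    rw [this]; unfold dot at *
    simp only [Complex.re_ofReal_mul, Complex.im_ofReal_mul]
    linear_combination ‖z α2 - z α1‖⁻¹ * h1

theorem dirA (C : Crv A z z' O1 O2) {α1 α2 : ℝ} (M : MP A z z' O2 α1 α2) (h : ∃ δ > 0, Sd z z' O1 O2 δ α1) :
    Complex.I * z' α1 = -((‖z' α1‖ : ℂ) * ((z α2 - z α1) / (‖z α2 - z α1‖ : ℂ))) := by
  obtain ⟨δ, hδ, hS⟩ := h
  obtain ⟨h1, h2⟩ := unit_e M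
  rcases perp_dir h2 h1 with h | h
  · exfalso
    have hz : 0 < ‖z' α1‖ := lt_of_lt_of_le (by have := C.hA; positivity) (C.hlow α1)
    have hd := M.dpos
    obtain ⟨ρ, hρ0, hρ⟩ := exists_between (lt_min hδ (div_pos hd hz))
    have hρ1 := lt_of_lt_of_le hρ (min_le_left _ _)
    have hρ2 := lt_of_lt_of_le hρ (min_le_right _ _)
    rw [lt_div_iff₀ hz] at hρ2
    have k1 := (hS α1 ρ (Complex.I * z' α1) (by simpa using hδ) hρ0 hρ1 (by simpa using hδ)).1
    have k2 := C.collar2 M C.eps1_pos le_rfl (β := α1) (ρ := ρ * ‖z' α1‖) (by simpa using C.eps1_pos.le) (by positivity) hρ2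
    rw [h] at k1
    refine Set.disjoint_left.1 C.d12 k1 ?_
    convert k2 using 2; push_cast; ring
  · exact h

theorem dirB (C : Crv A z z' O1 O2) {α1 α2 : ℝ} (M : MP A z z' O2 α1 α2) (h : ∃ δ > 0, Sd z z' O2 O1 δ α1) :
    Complex.I * z' α1 = ((‖z' α1‖ : ℂ) * ((z α2 - z α1) / (‖z α2 - z α1‖ : ℂ))) := by
  obtain ⟨δ, hδ, hS⟩ := h
  obtain ⟨h1, h2⟩ := unit_e M
  rcases perp_dir h2 h1 with h | h
  · exact h
  · exfalso
    have hz : 0 < ‖z' α1‖ := lt_of_lt_of_le (by have := C.hA; positivity) (C.hlow α1)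
    have hd := M.dpos
    obtain ⟨ρ, hρ0, hρ⟩ := exists_between (lt_min hδ (div_pos hd hz))
    have hρ1 := lt_of_lt_of_le hρ (min_le_left _ _)
    have hρ2 := lt_of_lt_of_le hρ (min_le_right _ _)
    rw [lt_div_iff₀ hz] at hρ2
    have k1 := (hS α1 ρ (Complex.I * z' α1) (by simpa using hδ) hρ0 hρ1 (by simpa using hδ)).2
    have k2 := C.collar2 M C.eps1_pos le_rfl (β := α1) (ρ := ρ * ‖z' α1‖) (by simpa using C.eps1_pos.le) (by positivity) hρ2
    rw [h] at k1
    refine Set.disjoint_left.1 C.d12 k1 ?_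
    convert k2 using 2; push_cast; ring

theorem out1 (C : Crv A z z' O1 O2) {α1 α2 : ℝ} (M : MP A z z' O2 α1 α2) :
    ∃ δ > 0, ∀ ρ : ℝ, 0 < ρ → ρ < δ → z α1 - (ρ : ℂ) * ((z α2 - z α1) / (‖z α2 - z α1‖ : ℂ)) ∈ O1 := by
  have hz : 0 < ‖z' α1‖ := lt_of_lt_of_le (by have := C.hA; positivity) (C.hlow α1)
  have hzC : (‖z' α1‖ : ℂ) ≠ 0 := by exact_mod_cast hz.ne'
  rcases C.orient with h | h
  · have hd := C.dirA M (h α1)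
    obtain ⟨δ, hδ, hS⟩ := h α1
    refine ⟨δ * ‖z' α1‖, by positivity, fun ρ h1 h2 => ?_⟩
    have k1 := (hS α1 (ρ / ‖z' α1‖) (Complex.I * z' α1) (by simpa using hδ) (by positivity)
      (by rw [div_lt_iff₀ hz]; exact h2) (by simpa using hδ)).1
    rw [hd] at k1
    convert k1 using 1; push_cast; field_simp; ring
  · have hd := C.dirB M (h α1)
    obtain ⟨δ, hδ, hS⟩ := h α1
    refine ⟨δ * ‖z' α1‖, by positivity, fun ρ h1 h2 => ?_⟩
    have k1 := (hS α1 (ρ / ‖z' α1‖) (Complex.I * z' α1) (by simpa using hδ) (by positivity)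
      (by rw [div_lt_iff₀ hz]; exact h2) (by simpa using hδ)).2
    rw [hd] at k1
    convert k1 using 1; push_cast; field_simp

theorem anti (C : Crv A z z' O1 O2) {α1 α2 : ℝ} (M : MP A z z' O2 α1 α2) (M' : MP A z z' O2 α2 α1) :
    dot (z' α1) (z' α2) < 0 := by
  have hz1 : 0 < ‖z' α1‖ := lt_of_lt_of_le (by have := C.hA; positivity) (C.hlow α1)
  have hz2 : 0 < ‖z' α2‖ := lt_of_lt_of_le (by have := C.hA; positivity) (C.hlow α2)
  have he : (z α1 - z α2) / (‖z α1 - z α2‖ : ℂ) = -((z α2 - z α1) / (‖z α2 - z α1‖ : ℂ)) := by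
    rw [norm_sub_rev, ← neg_div, neg_sub]
  obtain ⟨hu, -⟩ := unit_e M
  set e := (z α2 - z α1) / (‖z α2 - z α1‖ : ℂ)
  have hI : dot (z' α1) (z' α2) = dot (Complex.I * z' α1) (Complex.I * z' α2) := by
    unfold dot; simp; ring
  have hs := dot_self e
  rw [hu] at hs
  have key : dot (z' α1) (z' α2) = -(‖z' α1‖ * ‖z' α2‖) := by
    rcases C.orient with h | h
    · have h1 := C.dirA M (h α1)
      have h2 := C.dirA M' (h α2)
      rw [he] at h2
      rw [hI, h1, h2]
      have : dot (-((‖z' α1‖ : ℂ) * e)) (-((‖z' α2‖ : ℂ) * -e)) = -(‖z' α1‖ * ‖z' α2‖) * dot e e := by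
        unfold dot; simp only [mul_neg, neg_neg, Complex.neg_re, Complex.neg_im, Complex.re_ofReal_mul, Complex.im_ofReal_mul]; ring
      rw [this, hs]; ring
    · have h1 := C.dirB M (h α1)
      have h2 := C.dirB M' (h α2)
      rw [he] at h2
      rw [hI, h1, h2]
      have : dot (((‖z' α1‖ : ℂ) * e)) (((‖z' α2‖ : ℂ) * -e)) = -(‖z' α1‖ * ‖z' α2‖) * dot e e := by
        unfold dot; simp only [mul_neg, Complex.neg_re, Complex.neg_im, Complex.re_ofReal_mul, Complex.im_ofReal_mul]; ring
      rw [this, hs]; ring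
  rw [key]
  have := mul_pos hz1 hz2
  linarith

theorem collar1 (C : Crv A z z' O1 O2) {α1 α2 w c0 : ℝ} (M : MP A z z' O2 α1 α2)
    (hD : ∀ α β, Adm z O2 A α β → c0 ≤ ‖z α - z β‖) (hw0 : 0 < w)
    (hw : w ≤ eps1 A / (2 * A)) (hwc : w ≤ c0)
    {β ρ : ℝ} (hβ : |β - α1| ≤ w) (hρ : 0 < ρ) (hρd : ρ < w) :
    z β - (ρ : ℂ) * ((z α2 - z α1) / (‖z α2 - z α1‖ : ℂ)) ∈ O1 := by
  have hA := C.hA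
  have he1 := C.eps1_pos
  have he8 := C.eps1_le
  have hwe : w ≤ eps1 A := hw.trans (div_le_self he1.le (by linarith))
  obtain ⟨δ, hδ, hout⟩ := C.out1 M
  obtain ⟨hu, hpe⟩ := unit_e M
  have hd0 := M.dpos
  set e := (z α2 - z α1) / (‖z α2 - z α1‖ : ℂ)
  have he0 : e ≠ 0 := by intro h; rw [h] at hu; simp at hu
  have hpe' : dot (z' α1) (-e) = 0 := by
    unfold dot at *; simp only [Complex.neg_re, Complex.neg_im]; linarith
  -- thin collar
  have thin : ∀ b r : ℝ, |b - α1| ≤ w → 0 < r → r < ‖z α2 - z α1‖ → z b - (r : ℂ) * e ∈ O1 := by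
    intro b r hb hr0 hrd
    have := C.side1 (C.strip_pre α1 w ‖z α2 - z α1‖ (-e)) ?_ ?_ ⟨(b, r), ⟨by rw [Metric.mem_closedBall, Real.dist_eq]; exact hb, hr0, hrd⟩, rfl⟩
    · simpa [sub_eq_add_neg] using this
    · rintro _ ⟨⟨b, r⟩, ⟨hb, hr0, hrd⟩, rfl⟩ ⟨γ, hγ⟩
      simp only at hγ hr0 hrd
      rw [Metric.mem_closedBall, Real.dist_eq] at hb
      have hn : |γ - b| < eps1 A := by
        apply M.near
        rw [hγ, add_sub_cancel_left, norm_mul, norm_neg, hu, Complex.norm_real, Real.norm_eq_abs, abs_of_pos hr0, mul_one]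
        exact hrd
      have := C.graph hpe' (hb.trans hwe) hn.le hγ
      rw [this] at hγ
      have h0 : (r : ℂ) * -e = 0 := by simpa using hγ
      rcases mul_eq_zero.1 h0 with h | h
      · exact hr0.ne' (by exact_mod_cast h)
      · exact he0 (neg_eq_zero.1 h)
    · obtain ⟨r, hr0, hr⟩ := exists_between (lt_min hδ hd0)
      refine ⟨z α1 + (r : ℂ) * (-e), ⟨(α1, r), ⟨by simpa using hw0.le, hr0, lt_of_lt_of_le hr (min_le_right _ _)⟩, rfl⟩, ?_⟩
      have := hout r hr0 (lt_of_lt_of_le hr (min_le_left _ _))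
      simpa [sub_eq_add_neg] using this
  rcases lt_or_ge ρ ‖z α2 - z α1‖ with hlt | hge
  · exact thin β ρ hβ hρ hlt
  have hcl : IsClosed (range z) := C.proper.isClosedMap.isClosed_range
  have hcm : Continuous fun r : ℝ => z β - (r : ℂ) * e := by fun_prop
  have off : ∀ r ∈ Icc (‖z α2 - z α1‖ / 2) ρ, z β - (r : ℂ) * e ∉ range z := by
    by_contra! hcon
    obtain ⟨r1, hr1, hr1G⟩ := hcon
    have hcomp : IsCompact (Icc (‖z α2 - z α1‖ / 2) ρ ∩ (fun r : ℝ => z β - (r : ℂ) * e) ⁻¹' range z) :=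
      isCompact_Icc.inter_right (hcl.preimage hcm)
    obtain ⟨r0, ⟨hr0, γ, hγ⟩, hmin⟩ := hcomp.exists_isLeast ⟨r1, hr1, hr1G⟩
    simp only at hγ
    have hr00 : 0 < r0 := by linarith [hr0.1]
    have hin : ∀ r ∈ Ioo 0 r0, z β - (r : ℂ) * e ∈ O1 := by
      have := C.side1 (S := (fun r : ℝ => z β - (r : ℂ) * e) '' Ioo 0 r0)
        (isPreconnected_Ioo.image _ hcm.continuousOn) ?_ ?_
      · exact fun r hr => this ⟨r, hr, rfl⟩
      · rintro _ ⟨r, hr, rfl⟩ hG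
        rcases lt_or_ge r (‖z α2 - z α1‖ / 2) with h | h
        · exact Set.disjoint_left.1 C.d1 (thin β r hβ hr.1 (by linarith)) hG
        · have := hmin ⟨⟨h, hr.2.le.trans hr0.2⟩, hG⟩
          linarith [hr.2]
      · obtain ⟨r, h1, h2⟩ := exists_between (lt_min hr00 hd0)
        exact ⟨_, ⟨r, ⟨h1, lt_of_lt_of_le h2 (min_le_left _ _)⟩, rfl⟩, thin β r hβ h1 (lt_of_lt_of_le h2 (min_le_right _ _))⟩
    have hnorm : ‖z γ - z β‖ = r0 := by
      rw [hγ, sub_sub_cancel_left, norm_neg, norm_mul, hu, Complex.norm_real, Real.norm_eq_abs, abs_of_pos hr00, mul_one]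
    have hr0w : r0 < w := lt_of_le_of_lt hr0.2 hρd
    have hsep : 4 * eps1 A < |γ - β| := by
      rcases C.near_or (α := γ) (β := β) (by rw [hnorm]; linarith) with h | h
      · exfalso
        have := C.graph hpe' (hβ.trans hwe) h.le (γ := γ) (ρ := r0) (by rw [hγ]; ring)
        rw [this, sub_self, norm_zero] at hnorm
        linarith
      · exact h
    have had : Adm z O2 A γ β := by
      refine ⟨by linarith, ?_, ?_⟩
      · have := C.far_le (α := γ) (β := β) (by rw [hnorm]; linarith)
        nlinarith
      · intro p hp hpO
        rw [← insert_endpoints_openSegment] at hp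
        rcases hp with rfl | rfl | hp
        · exact Set.disjoint_left.1 C.d2 hpO ⟨γ, rfl⟩
        · exact Set.disjoint_left.1 C.d2 hpO ⟨β, rfl⟩
        · refine Set.disjoint_left.1 C.d12 ?_ hpO
          obtain ⟨u, v, hu', hv', huv, rfl⟩ := hp
          have := hin (u * r0) ⟨by positivity, by nlinarith⟩
          refine mem_of_eq_of_mem ?_ this
          rw [hγ, Complex.real_smul, Complex.real_smul]
          have : v = 1 - u := by linarith
          rw [this]; push_cast; ring
    have := hD _ _ had
    rw [hnorm] at this
    linarith
  have := C.side1 (S := (fun r : ℝ => z β - (r : ℂ) * e) '' Icc (‖z α2 - z α1‖ / 2) ρ)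
    (isPreconnected_Icc.image _ hcm.continuousOn) ?_ ?_
  · exact this ⟨ρ, ⟨by linarith, le_rfl⟩, rfl⟩
  · rintro _ ⟨r, hr, rfl⟩ hG
    exact off r hr hG
  · exact ⟨_, ⟨‖z α2 - z α1‖ / 2, ⟨le_rfl, by linarith⟩, rfl⟩, thin β _ hβ (by positivity) (by linarith)⟩

theorem exists_min (C : Crv A z z' O1 O2) : ∃ α1 α2, (eps1 A ≤ |α1 - α2| ∧ |α1 - α2| ≤ 8 * A ^ 2) ∧
    ∀ α β, eps1 A ≤ |α - β| → |α - β| ≤ 8 * A ^ 2 → ‖z α1 - z α2‖ ≤ ‖z α - z β‖ := by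
  have hA := C.hA
  have hc := C.cont
  have he1 := C.eps1_pos
  have he8 := C.eps1_le
  let S : Set (ℝ × ℝ) := (Icc 0 (2 * Real.pi) ×ˢ Icc (-(8 * A ^ 2)) (2 * Real.pi + 8 * A ^ 2)) ∩
    {q | eps1 A ≤ |q.1 - q.2| ∧ |q.1 - q.2| ≤ 8 * A ^ 2}
  have hS : IsCompact S := by
    refine (isCompact_Icc.prod isCompact_Icc).inter_right ?_
    exact (isClosed_le (f := fun q : ℝ × ℝ => eps1 A) (g := fun q => |q.1 - q.2|) (by fun_prop) (by fun_prop)).inter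
      (isClosed_le (f := fun q : ℝ × ℝ => |q.1 - q.2|) (g := fun q => 8 * A ^ 2) (by fun_prop) (by fun_prop))
  have hne : S.Nonempty := by
    refine ⟨(0, eps1 A), ⟨⟨⟨le_rfl, Real.two_pi_pos.le⟩, ?_, ?_⟩, ?_, ?_⟩⟩
    · simp only; nlinarith
    · simp only; nlinarith [Real.two_pi_pos]
    · simp [abs_of_pos he1]
    · simp only [zero_sub, abs_neg, abs_of_pos he1]; nlinarith
  obtain ⟨m, hm, hmin⟩ := hS.exists_isMinOn hne (f := fun q => ‖z q.1 - z q.2‖) (Continuous.continuousOn (by fun_prop))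
  refine ⟨m.1, m.2, hm.2, fun γ γ' h1 h2 => ?_⟩
  obtain ⟨k, hk, -⟩ := existsUnique_add_zsmul_mem_Ico Real.two_pi_pos γ 0
  rw [zsmul_eq_mul, zero_add] at hk
  have e1 := C.hperZ k γ
  have e2 := C.hperZ k γ'
  have hq : (γ + k * (2 * Real.pi), γ' + k * (2 * Real.pi)) ∈ S := by
    refine ⟨⟨⟨hk.1, hk.2.le⟩, ?_⟩, ?_, ?_⟩
    · have := abs_le.1 h2
      have h1 := hk.1
      have h2 := hk.2
      constructor <;> simp only <;> linarith [this.1, this.2]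
    · simpa using h1
    · simpa using h2
  have := hmin hq
  simp only [mem_ofPred_eq] at this
  rwa [e1, e2, add_sub_add_right_eq_sub] at this

theorem exists_MP (C : Crv A z z' O1 O2) {c0 ε4 ε : ℝ}
    (hD : ∀ α β, Adm z O2 A α β → c0 ≤ ‖z α - z β‖) (hε : ε ≤ ε4)
    (h41 : 4 * A ^ 2 * ε4 < eps1 A / (2 * A)) (h42 : 4 * A ^ 2 * ε4 < c0) 
    (hF1 : ∀ α β, ε * |α - β| ≤ ‖z α - z β‖)
    (hF2 : ∀ η > 0, η < 1 / (4 * A) → ∃ α β, α ≠ β ∧ ‖z α - z β‖ < (ε + η) * |α - β|) :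
    ∃ α1 α2, MP A z z' O2 α1 α2 ∧ MP A z z' O2 α2 α1 ∧ 2 * eps1 A ≤ |α1 - α2| ∧ |α1 - α2| ≤ 4 * A ^ 2 ∧
      (∀ α β, eps1 A ≤ |α - β| → |α - β| ≤ 8 * A ^ 2 → ‖z α1 - z α2‖ ≤ ‖z α - z β‖) ∧
      2 * eps1 A * ε ≤ ‖z α1 - z α2‖ ∧ ‖z α1 - z α2‖ ≤ 4 * A ^ 2 * ε := by
  have hA := C.hA
  have he1 := C.eps1_pos
  have he8 := C.eps1_le
  obtain ⟨α1, α2, ⟨hs1, hs2⟩, hmin⟩ := C.exists_min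
  have h41' : 4 * A ^ 2 * ε4 * (2 * A) < eps1 A := by rwa [lt_div_iff₀ (by positivity)] at h41
  have hεA : ε ≤ 1 / (4 * A) := by
    rw [le_div_iff₀ (by positivity)]
    rcases le_total ε 0 with h | h
    · nlinarith
    · have : ε * (4 * A) ≤ 4 * A ^ 2 * ε4 * (2 * A) := by
        have : ε * (4 * A) ≤ ε4 * (4 * A) := by gcongr
        have h4 : 0 ≤ ε4 := h.trans hε
        refine this.trans ?_
        have : 1 ≤ A ^ 2 := one_le_pow₀ hA
        nlinarith [mul_nonneg h4 (by linarith : 0 ≤ A)]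
      linarith
  have hde : ‖z α1 - z α2‖ ≤ 4 * A ^ 2 * ε := by
    apply le_of_forall_pos_le_add
    intro κ hκ
    obtain ⟨η, hη0, hη⟩ := exists_between (lt_min (by positivity : (0 : ℝ) < κ / (4 * A ^ 2)) (by positivity : 0 < 1 / (4 * A)))
    obtain ⟨α, β, hne, hlt⟩ := hF2 η hη0 (lt_of_lt_of_le hη (min_le_right _ _))
    have hη1 := lt_of_lt_of_le hη (min_le_left _ _)
    have hη2 := lt_of_lt_of_le hη (min_le_right _ _)
    rw [lt_div_iff₀ (by positivity)] at hη1
    have hs : 0 < |α - β| := abs_pos.2 (sub_ne_zero.2 hne)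
    have hεη : (ε + η) * (2 * A) < 1 := by
      have : ε + η < 1 / (4 * A) + 1 / (4 * A) := by linarith
      have e : (1 / (4 * A) + 1 / (4 * A)) * (2 * A) = 1 := by field_simp; norm_num
      rw [← e]; exact mul_lt_mul_of_pos_right this (by positivity)
    have h4 : 4 * eps1 A < |α - β| := by
      by_contra! h
      have := C.chord4 h
      nlinarith
    have hpos : 0 < ε + η := by
      by_contra! h
      have := norm_nonneg (z α - z β)
      nlinarith
    have h5 : |α - β| ≤ 4 * A ^ 2 := by
      have := C.far α β
      have : (ε + η) ≤ 1 / 2 := by nlinarith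
      nlinarith
    have h6 := hmin α β (by linarith) (by nlinarith)
    have h7 : (ε + η) * |α - β| ≤ (ε + η) * (4 * A ^ 2) := by gcongr
    nlinarith
  have hd4 : ‖z α1 - z α2‖ ≤ 4 * A ^ 2 * ε4 := hde.trans (by gcongr)
  have hd1 : ‖z α1 - z α2‖ ≤ 1 := by
    have : eps1 A / (2 * A) ≤ eps1 A := div_le_self he1.le (by linarith)
    linarith
  have hsep : 4 * eps1 A < |α1 - α2| := by
    rcases C.near_or (α := α1) (β := α2) (by linarith) with h | h
    · linarith
    · exact h
  have hfar := C.far_le hd1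
  have hne : α1 ≠ α2 := by rintro rfl; simp at hsep; linarith
  have hdpos : 0 < ‖z α1 - z α2‖ := by
    rw [norm_pos_iff, sub_ne_zero]; exact fun h => hne (C.inj h)
  have hnear : ∀ γ γ', ‖z γ - z γ'‖ < ‖z α1 - z α2‖ → |γ - γ'| < eps1 A := by
    intro γ γ' h
    by_contra! hc
    have h1 := C.far_le (α := γ) (β := γ') (by linarith)
    have := hmin γ γ' hc (by nlinarith)
    linarith
  have hA2 : 1 ≤ A ^ 2 := one_le_pow₀ hA
  have hev : ∀ (x y : ℝ), 4 * eps1 A < |x - y| → |x - y| ≤ 4 * A ^ 2 → ∀ᶠ s in nhds x, eps1 A ≤ |s - y| ∧ |s - y| ≤ 8 * A ^ 2 := by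
    intro x y h1 h2
    have hcc : Continuous fun s : ℝ => |s - y| := by fun_prop
    have a1 := (hcc.tendsto x).eventually (lt_mem_nhds (show eps1 A < |x - y| by linarith))
    have a2 := (hcc.tendsto x).eventually (gt_mem_nhds (show |x - y| < 8 * A ^ 2 by linarith))
    filter_upwards [a1, a2] with s b1 b2 using ⟨b1.le, b2.le⟩
  have p1 : dot (z' α1) (z α1 - z α2) = 0 := by
    refine perp_of_min (C.hd α1) ?_
    filter_upwards [hev α1 α2 hsep hfar] with s hs
    exact pow_le_pow_left₀ (norm_nonneg _) (hmin s α2 hs.1 hs.2) 2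
  have p2 : dot (z' α2) (z α2 - z α1) = 0 := by
    refine perp_of_min (C.hd α2) ?_
    filter_upwards [hev α2 α1 (by rwa [abs_sub_comm]) (by rwa [abs_sub_comm])] with s hs
    rw [norm_sub_rev (z α2)]
    exact pow_le_pow_left₀ (norm_nonneg _) (by rw [norm_sub_rev (z s)]; exact hmin α1 s (by rw [abs_sub_comm]; exact hs.1) (by rw [abs_sub_comm]; exact hs.2)) 2
  have hdn : ∀ x y w : ℂ, dot w (x - y) = 0 → dot w (y - x) = 0 := by
    intro x y w h; unfold dot at *; simp only [Complex.sub_re, Complex.sub_im] at *; linarith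
  have hoff : ∀ p ∈ openSegment ℝ (z α1) (z α2), p ∉ range z := by
    rintro p ⟨u, v, hu, hv, huv, rfl⟩ ⟨γ, hγ⟩
    have hu' : u = 1 - v := by linarith
    have n1 : ‖z γ - z α1‖ < ‖z α1 - z α2‖ := by
      have : z γ - z α1 = -((v : ℂ) * (z α1 - z α2)) := by
        rw [hγ, Complex.real_smul, Complex.real_smul, hu']; push_cast; ring
      rw [this, norm_neg, norm_mul, Complex.norm_real, Real.norm_eq_abs, abs_of_pos hv]; nlinarith
    have n2 : ‖z γ - z α2‖ < ‖z α1 - z α2‖ := by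
      have : z γ - z α2 = ((u : ℂ) * (z α1 - z α2)) := by
        rw [hγ, Complex.real_smul, Complex.real_smul, hu']; push_cast; ring
      rw [this, norm_mul, Complex.norm_real, Real.norm_eq_abs, abs_of_pos hu]; nlinarith
    have m1 := hnear _ _ n1
    have m2 := hnear _ _ n2
    have := abs_sub_le α1 γ α2
    rw [abs_sub_comm α1 γ] at this
    linarith
  have hmid : midpoint ℝ (z α1) (z α2) ∈ openSegment ℝ (z α1) (z α2) := by
    rw [midpoint_eq_smul_add]
    exact ⟨2⁻¹, 2⁻¹, by norm_num, by norm_num, by norm_num, by simp [invOf_eq_inv]⟩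
  have hseg : openSegment ℝ (z α1) (z α2) ⊆ O2 := by
    have hm := C.hun.symm ▸ mem_univ (midpoint ℝ (z α1) (z α2))
    rcases hm with (hm | hm) | hm
    · exfalso
      have hO := C.side1 (convex_openSegment _ _).isPreconnected hoff ⟨_, hmid, hm⟩
      have had : Adm z O2 A α1 α2 := by
        refine ⟨hs1, hs2, fun p hp hpO => ?_⟩
        rw [← insert_endpoints_openSegment] at hp
        rcases hp with rfl | rfl | hp
        · exact Set.disjoint_left.1 C.d2 hpO ⟨α1, rfl⟩
        · exact Set.disjoint_left.1 C.d2 hpO ⟨α2, rfl⟩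
        · exact Set.disjoint_left.1 C.d12 (hO hp) hpO
      have := hD _ _ had
      linarith
    · exact C.side2 (convex_openSegment _ _).isPreconnected hoff ⟨_, hmid, hm⟩
    · exact absurd hm (hoff _ hmid)
  refine ⟨α1, α2, ⟨?_, ?_, hdn _ _ _ p1, hseg⟩, ⟨hdpos, hnear, hdn _ _ _ p2, ?_⟩, by linarith, hfar, hmin, ?_, hde⟩
  · rwa [norm_sub_rev]
  · rwa [norm_sub_rev]
  · rwa [openSegment_symm]
  · have h := hF1 α1 α2
    rcases le_total ε 0 with h' | h'
    · have : 2 * eps1 A * ε ≤ 0 := by nlinarith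
      linarith
    · nlinarith
end Crv


theorem circle_low {h : ℂ → ℂ} {U : Set ℂ} (hU : IsOpen U) (hh : DifferentiableOn ℂ h U) {w : ℂ}
    (hw : Metric.closedBall w 1 ⊆ U) {r : ℝ} (hr : r ∈ Ioo (0 : ℝ) 1) :
    ENNReal.ofReal (2 * Real.pi * ‖h w‖) ≤ ∫⁻ θ in Ioo (-Real.pi) Real.pi, ‖h (circleMap w r θ)‖ₑ := by
  have hc : DiffContOnCl ℂ h (Metric.ball w |r|) := by
    apply DifferentiableOn.diffContOnCl
    apply hh.mono
    refine (Metric.closure_ball_subset_closedBall).trans ((Metric.closedBall_subset_closedBall ?_).trans hw)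
    rw [abs_of_pos hr.1]; exact hr.2.le
  have h1 := hc.circleAverage
  rw [Real.circleAverage_def] at h1
  have hp : Function.Periodic (fun θ => h (circleMap w r θ)) (2 * Real.pi) := fun θ => by
    simp only; rw [periodic_circleMap]
  have h2 := hp.intervalIntegral_add_eq 0 (-Real.pi)
  rw [zero_add, show -Real.pi + 2 * Real.pi = Real.pi by ring] at h2
  rw [h2, intervalIntegral.integral_of_le (by linarith [Real.pi_pos]), integral_Ioc_eq_integral_Ioo] at h1
  refine le_trans (le_of_eq ?_) (enorm_integral_le_lintegral_enorm _)
  rw [← h1, ← ofReal_norm, norm_smul, Real.norm_eq_abs, abs_of_pos (by positivity)]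
  congr 1
  field_simp

theorem area_low {h : ℂ → ℂ} {U : Set ℂ} (hU : IsOpen U) (hh : DifferentiableOn ℂ h U) {w : ℂ}
    (hw : Metric.closedBall w 1 ⊆ U) :
    ENNReal.ofReal (Real.pi / 2 * ‖h w‖) ≤ ∫⁻ x in Metric.ball w 1, ‖h x‖ₑ := by
  have e1 : ∫⁻ x in Metric.ball w 1, ‖h x‖ₑ = ∫⁻ x, (Metric.ball w 1).indicator (fun x => ‖h x‖ₑ) (w + x) := by
    rw [lintegral_add_left_eq_self (fun x => (Metric.ball w 1).indicator (fun x => ‖h x‖ₑ) x) w,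
      lintegral_indicator Metric.isOpen_ball.measurableSet]
  rw [e1, ← Complex.lintegral_comp_polarCoord_symm]
  have hsub : Ioo (1 / 2 : ℝ) 1 ×ˢ Ioo (-Real.pi) Real.pi ⊆ polarCoord.target := by
    rw [polarCoord_target]
    exact prod_mono (fun x hx => lt_trans (by norm_num) hx.1) le_rfl
  refine le_trans ?_ (lintegral_mono_set hsub)
  have e2 : ∫⁻ p in Ioo (1 / 2 : ℝ) 1 ×ˢ Ioo (-Real.pi) Real.pi, ENNReal.ofReal (1 / 2) * ‖h (circleMap w p.1 p.2)‖ₑ ≤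
      ∫⁻ p in Ioo (1 / 2 : ℝ) 1 ×ˢ Ioo (-Real.pi) Real.pi, ENNReal.ofReal p.1 •
        (Metric.ball w 1).indicator (fun x => ‖h x‖ₑ) (w + Complex.polarCoord.symm p) := by
    refine setLIntegral_mono' (measurableSet_Ioo.prod measurableSet_Ioo) ?_
    rintro ⟨r, θ⟩ ⟨hr, hθ⟩
    simp only at hr hθ
    have hpt : w + Complex.polarCoord.symm (r, θ) = circleMap w r θ := by
      rw [Complex.polarCoord_symm_apply, circleMap, Complex.exp_mul_I]; push_cast; rfl
    rw [hpt, indicator_of_mem, smul_eq_mul]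
    · gcongr; exact hr.1.le
    · rw [Metric.mem_ball, dist_eq_norm, circleMap_sub_center, norm_circleMap_zero, abs_of_pos (by linarith [hr.1])]
      exact hr.2
  refine le_trans ?_ e2
  rw [Measure.volume_eq_prod, ← Measure.prod_restrict, lintegral_prod]
  · have e3 : ∀ r ∈ Ioo (1 / 2 : ℝ) 1, ENNReal.ofReal (1 / 2) * ENNReal.ofReal (2 * Real.pi * ‖h w‖) ≤
        ∫⁻ θ in Ioo (-Real.pi) Real.pi, ENNReal.ofReal (1 / 2) * ‖h (circleMap w r θ)‖ₑ := by
      intro r hr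
      rw [lintegral_const_mul' _ _ ENNReal.ofReal_ne_top]
      gcongr
      exact circle_low hU hh hw ⟨by linarith [hr.1], hr.2⟩
    refine le_trans ?_ (setLIntegral_mono' measurableSet_Ioo e3)
    rw [setLIntegral_const, Real.volume_Ioo, ← ENNReal.ofReal_mul (by norm_num), ← ENNReal.ofReal_mul (by positivity)]
    apply ENNReal.ofReal_le_ofReal
    linarith
  · rw [Measure.prod_restrict]
    apply AEMeasurable.const_mul
    apply AEMeasurable.enorm
    apply ContinuousOn.aemeasurable _ (measurableSet_Ioo.prod measurableSet_Ioo)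
    refine hh.continuousOn.comp (Continuous.continuousOn ?_) ?_
    · unfold circleMap; fun_prop
    · rintro ⟨r, θ⟩ ⟨hr, hθ⟩
      apply hw
      simp only at hr ⊢
      rw [Metric.mem_closedBall, dist_eq_norm, circleMap_sub_center, norm_circleMap_zero, abs_of_pos (by linarith [hr.1])]
      exact hr.2.le

theorem decay_f {f : ℂ → ℂ} {a : ℝ} (hf : DifferentiableOn ℂ f {x | x.im < -a})
    (hper : ∀ x : ℂ, x.im < -a → f (x + ((2 * Real.pi : ℝ) : ℂ)) = f x)
    (hL : IntegrableOn (fun x => ‖f x‖ ^ 2) {x : ℂ | x.im < -a ∧ x.re ∈ Icc 0 (2 * Real.pi)}) (ε : ℝ) (hε : 0 < ε) :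
    ∃ N : ℝ, ∀ w : ℂ, w.im < -N → w.re ∈ Icc (-2) (2 * Real.pi + 2) → ‖f w‖ ≤ ε := by
  let F : ℂ → ENNReal := fun x => ‖f x * f x‖ₑ
  let c : ℂ := ((2 * Real.pi : ℝ) : ℂ)
  let Tn : ℕ → Set ℂ := fun n => {x : ℂ | x.im < -(a + n) ∧ x.re ∈ Icc 0 (2 * Real.pi)}
  have hTm : ∀ n, MeasurableSet (Tn n) := fun n =>
    ((isOpen_lt Complex.continuous_im continuous_const).measurableSet).inter
      ((isClosed_Icc.preimage Complex.continuous_re).measurableSet)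
  have hfin : ∫⁻ x in Tn 0, F x ≠ ⊤ := by
    have h1 := hL.2
    have : Tn 0 = {x : ℂ | x.im < -a ∧ x.re ∈ Icc 0 (2 * Real.pi)} := by
      simp only [Tn, Nat.cast_zero, add_zero]
    rw [this]
    refine ne_of_lt (lt_of_le_of_lt (le_of_eq ?_) h1)
    apply lintegral_congr
    intro x
    simp only [F]
    rw [← ofReal_norm, ← ofReal_norm, norm_mul, norm_pow, norm_norm, sq]
  have hanti : Antitone Tn := by
    intro n m hnm x hx
    refine ⟨lt_of_lt_of_le hx.1 ?_, hx.2⟩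
    have : (n : ℝ) ≤ m := by exact_mod_cast hnm
    linarith
  have hlim : Tendsto (fun n => ∫⁻ x in Tn n, F x) atTop (nhds 0) := by
    have := tendsto_measure_iInter_atTop (μ := volume.withDensity F) (s := Tn) (fun n => (hTm n).nullMeasurableSet)
      hanti ⟨0, by rw [withDensity_apply _ (hTm 0)]; exact hfin⟩
    have hemp : ⋂ n, Tn n = ∅ := by
      ext x
      simp only [mem_iInter, mem_empty_iff_false, iff_false, not_forall]
      obtain ⟨n, hn⟩ := exists_nat_gt (-x.im - a)
      exact ⟨n, fun h => by have := h.1; linarith⟩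
    rw [hemp, measure_empty] at this
    refine this.congr fun n => ?_
    simp only [Function.comp]
    rw [withDensity_apply _ (hTm n)]
  have hpos : (0 : ENNReal) < ENNReal.ofReal (Real.pi / 2 * ε ^ 2) / 3 := by
    apply ENNReal.div_pos
    · simp; positivity
    · simp
  obtain ⟨n, hn⟩ := (hlim.eventually (gt_mem_nhds hpos)).exists
  refine ⟨a + n + 1, fun w hw1 hw2 => ?_⟩
  by_contra! hlt
  have hballim : ∀ x ∈ Metric.closedBall w 1, x.im < -(a + n) ∧ x.re ∈ Icc (-(2 * Real.pi)) (4 * Real.pi) := by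
    intro x hx
    rw [Metric.mem_closedBall, dist_eq_norm] at hx
    have h1 := (Complex.abs_im_le_norm (x - w)).trans hx
    have h2 := (Complex.abs_re_le_norm (x - w)).trans hx
    rw [Complex.sub_im, abs_le] at h1
    rw [Complex.sub_re, abs_le] at h2
    have := Real.pi_gt_three
    refine ⟨by linarith [h1.2], by linarith [h2.1, hw2.1], by linarith [h2.2, hw2.2]⟩
  have hUo : IsOpen {x : ℂ | x.im < -a} := isOpen_lt Complex.continuous_im continuous_const
  have hlow := area_low (h := fun x => f x * f x) hUo (hf.mul hf) (w := w) (fun x hx => by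
    have := (hballim x hx).1
    have hn0 : (0 : ℝ) ≤ n := Nat.cast_nonneg n
    rw [mem_ofPred_eq]; linarith)
  have hup : ∫⁻ x in Metric.ball w 1, F x ≤ 3 * ∫⁻ x in Tn n, F x := by
    have hcov : Metric.ball w 1 ⊆ (Tn n ∪ (fun x => x + c) ⁻¹' Tn n) ∪ (fun x => x + -c) ⁻¹' Tn n := by
      intro x hx
      obtain ⟨h1, h2, h3⟩ := hballim x (Metric.ball_subset_closedBall hx)
      rcases lt_or_ge x.re 0 with h | h
      · left; right
        refine ⟨by simpa [c] using h1, ?_, ?_⟩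
        · simp [c]; linarith
        · simp [c]; linarith
      · rcases le_or_gt x.re (2 * Real.pi) with h' | h'
        · left; left
          exact ⟨h1, h, h'⟩
        · right
          refine ⟨by simpa [c] using h1, ?_, ?_⟩
          · simp [c]; linarith
          · simp [c]; linarith
    have hn0 : (0 : ℝ) ≤ n := Nat.cast_nonneg n
    have t1 : ∫⁻ x in (fun x => x + c) ⁻¹' Tn n, F x = ∫⁻ x in Tn n, F x := by
      rw [← (measurePreserving_add_right volume c).setLIntegral_comp_preimage_emb (MeasurableEquiv.addRight c).measurableEmbedding F (Tn n)]
      refine setLIntegral_congr_fun ((measurable_add_const c) (hTm n)) fun x hx => ?_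
      have := hx.1
      simp only [F]
      rw [hper x (by simp [c] at this; linarith)]
    have t2 : ∫⁻ x in (fun x => x + -c) ⁻¹' Tn n, F x = ∫⁻ x in Tn n, F x := by
      rw [← (measurePreserving_add_right volume (-c)).setLIntegral_comp_preimage_emb (MeasurableEquiv.addRight (-c)).measurableEmbedding F (Tn n)]
      refine setLIntegral_congr_fun ((measurable_add_const (-c)) (hTm n)) fun x hx => ?_
      have := hx.1
      simp only [F]
      rw [← hper (x + -c) (by simp [c] at this ⊢; linarith)]
      simp [c]
    calc ∫⁻ x in Metric.ball w 1, F x ≤ _ := lintegral_mono_set hcov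
      _ ≤ _ := lintegral_union_le _ _ _
      _ ≤ _ := add_le_add (lintegral_union_le _ _ _) le_rfl
      _ = _ := by rw [t1, t2]; ring
  have h3 : 3 * ∫⁻ x in Tn n, F x < ENNReal.ofReal (Real.pi / 2 * ε ^ 2) := by
    have := (ENNReal.lt_div_iff_mul_lt (Or.inl (by simp)) (Or.inl (by simp))).1 hn
    rwa [mul_comm]
  have h4 := lt_of_le_of_lt (hlow.trans hup) h3
  rw [ENNReal.ofReal_lt_ofReal_iff (by positivity), norm_mul] at h4
  have : ε ^ 2 < ‖f w‖ * ‖f w‖ := by nlinarith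
  have hpi := Real.pi_pos
  nlinarith

theorem decay_G {f : ℂ → ℂ} {a : ℝ} (hf : DifferentiableOn ℂ f {x | x.im < -a})
    (hper : ∀ x : ℂ, x.im < -a → f (x + ((2 * Real.pi : ℝ) : ℂ)) = f x)
    (hL : IntegrableOn (fun x => ‖f x‖ ^ 2) {x : ℂ | x.im < -a ∧ x.re ∈ Icc 0 (2 * Real.pi)}) (ε : ℝ) (hε : 0 < ε) :
    ∃ N : ℝ, ∀ w : ℂ, w.im < -N → w.re ∈ Icc 0 (2 * Real.pi) → ‖deriv f w‖ ≤ ε := by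
  obtain ⟨N, hN⟩ := decay_f hf hper hL ε hε
  refine ⟨max (N + 1) (a + 1), fun w h1 h2 => ?_⟩
  have m1 := le_max_left (N + 1) (a + 1)
  have m2 := le_max_right (N + 1) (a + 1)
  have hb : ∀ x ∈ Metric.closedBall w 1, x.im < -N ∧ x.im < -a ∧ x.re ∈ Icc (-2) (2 * Real.pi + 2) := by
    intro x hx
    rw [Metric.mem_closedBall, dist_eq_norm] at hx
    have g1 := (Complex.abs_im_le_norm (x - w)).trans hx
    have g2 := (Complex.abs_re_le_norm (x - w)).trans hx
    rw [Complex.sub_im, abs_le] at g1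
    rw [Complex.sub_re, abs_le] at g2
    refine ⟨by linarith [g1.2], by linarith [g1.2], by linarith [g2.1, h2.1], by linarith [g2.2, h2.2]⟩
  have := Complex.norm_deriv_le_of_forall_mem_sphere_norm_le (c := w) (f := f) (C := ε) one_pos
    (DifferentiableOn.diffContOnCl (hf.mono fun x hx => (hb x (Metric.closure_ball_subset_closedBall hx)).2.1))
    (fun x hx => by
      obtain ⟨k1, -, k3⟩ := hb x (Metric.sphere_subset_closedBall hx)
      exact hN x k1 k3)
  simpa using this

theorem Crv.grad_bound {A : ℝ} {z z' : ℝ → ℂ} {O1 O2 : Set ℂ} (C : Crv A z z' O1 O2) {f : ℂ → ℂ} {M : ℝ} (hM : 0 ≤ M)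
    (hf : DifferentiableOn ℂ f O1)
    (hpO : ∀ x : ℂ, x + ((2 * Real.pi : ℝ) : ℂ) ∈ O1 ↔ x ∈ O1)
    (hper : ∀ x ∈ O1, f (x + ((2 * Real.pi : ℝ) : ℂ)) = f x)
    (hL : IntegrableOn (fun x => ‖f x‖ ^ 2) (O1 ∩ {x : ℂ | x.re ∈ Icc 0 (2 * Real.pi)}))
    (hbd : ∀ γ, ∀ η > 0, ∀ᶠ x in nhdsWithin (z γ) O1, ‖deriv f x‖ ≤ M + η) :
    ∀ x ∈ O1, ‖deriv f x‖ ≤ M := by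
  obtain ⟨a, ha1, ha2⟩ := C.hst
  have hsub : {x : ℂ | x.im < -a} ⊆ O1 := by
    intro x hx
    rw [mem_ofPred_eq] at hx
    exact ha1 (by rw [mem_ofPred_eq]; exact hx.le)
  have dec := decay_G (hf.mono hsub) (fun x hx => hper x (hsub hx))
    (hL.mono_set (fun x hx => ⟨hsub hx.1, hx.2⟩))
  have hG : DifferentiableOn ℂ (deriv f) O1 := hf.deriv C.o1
  -- periodicity of the derivative
  have hGp1 : ∀ x ∈ O1, deriv f (x + ((2 * Real.pi : ℝ) : ℂ)) = deriv f x := by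
    intro x hx
    rw [← deriv_comp_add_const]
    apply Filter.EventuallyEq.deriv_eq
    filter_upwards [C.o1.mem_nhds hx] with y hy using hper y hy
  have hsh : ∀ (k : ℤ), ∀ x, x + ((k * (2 * Real.pi) : ℝ) : ℂ) ∈ O1 ↔ x ∈ O1 := by
    intro k
    induction k using Int.induction_on with
    | zero => simp
    | succ n ih =>
      intro x
      rw [← ih x, ← hpO (x + (((n : ℤ) * (2 * Real.pi) : ℝ) : ℂ))]
      have e : x + ((((n : ℤ) + 1 : ℤ) * (2 * Real.pi) : ℝ) : ℂ) = x + (((n : ℤ) * (2 * Real.pi) : ℝ) : ℂ) + ((2 * Real.pi : ℝ) : ℂ) := by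
        push_cast; ring
      rw [e]
    | pred n ih =>
      intro x
      rw [← ih x, ← hpO (x + (((-(n : ℤ) - 1 : ℤ) * (2 * Real.pi) : ℝ) : ℂ))]
      have e : x + (((-(n : ℤ) - 1 : ℤ) * (2 * Real.pi) : ℝ) : ℂ) + ((2 * Real.pi : ℝ) : ℂ) = x + (((-(n : ℤ) : ℤ) * (2 * Real.pi) : ℝ) : ℂ) := by
        push_cast; ring
      rw [e]
  have hGp : ∀ (k : ℤ), ∀ x ∈ O1, deriv f (x + ((k * (2 * Real.pi) : ℝ) : ℂ)) = deriv f x := by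
    intro k
    induction k using Int.induction_on with
    | zero => simp
    | succ n ih =>
      intro x hx
      have e : x + ((((n : ℤ) + 1 : ℤ) * (2 * Real.pi) : ℝ) : ℂ) = x + (((n : ℤ) * (2 * Real.pi) : ℝ) : ℂ) + ((2 * Real.pi : ℝ) : ℂ) := by
        push_cast; ring
      rw [e, hGp1 _ ((hsh _ _).2 hx), ih x hx]
    | pred n ih =>
      intro x hx
      have e : x + (((-(n : ℤ) - 1 : ℤ) * (2 * Real.pi) : ℝ) : ℂ) + ((2 * Real.pi : ℝ) : ℂ) = x + (((-(n : ℤ) : ℤ) * (2 * Real.pi) : ℝ) : ℂ) := by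
        push_cast; ring
      rw [← hGp1 _ ((hsh _ _).2 hx), e, ih x hx]
  have hred : ∀ x ∈ O1, ∃ y ∈ O1, y.re ∈ Icc 0 (2 * Real.pi) ∧ ‖deriv f y‖ = ‖deriv f x‖ := by
    intro x hx
    obtain ⟨k, hk, -⟩ := existsUnique_add_zsmul_mem_Ico Real.two_pi_pos x.re 0
    rw [zsmul_eq_mul, zero_add] at hk
    refine ⟨x + ((k * (2 * Real.pi) : ℝ) : ℂ), (hsh k x).2 hx, ?_, by rw [hGp k x hx]⟩
    rw [Complex.add_re, Complex.ofReal_re]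
    exact ⟨hk.1, hk.2.le⟩
  intro x0 hx0
  by_contra! hlt
  set η := (‖deriv f x0‖ - M) / 2 with hη
  have hη0 : 0 < η := by rw [hη]; linarith
  let Q : Set ℂ := {w | w ∈ O1 ∧ M + 2 * η ≤ ‖deriv f w‖ ∧ w.re ∈ Icc 0 (2 * Real.pi)}
  obtain ⟨N, hN⟩ := dec η hη0
  have hQne : Q.Nonempty := by
    obtain ⟨y, hy, hyr, hyn⟩ := hred x0 hx0
    exact ⟨y, hy, by rw [hyn, hη]; linarith, hyr⟩
  have hQb : Q ⊆ Icc 0 (2 * Real.pi) ×ℂ Icc (-N) a := by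
    rintro w ⟨h1, h2, h3⟩
    refine ⟨h3, ?_, ?_⟩
    · by_contra! h
      have := hN w h h3
      linarith
    · by_contra! h
      exact Set.disjoint_left.1 C.d12 h1 (ha2 (le_of_lt h))
  have hQc : IsClosed Q := by
    apply IsSeqClosed.isClosed
    intro w w0 hw hlim
    have hre : w0.re ∈ Icc 0 (2 * Real.pi) :=
      isClosed_Icc.mem_of_tendsto ((Complex.continuous_re.tendsto _).comp hlim) (Eventually.of_forall fun i => (hw i).2.2)
    have hcl : w0 ∈ closure O1 := mem_closure_of_tendsto hlim (Eventually.of_forall fun i => (hw i).1)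
    have hin : w0 ∈ O1 := by
      by_contra hno
      have : w0 ∈ frontier O1 := by rw [C.o1.frontier_eq]; exact ⟨hcl, hno⟩
      rw [C.f1] at this
      obtain ⟨γ, rfl⟩ := this
      have hlim' : Tendsto w atTop (nhdsWithin (z γ) O1) :=
        tendsto_nhdsWithin_iff.2 ⟨hlim, Eventually.of_forall fun i => (hw i).1⟩
      obtain ⟨i, hi⟩ := (hlim'.eventually (hbd γ η hη0)).exists
      have := (hw i).2.1
      linarith
    refine ⟨hin, ?_, hre⟩
    have hcont : ContinuousAt (deriv f) w0 := (hG.continuousOn.continuousAt (C.o1.mem_nhds hin))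
    exact ge_of_tendsto' ((hcont.tendsto.comp hlim).norm) fun i => (hw i).2.1
  have hQk : IsCompact Q := (isCompact_Icc.reProdIm isCompact_Icc).of_isClosed_subset hQc hQb
  obtain ⟨m, hm, hmax⟩ := hQk.exists_isMaxOn hQne (f := fun w => ‖deriv f w‖)
    (hG.continuousOn.norm.mono fun w hw => hw.1)
  have hmaxO : IsMaxOn (norm ∘ deriv f) O1 m := by
    intro x hx
    show ‖deriv f x‖ ≤ ‖deriv f m‖
    obtain ⟨y, hy, hyr, hyn⟩ := hred x hx
    rw [← hyn]
    rcases le_or_gt (M + 2 * η) ‖deriv f y‖ with h | h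
    · exact hmax ⟨hy, h, hyr⟩
    · exact h.le.trans hm.2.1
  have hcst := Complex.norm_eqOn_of_isPreconnected_of_isMaxOn C.c1.isPreconnected C.o1 hG hm.1 hmaxO
  let y : ℂ := ⟨0, min (-N) (-a) - 1⟩
  have n1 := min_le_left (-N) (-a)
  have n2 := min_le_right (-N) (-a)
  have hyO : y ∈ O1 := hsub (by rw [mem_ofPred_eq]; simp only [y]; linarith)
  have k1 : ‖deriv f y‖ = ‖deriv f m‖ := hcst hyO
  have k2 := hN y (by simp only [y]; linarith) ⟨le_rfl, Real.two_pi_pos.le⟩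
  have k3 := hm.2.1
  linarith


theorem conj_form (L : ℂ →L[ℝ] ℂ) (hdiv : (L 1).re + (L Complex.I).im = 0) (hcurl : (L 1).im - (L Complex.I).re = 0) (v : ℂ) :
    L v = L 1 * (starRingEnd ℂ) v := by
  have e : v = v.re • (1 : ℂ) + v.im • Complex.I := by
    apply Complex.ext <;> simp
  have : L v = v.re • L 1 + v.im • L Complex.I := by
    conv_lhs => rw [e]
    rw [map_add, map_smul, map_smul]
  rw [this]
  apply Complex.ext
  · simp; linear_combination (-v.im) * hcurl
  · simp; linear_combination v.im * hdiv

theorem holo_conj {U : ℂ → ℂ} {x : ℂ} {L : ℂ →L[ℝ] ℂ} (h : HasFDerivAt U L x)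
    (hdiv : (L 1).re + (L Complex.I).im = 0) (hcurl : (L 1).im - (L Complex.I).re = 0) :
    HasDerivAt (fun y => (starRingEnd ℂ) (U y)) ((starRingEnd ℂ) (L 1)) x := by
  have h2 : HasFDerivAt (fun y => (starRingEnd ℂ) (U y)) ((Complex.conjCLE : ℂ →L[ℝ] ℂ).comp L) x :=
    (Complex.conjCLE : ℂ →L[ℝ] ℂ).hasFDerivAt.comp x h
  rw [hasDerivAt_iff_hasFDerivAt]
  apply hasFDerivAt_of_restrictScalars ℝ h2
  ext v
  simp [conj_form L hdiv hcurl v, mul_comm]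

theorem Crv.vel_bound {A : ℝ} {z z' : ℝ → ℂ} {O1 O2 : Set ℂ} (C : Crv A z z' O1 O2) {U : ℂ → ℂ}
    (hU : ContDiffOn ℝ 1 U (closure O1))
    (hdiv : ∀ x ∈ O1, (fderiv ℝ U x 1).re + (fderiv ℝ U x Complex.I).im = 0)
    (hcurl : ∀ x ∈ O1, (fderiv ℝ U x 1).im - (fderiv ℝ U x Complex.I).re = 0)
    (hpO : ∀ x : ℂ, x + ((2 * Real.pi : ℝ) : ℂ) ∈ O1 ↔ x ∈ O1)
    (hper : ∀ x ∈ O1, U (x + ((2 * Real.pi : ℝ) : ℂ)) = U x)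
    (hL : IntegrableOn (fun x => ‖U x‖ ^ 2) (O1 ∩ {x : ℂ | x.re ∈ Icc 0 (2 * Real.pi)}))
    (hv : ∀ γ, ∃ v', HasDerivAt (fun α => U (z α)) v' γ ∧ ‖v'‖ ≤ A) {α β : ℝ}
    (hs : openSegment ℝ (z α) (z β) ⊆ O1) : ‖U (z α) - U (z β)‖ ≤ A ^ 2 * ‖z α - z β‖ := by
  have hA : 1 ≤ A := C.hA
  have hA0 : 0 < A := by linarith
  have hfd : ∀ x ∈ O1, HasFDerivAt U (fderiv ℝ U x) x := by
    intro x hx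
    have hn : closure O1 ∈ nhds x := mem_of_superset (C.o1.mem_nhds hx) subset_closure
    exact ((hU.contDiffAt hn).differentiableAt (by norm_num)).hasFDerivAt
  have hf : ∀ x ∈ O1, HasDerivAt (fun y => (starRingEnd ℂ) (U y)) ((starRingEnd ℂ) (fderiv ℝ U x 1)) x :=
    fun x hx => holo_conj (hfd x hx) (hdiv x hx) (hcurl x hx)
  have hzc : ∀ γ, z γ ∈ closure O1 := by
    intro γ
    have : z γ ∈ frontier O1 := by rw [C.f1]; exact ⟨γ, rfl⟩
    exact frontier_subset_closure this
  have hbd : ∀ γ, ∀ η > 0, ∀ᶠ x in nhdsWithin (z γ) O1,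
      ‖deriv (fun y => (starRingEnd ℂ) (U y)) x‖ ≤ A ^ 2 + η := by
    intro γ η hη
    have h1 : ContDiffWithinAt ℝ (0 + 1) U (closure O1) (z γ) := by
      rw [zero_add]; exact hU _ (hzc γ)
    obtain ⟨u, hu, -, f', hf', hc⟩ := (contDiffWithinAt_succ_iff_hasFDerivWithinAt (by simp)).1 h1
    rw [insert_eq_of_mem (hzc γ)] at hu
    have hc' := hc.continuousWithinAt
    have hzu : z γ ∈ u := mem_of_mem_nhdsWithin (hzc γ) hu
    obtain ⟨v', hv', hvA⟩ := hv γ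
    have hL0 : f' (z γ) (z' γ) = v' := by
      have a1 : HasFDerivWithinAt U (f' (z γ)) (closure O1) (z γ) := (hf' _ hzu).mono_of_mem_nhdsWithin hu
      have a2 := a1.comp_hasDerivWithinAt (s := univ) γ (C.hd γ).hasDerivWithinAt (fun x _ => hzc x)
      rw [hasDerivWithinAt_univ] at a2
      exact a2.unique hv'
    have huO : u ∈ nhdsWithin (z γ) O1 := nhdsWithin_mono _ subset_closure hu
    have hlim : Tendsto f' (nhdsWithin (z γ) O1) (nhds (f' (z γ))) :=
      hc'.tendsto.mono_left (nhdsWithin_le_of_mem huO)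
    have hlim2 : Tendsto (fun x => ‖f' x (z' γ)‖) (nhdsWithin (z γ) O1) (nhds ‖v'‖) := by
      rw [← hL0]
      exact (((ContinuousLinearMap.apply ℝ ℂ (z' γ)).continuous.tendsto _).comp hlim).norm
    have hlt : ‖v'‖ < A + η / A := by have := div_pos hη hA0; linarith
    have hmem : ∀ᶠ x in nhdsWithin (z γ) O1, u ∈ nhds x := by
      have := eventually_eventually_nhdsWithin.2 huO
      filter_upwards [this, self_mem_nhdsWithin] with x hx hxO
      rw [C.o1.nhdsWithin_eq hxO] at hx
      exact hx
    filter_upwards [hlim2.eventually_lt_const hlt, hmem, self_mem_nhdsWithin] with x hx1 hx2 hx3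
    have e1 : f' x = fderiv ℝ U x :=
      ((hf' x (mem_of_mem_nhds hx2)).hasFDerivAt hx2).unique (hfd x hx3)
    rw [e1, conj_form _ (hdiv x hx3) (hcurl x hx3), norm_mul, RCLike.norm_conj] at hx1
    rw [(hf x hx3).deriv, RCLike.norm_conj]
    have hlow := C.hlow γ
    have h5 : ‖fderiv ℝ U x 1‖ * A⁻¹ ≤ A + η / A :=
      (mul_le_mul_of_nonneg_left hlow (norm_nonneg _)).trans hx1.le
    have h6 := mul_le_mul_of_nonneg_right h5 hA0.le
    have e2 : ‖fderiv ℝ U x 1‖ * A⁻¹ * A = ‖fderiv ℝ U x 1‖ := by field_simp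
    have e3 : (A + η / A) * A = A ^ 2 + η := by field_simp
    rw [e2, e3] at h6
    exact h6
  have hG := C.grad_bound (f := fun y => (starRingEnd ℂ) (U y)) (M := A ^ 2) (by positivity)
    (fun x hx => (hf x hx).differentiableAt.differentiableWithinAt) hpO
    (fun x hx => by simp only [hper x hx]) (by simpa only [RCLike.norm_conj] using hL) hbd
  have hin : ∀ p ∈ openSegment ℝ (z α) (z β) ×ˢ openSegment ℝ (z α) (z β),
      ‖U p.1 - U p.2‖ ≤ A ^ 2 * ‖p.1 - p.2‖ := by
    rintro ⟨p, q⟩ ⟨hp, hq⟩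
    have := (convex_openSegment (z α) (z β)).norm_image_sub_le_of_norm_hasDerivWithin_le
      (f := fun y => (starRingEnd ℂ) (U y)) (C := A ^ 2)
      (fun x hx => (hf x (hs hx)).differentiableAt.hasDerivAt.hasDerivWithinAt)
      (fun x hx => hG x (hs hx)) hq hp
    rw [← map_sub, RCLike.norm_conj] at this
    exact this
  have hcl : (z α, z β) ∈ closure (openSegment ℝ (z α) (z β) ×ˢ openSegment ℝ (z α) (z β)) := by
    rw [closure_prod_eq, closure_openSegment]
    exact ⟨left_mem_segment _ _ _, right_mem_segment _ _ _⟩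
  have hcU : ∀ γ, ContinuousWithinAt U (openSegment ℝ (z α) (z β)) (z γ) := fun γ =>
    (hU.continuousOn _ (hzc γ)).mono (hs.trans subset_closure)
  refine ContinuousWithinAt.closure_le (f := fun p : ℂ × ℂ => ‖U p.1 - U p.2‖)
    (g := fun p : ℂ × ℂ => A ^ 2 * ‖p.1 - p.2‖) hcl ?_ ?_ hin
  · apply ContinuousWithinAt.norm
    apply ContinuousWithinAt.sub
    · exact (hcU α).comp (f := Prod.fst) continuousWithinAt_fst (fun p hp => hp.1)
    · exact (hcU β).comp (f := Prod.snd) continuousWithinAt_snd (fun p hp => hp.2)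
  · exact Continuous.continuousWithinAt (by fun_prop)


def PhiE : E2 ≃ₗᵢ[ℝ] ℂ := Complex.orthonormalBasisOneI.repr.symm

theorem PhiE_symm_zero (w : ℂ) : (PhiE.symm w) 0 = w.re := by
  simp [PhiE]
theorem PhiE_symm_one (w : ℂ) : (PhiE.symm w) 1 = w.im := by
  simp [PhiE]
theorem PhiE_re (x : E2) : (PhiE x).re = x 0 := by
  rw [← PhiE_symm_zero, PhiE.symm_apply_apply]
theorem PhiE_im (x : E2) : (PhiE x).im = x 1 := by
  rw [← PhiE_symm_one, PhiE.symm_apply_apply]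
theorem PhiE_xvec : PhiE xvec = 1 := by
  apply Complex.ext
  · rw [PhiE_re]; simp [xvec]
  · rw [PhiE_im]; simp [xvec]
theorem PhiE_transl : PhiE transl = ((2 * Real.pi : ℝ) : ℂ) := by
  apply Complex.ext
  · rw [PhiE_re, Complex.ofReal_re]; simp [transl]
  · rw [PhiE_im, Complex.ofReal_im]; simp [transl]
theorem PhiE_perpv (x : E2) : PhiE (perpv x) = Complex.I * PhiE x := by
  apply Complex.ext
  · rw [PhiE_re]; simp [perpv, PhiE_im]
  · rw [PhiE_im]; simp [perpv, PhiE_re]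
theorem PhiE_rinner (x y : E2) : rinner x y = dot (PhiE x) (PhiE y) := by
  simp [rinner, dot, PhiE_re, PhiE_im, PiLp.inner_apply, Fin.sum_univ_two]
  try ring
theorem PhiE_single0 : PhiE.symm 1 = EuclideanSpace.single 0 1 := by
  ext i; fin_cases i
  · simp [PhiE_symm_zero]
  · simp [PhiE_symm_one]
theorem PhiE_single1 : PhiE.symm Complex.I = EuclideanSpace.single 1 1 := by
  ext i; fin_cases i
  · simp [PhiE_symm_zero]
  · simp [PhiE_symm_one]

theorem dot_perp {p q w : ℂ} (hp : p ≠ 0) (h1 : dot p w = 0) (h2 : dot q (Complex.I * p) = 0) : dot q w = 0 := by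
  unfold dot at *
  simp at h2
  have hn : 0 < p.re * p.re + p.im * p.im := by
    have := Complex.normSq_pos.2 hp
    rwa [Complex.normSq_apply] at this
  have : (p.re * p.re + p.im * p.im) * (q.re * w.re + q.im * w.im) = 0 := by
    linear_combination (q.re * p.re + q.im * p.im) * h1 + (p.re * w.im - p.im * w.re) * h2
  rcases mul_eq_zero.1 this with h | h
  · exact absurd h hn.ne'
  · exact h

theorem reg_lemma {T A : ℝ} (hT : 0 < T) {n : ℕ} (hn : 2 ≤ n) {g : ℝ × ℝ → E2}
    (hg : ContDiffOn ℝ n g (univ ×ˢ Icc (0:ℝ) T))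
    (hb : ∀ p ∈ (univ ×ˢ Icc (0:ℝ) T : Set (ℝ × ℝ)), ∀ i : ℕ, i ≤ n →
      ‖iteratedFDerivWithin ℝ i g (univ ×ˢ Icc (0:ℝ) T) p‖ ≤ A) :
    ∃ G : ℝ × ℝ → (ℝ × ℝ →L[ℝ] E2),
      (∀ p ∈ (univ ×ˢ Icc (0:ℝ) T : Set (ℝ × ℝ)), HasFDerivWithinAt g (G p) (univ ×ˢ Icc (0:ℝ) T) p ∧ ‖g p‖ ≤ A ∧ ‖G p‖ ≤ A) ∧
      (∀ p ∈ (univ ×ˢ Icc (0:ℝ) T : Set (ℝ × ℝ)), ∀ q ∈ (univ ×ˢ Icc (0:ℝ) T : Set (ℝ × ℝ)), ‖G p - G q‖ ≤ A * ‖p - q‖) := by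
  set S : Set (ℝ × ℝ) := univ ×ˢ Icc (0:ℝ) T with hS
  have hun : UniqueDiffOn ℝ S := uniqueDiffOn_univ.prod (uniqueDiffOn_Icc hT)
  have hcv : Convex ℝ S := convex_univ.prod (convex_Icc 0 T)
  have hn1 : ((1 : ℕ) : WithTop ℕ∞) ≤ n := by exact_mod_cast (by omega)
  refine ⟨fderivWithin ℝ g S, fun p hp => ⟨?_, ?_, ?_⟩, ?_⟩
  · exact ((hg p hp).differentiableWithinAt (by intro h; have : n = 0 := (by exact_mod_cast h); omega)).hasFDerivWithinAt
  · simpa using hb p hp 0 (by omega)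
  · have := hb p hp 1 (by omega)
    rwa [norm_iteratedFDerivWithin_one _ (hun p hp)] at this
  · intro p hp q hq
    have hd : DifferentiableOn ℝ (fderivWithin ℝ g S) S := by
      have : ContDiffOn ℝ 1 (fderivWithin ℝ g S) S := hg.fderivWithin hun (by exact_mod_cast (by omega : 1 + 1 ≤ n))
      exact this.differentiableOn (by norm_num)
    refine hcv.norm_image_sub_le_of_norm_fderivWithin_le hd (fun x hx => ?_) hq hp
    have := hb x hx 2 (by omega)
    rw [← norm_iteratedFDerivWithin_fderivWithin hun hx, norm_iteratedFDerivWithin_one _ (hun x hx)] at this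
    exact this

theorem slice_a {T : ℝ} {g : ℝ × ℝ → E2} {G : ℝ × ℝ →L[ℝ] E2} {α t : ℝ} (ht : t ∈ Icc (0:ℝ) T)
    (h : HasFDerivWithinAt g G (univ ×ˢ Icc (0:ℝ) T) (α, t)) : HasDerivAt (fun a => g (a, t)) (G (1, 0)) α := by
  have h1 : HasDerivWithinAt (fun a : ℝ => (a, t)) ((1 : ℝ), (0 : ℝ)) univ α :=
    ((hasDerivAt_id α).prodMk (hasDerivAt_const α t)).hasDerivWithinAt
  have := h.comp_hasDerivWithinAt (s := univ) α h1 (fun x _ => mk_mem_prod (mem_univ _) ht)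
  rwa [hasDerivWithinAt_univ] at this

theorem slice_t {T : ℝ} {g : ℝ × ℝ → E2} {G : ℝ × ℝ →L[ℝ] E2} {α t : ℝ}
    (h : HasFDerivWithinAt g G (univ ×ˢ Icc (0:ℝ) T) (α, t)) :
    HasDerivWithinAt (fun s => g (α, s)) (G (0, 1)) (Icc (0:ℝ) T) t := by
  have h1 : HasDerivWithinAt (fun s : ℝ => (α, s)) ((0 : ℝ), (1 : ℝ)) (Icc (0:ℝ) T) t :=
    ((hasDerivAt_const t α).prodMk (hasDerivAt_id t)).hasDerivWithinAt
  exact h.comp_hasDerivWithinAt t h1 (fun x hx => mk_mem_prod (mem_univ _) hx)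


theorem TwoFluid.toCrv {ρ1 ρ2 σ grav T A : ℝ} (hA : 1 ≤ A) (D : TwoFluid ρ1 ρ2 σ grav T A)
    {G : ℝ × ℝ → (ℝ × ℝ →L[ℝ] E2)}
    (hG1 : ∀ p ∈ (univ ×ˢ Icc (0:ℝ) T : Set (ℝ × ℝ)), ‖D.z p.1 p.2 - p.1 • xvec‖ ≤ A)
    (hG2 : ∀ p ∈ (univ ×ˢ Icc (0:ℝ) T : Set (ℝ × ℝ)), ∀ q ∈ (univ ×ˢ Icc (0:ℝ) T : Set (ℝ × ℝ)), ‖G p - G q‖ ≤ A * ‖p - q‖)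
    (hda : ∀ t ∈ Icc (0:ℝ) T, ∀ α, HasDerivAt (fun a => D.z a t) (xvec + G (α, t) (1, 0)) α) {t : ℝ} (ht : t ∈ Icc (0:ℝ) T) :
    Crv A (fun α => PhiE (D.z α t)) (fun α => PhiE (deriv (fun a => D.z a t) α)) (PhiE.symm ⁻¹' D.Ω1 t) (PhiE.symm ⁻¹' D.Ω2 t) := by
  have hrange : range (fun α => PhiE (D.z α t)) = PhiE.symm ⁻¹' range (fun α => D.z α t) := by
    ext w
    constructor
    · rintro ⟨α, rfl⟩
      exact ⟨α, by simp⟩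
    · rintro ⟨α, h⟩
      exact ⟨α, by simp only at h ⊢; rw [h]; simp⟩
  have hmem : ∀ α, ((α, t) : ℝ × ℝ) ∈ (univ ×ˢ Icc (0:ℝ) T : Set (ℝ × ℝ)) := fun α => mk_mem_prod (mem_univ _) ht
  constructor
  case hA => exact hA
  case hd =>
    intro α
    have := (PhiE.toContinuousLinearEquiv : E2 →L[ℝ] ℂ).hasFDerivAt.comp_hasDerivAt α (hda t ht α).differentiableAt.hasDerivAt
    exact this
  case hlip =>
    intro α β
    rw [← map_sub, PhiE.norm_map, (hda t ht α).deriv, (hda t ht β).deriv, add_sub_add_left_eq_sub, ← sub_apply]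
    refine ((G (α, t) - G (β, t)).le_opNorm _).trans ?_
    have h1 := hG2 _ (hmem α) _ (hmem β)
    have e1 : ‖((1 : ℝ), (0 : ℝ))‖ = 1 := by simp [Prod.norm_def]
    have e2 : ‖((α, t) : ℝ × ℝ) - (β, t)‖ = |α - β| := by simp [Prod.norm_def]
    rw [e1, mul_one, ← e2]; exact h1
  case hlow => intro α; rw [PhiE.norm_map]; exact D.hz_lower t ht α
  case hnear =>
    intro α
    have e : ((α : ℝ) : ℂ) = PhiE (α • xvec) := by rw [map_smul, PhiE_xvec]; simp
    have h3 : ‖D.z α t - α • xvec‖ ≤ A := hG1 (α, t) (hmem α)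
    have e4 : PhiE (D.z α t) - (α : ℂ) = PhiE (D.z α t - α • xvec) := by
      rw [e]; exact (map_sub PhiE _ _).symm
    rw [e4, PhiE.norm_map]
    exact h3
  case hper => intro α; simp only [D.hper_z t ht, map_add, PhiE_transl]
  case o1 => exact (D.hΩ1_open t ht).preimage PhiE.symm.continuous
  case o2 => exact (D.hΩ2_open t ht).preimage PhiE.symm.continuous
  case c1 => exact (PhiE.symm.toHomeomorph.isConnected_preimage).2 (D.hΩ1_conn t ht)
  case c2 => exact (PhiE.symm.toHomeomorph.isConnected_preimage).2 (D.hΩ2_conn t ht)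
  case hun => rw [hrange, ← preimage_union, ← preimage_union, D.hUnion t ht, preimage_univ]
  case d12 => exact (D.hDisj12 t ht).preimage _
  case d1 => rw [hrange]; exact (D.hDisj1Γ t ht).preimage _
  case d2 => rw [hrange]; exact (D.hDisj2Γ t ht).preimage _
  case f1 => rw [hrange, ← D.hFront1 t ht]; exact (PhiE.symm.toHomeomorph.preimage_frontier _).symm
  case f2 => rw [hrange, ← D.hFront2 t ht]; exact (PhiE.symm.toHomeomorph.preimage_frontier _).symm
  case hst =>
    obtain ⟨a, -, ha⟩ := D.hStrip
    refine ⟨a, ?_, ?_⟩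
    · intro w hw
      exact (ha t ht).1 (by rw [mem_ofPred_eq] at hw ⊢; rwa [PhiE_symm_one])
    · intro w hw
      exact (ha t ht).2 (by rw [mem_ofPred_eq] at hw ⊢; rwa [PhiE_symm_one])

theorem per_aux {O : Set E2} (h : (fun x => x + transl) '' O = O) (w : ℂ) :
    w + ((2 * Real.pi : ℝ) : ℂ) ∈ PhiE.symm ⁻¹' O ↔ w ∈ PhiE.symm ⁻¹' O := by
  have e : PhiE.symm (w + ((2 * Real.pi : ℝ) : ℂ)) = PhiE.symm w + transl := by
    rw [← PhiE_transl, map_add, PhiE.symm_apply_apply]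
  rw [mem_preimage, mem_preimage, e]
  constructor
  · intro hx
    rw [← h] at hx
    obtain ⟨y, hy, hy2⟩ := hx
    rwa [← add_right_cancel hy2]
  · intro hx
    rw [← h]
    exact ⟨_, hx, rfl⟩

theorem TwoFluid.vel {ρ1 ρ2 σ grav T A : ℝ} (D : TwoFluid ρ1 ρ2 σ grav T A)
    (hT : 0 < T) {t : ℝ} (ht : t ∈ Icc (0:ℝ) T)
    (C : Crv A (fun α => PhiE (D.z α t)) (fun α => PhiE (deriv (fun a => D.z a t) α)) (PhiE.symm ⁻¹' D.Ω1 t) (PhiE.symm ⁻¹' D.Ω2 t))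
    {α β : ℝ} (hs : openSegment ℝ (PhiE (D.z α t)) (PhiE (D.z β t)) ⊆ PhiE.symm ⁻¹' D.Ω1 t) :
    ‖D.u1 (D.z α t) t - D.u1 (D.z β t) t‖ ≤ A ^ 2 * ‖D.z α t - D.z β t‖ := by
  have hcl : closure (PhiE.symm ⁻¹' D.Ω1 t) = PhiE.symm ⁻¹' closure (D.Ω1 t) :=
    (PhiE.symm.toHomeomorph.preimage_closure _).symm
  have hfd : ∀ x ∈ PhiE.symm ⁻¹' D.Ω1 t, ∀ v, fderiv ℝ (fun w => PhiE (D.u1 (PhiE.symm w) t)) x v =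
      PhiE (fderiv ℝ (fun y => D.u1 y t) (PhiE.symm x) (PhiE.symm v)) := by
    intro x hx v
    have hn : closure (D.Ω1 t) ∈ nhds (PhiE.symm x) :=
      mem_of_superset ((D.hΩ1_open t ht).mem_nhds hx) subset_closure
    have h1 := (((D.hu1_reg t ht).contDiffAt hn).differentiableAt (by norm_num)).hasFDerivAt
    have h2 := (PhiE.toContinuousLinearEquiv : E2 →L[ℝ] ℂ).hasFDerivAt.comp x
      (h1.comp x (PhiE.symm.toContinuousLinearEquiv : ℂ →L[ℝ] E2).hasFDerivAt)
    have h3 := h2.fderiv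
    have h4 := congrArg (fun L : ℂ →L[ℝ] ℂ => L v) h3
    exact h4
  have key := C.vel_bound (U := fun w => PhiE (D.u1 (PhiE.symm w) t)) (α := α) (β := β) ?_ ?_ ?_ ?_ ?_ ?_ ?_ hs
  · simp only [PhiE.symm_apply_apply] at key
    rwa [← map_sub, ← map_sub, PhiE.norm_map, PhiE.norm_map] at key
  · rw [hcl]
    have h1 : ContDiffOn ℝ 1 (fun x => D.u1 x t) (closure (D.Ω1 t)) := (D.hu1_reg t ht).of_le (by norm_num)
    have h2 := h1.comp (s := PhiE.symm ⁻¹' closure (D.Ω1 t)) PhiE.symm.contDiff.contDiffOn (fun x hx => hx)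
    exact PhiE.contDiff.comp_contDiffOn h2
  · intro x hx
    rw [hfd x hx, hfd x hx, PhiE_single0, PhiE_single1, PhiE_re, PhiE_im]
    exact D.hdiv1 t ht _ hx
  · intro x hx
    rw [hfd x hx, hfd x hx, PhiE_single0, PhiE_single1, PhiE_re, PhiE_im]
    exact D.hcurl1 t ht _ hx
  · exact per_aux (D.hper_Ω1 t ht)
  · intro x hx
    have e : PhiE.symm (x + ((2 * Real.pi : ℝ) : ℂ)) = PhiE.symm x + transl := by
      rw [← PhiE_transl, map_add, PhiE.symm_apply_apply]
    simp only [e]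
    rw [D.hper_u1 t ht _ hx]
  · have h1 := D.hL2_1 t ht
    have h2 := ((PhiE.symm.measurePreserving).integrableOn_comp_preimage PhiE.symm.toHomeomorph.measurableEmbedding).2 h1
    refine (h2.mono_set ?_).congr_fun_ae ?_
    · intro x hx
      refine ⟨hx.1, ?_⟩
      have := hx.2
      rw [mem_ofPred_eq] at this ⊢
      rwa [PhiE_symm_zero]
    · refine Eventually.of_forall fun x => ?_
      simp
  · intro γ
    obtain ⟨G, hG1, hG2⟩ := reg_lemma (n := 3) hT (by norm_num) (by exact_mod_cast D.hv1_smooth) D.hv1_bound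
    have hm : ((γ, t) : ℝ × ℝ) ∈ (univ ×ˢ Icc (0:ℝ) T : Set (ℝ × ℝ)) := mk_mem_prod (mem_univ _) ht
    obtain ⟨a1, a2, a3⟩ := hG1 _ hm
    have b1 := slice_a ht a1
    refine ⟨PhiE (G (γ, t) (1, 0)), ?_, ?_⟩
    · simp only [PhiE.symm_apply_apply]
      exact (PhiE.toContinuousLinearEquiv : E2 →L[ℝ] ℂ).hasFDerivAt.comp_hasDerivAt γ b1
    · rw [PhiE.norm_map]
      refine ((G (γ, t)).le_opNorm _).trans ?_
      have e1 : ‖((1 : ℝ), (0 : ℝ))‖ = 1 := by simp [Prod.norm_def]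
      rw [e1, mul_one]; exact a3

theorem TwoFluid.toDyn {ρ1 ρ2 σ grav T A : ℝ} (hT : 0 < T) (hA : 1 ≤ A) (D : TwoFluid ρ1 ρ2 σ grav T A) :
    ∃ a zt, Dyn A T a (fun α t => PhiE (D.z α t)) (fun α t => PhiE (deriv (fun a => D.z a t) α)) zt
      (fun t => PhiE.symm ⁻¹' D.Ω1 t) (fun t => PhiE.symm ⁻¹' D.Ω2 t) := by
  obtain ⟨G, hG1, hG2⟩ := reg_lemma (n := 4) hT (by norm_num) (by exact_mod_cast D.hz_smooth) D.hz_bound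
  have hm : ∀ t ∈ Icc (0:ℝ) T, ∀ α, ((α, t) : ℝ × ℝ) ∈ (univ ×ˢ Icc (0:ℝ) T : Set (ℝ × ℝ)) :=
    fun t ht α => mk_mem_prod (mem_univ _) ht
  have hda : ∀ t ∈ Icc (0:ℝ) T, ∀ α, HasDerivAt (fun a => D.z a t) (xvec + G (α, t) (1, 0)) α := by
    intro t ht α
    have h1 := slice_a ht (hG1 _ (hm t ht α)).1
    have h2 := ((hasDerivAt_id α).smul_const xvec).add h1
    rw [one_smul] at h2
    refine h2.congr_of_eventuallyEq (Eventually.of_forall fun a => ?_)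
    simp
  have hdt : ∀ t ∈ Icc (0:ℝ) T, ∀ α, HasDerivWithinAt (fun s => D.z α s) (G (α, t) (0, 1)) (Icc (0:ℝ) T) t := by
    intro t ht α
    have h1 := slice_t (hG1 _ (hm t ht α)).1
    have h2 := (hasDerivWithinAt_const t (Icc (0:ℝ) T) (α • xvec)).add h1
    rw [zero_add] at h2
    refine h2.congr (fun s _ => ?_) ?_ <;> simp
  have e1 : ‖((1 : ℝ), (0 : ℝ))‖ = 1 := by simp [Prod.norm_def]
  have e2 : ‖((0 : ℝ), (1 : ℝ))‖ = 1 := by simp [Prod.norm_def]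
  have hcrv : ∀ t ∈ Icc (0:ℝ) T, Crv A (fun α => PhiE (D.z α t)) (fun α => PhiE (deriv (fun a => D.z a t) α)) (PhiE.symm ⁻¹' D.Ω1 t) (PhiE.symm ⁻¹' D.Ω2 t) :=
    fun t ht => D.toCrv hA (fun p hp => (hG1 p hp).2.1) hG2 hda ht
  obtain ⟨a, -, ha⟩ := D.hStrip
  have hA0 : 0 < A := by linarith
  -- kinematic condition
  have hGc : ∀ α, ContinuousOn (fun s => G (α, s)) (Icc (0:ℝ) T) := by
    intro α
    have : LipschitzOnWith ⟨A, hA0.le⟩ (fun s => G (α, s)) (Icc (0:ℝ) T) := by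
      apply LipschitzOnWith.of_dist_le_mul
      intro s hs r hr
      rw [dist_eq_norm, dist_eq_norm]
      have := hG2 _ (hm s hs α) _ (hm r hr α)
      have e3 : ‖((α, s) : ℝ × ℝ) - (α, r)‖ = ‖s - r‖ := by simp [Prod.norm_def]
      rw [e3] at this
      exact this
    exact this.continuousOn
  have hkin : ∀ t ∈ Icc (0:ℝ) T, ∀ α, dot (PhiE (G (α, t) (0, 1)) - PhiE (D.u1 (D.z α t) t)) (Complex.I * PhiE (deriv (fun a => D.z a t) α)) = 0 := by
    intro t ht α
    rw [(hda t ht α).deriv]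
    let k : ℝ → ℝ := fun s => dot (PhiE (G (α, s) (0, 1)) - PhiE (D.u1 (D.z α s) s)) (Complex.I * PhiE (xvec + G (α, s) (1, 0)))
    have hk : ContinuousOn k (Icc (0:ℝ) T) := by
      have c1 : ContinuousOn (fun s => D.u1 (D.z α s) s) (Icc (0:ℝ) T) :=
        D.hv1_smooth.continuousOn.comp (f := fun s : ℝ => (α, s)) (by fun_prop) (fun s hs => hm s hs α)
      have c2 : ∀ v, ContinuousOn (fun s => G (α, s) v) (Icc (0:ℝ) T) := fun v => (hGc α).clm_apply continuousOn_const
      have c3 : ContinuousOn (fun s => PhiE (G (α, s) (0, 1)) - PhiE (D.u1 (D.z α s) s)) (Icc (0:ℝ) T) :=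
        (PhiE.continuous.comp_continuousOn (c2 _)).sub (PhiE.continuous.comp_continuousOn c1)
      have c4 : ContinuousOn (fun s => Complex.I * PhiE (xvec + G (α, s) (1, 0))) (Icc (0:ℝ) T) :=
        continuousOn_const.mul (PhiE.continuous.comp_continuousOn (continuousOn_const.add (c2 _)))
      have c5 := Complex.continuous_re.comp_continuousOn c3
      have c6 := Complex.continuous_im.comp_continuousOn c3
      have c7 := Complex.continuous_re.comp_continuousOn c4
      have c8 := Complex.continuous_im.comp_continuousOn c4
      exact (c5.mul c7).add (c6.mul c8)
    have h0 : EqOn k 0 (Ioo 0 T) := by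
      intro s hs
      have hs' : s ∈ Icc (0:ℝ) T := ⟨hs.1.le, hs.2.le⟩
      have h1 := D.hkin1 s hs' α
      rw [((hdt s hs' α).hasDerivAt (Icc_mem_nhds hs.1 hs.2)).deriv, PhiE_rinner, PhiE_perpv, map_sub, (hda s hs' α).deriv] at h1
      exact h1
    have := h0.of_subset_closure hk continuousOn_const Ioo_subset_Icc_self (by rw [closure_Ioo hT.ne])
    exact this ht
  refine ⟨a, fun α t => PhiE (G (α, t) (0, 1)), ?_⟩
  constructor
  case hT => exact hT
  case hA => exact hA
  case crv => exact hcrv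
  case strip =>
    intro t ht
    refine ⟨?_, ?_⟩
    · intro w hw
      exact (ha t ht).1 (by rw [mem_ofPred_eq] at hw ⊢; rwa [PhiE_symm_one])
    · intro w hw
      exact (ha t ht).2 (by rw [mem_ofPred_eq] at hw ⊢; rwa [PhiE_symm_one])
  case ltz =>
    intro t ht s hs α
    rw [← map_sub, PhiE.norm_map]
    refine (convex_Icc 0 T).norm_image_sub_le_of_norm_hasDerivWithin_le (f := fun s => D.z α s) (fun x hx => hdt x hx α) (fun x hx => ?_) hs ht
    refine ((G (α, x)).le_opNorm _).trans ?_
    rw [e2, mul_one]; exact (hG1 _ (hm x hx α)).2.2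
  case ltp =>
    intro t ht s hs α
    rw [← map_sub, PhiE.norm_map, (hda t ht α).deriv, (hda s hs α).deriv, add_sub_add_left_eq_sub, ← sub_apply]
    refine ((G (α, t) - G (α, s)).le_opNorm _).trans ?_
    have h1 := hG2 _ (hm t ht α) _ (hm s hs α)
    have e3 : ‖((α, t) : ℝ × ℝ) - (α, s)‖ = |t - s| := by simp [Prod.norm_def]
    rw [e1, mul_one, ← e3]; exact h1
  case hzt =>
    intro t ht α
    exact (PhiE.toContinuousLinearEquiv : E2 →L[ℝ] ℂ).hasFDerivAt.comp_hasDerivWithinAt t (hdt t ht α)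
  case hper => intro t ht; exact per_aux (D.hper_Ω2 t ht)
  case hvel =>
    intro t ht0 α β hs h1 h2
    have ht : t ∈ Icc (0:ℝ) T := ⟨ht0.1.le, ht0.2⟩
    have C := hcrv t ht
    have hv := D.vel hT ht C hs
    have hne : ∀ γ, PhiE (deriv (fun a => D.z a t) γ) ≠ 0 := by
      intro γ h
      have := C.hlow γ
      simp only [h, norm_zero] at this
      exact absurd this (not_le.2 (inv_pos.2 hA0))
    have k1 := dot_perp (hne α) h1 (hkin t ht α)
    have k2 := dot_perp (hne β) h2 (hkin t ht β)
    have e : dot (PhiE (G (α, t) (0, 1)) - PhiE (G (β, t) (0, 1))) (PhiE (D.z α t) - PhiE (D.z β t)) =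
        dot (PhiE (D.u1 (D.z α t) t) - PhiE (D.u1 (D.z β t) t)) (PhiE (D.z α t) - PhiE (D.z β t)) := by
      unfold dot at k1 k2 ⊢
      simp only [Complex.sub_re, Complex.sub_im] at k1 k2 ⊢
      linear_combination k1 - k2
    rw [e]
    refine (dot_abs_le _ _).trans ?_
    rw [← map_sub, ← map_sub, PhiE.norm_map, PhiE.norm_map]
    calc _ ≤ A ^ 2 * ‖D.z α t - D.z β t‖ * ‖D.z α t - D.z β t‖ := mul_le_mul_of_nonneg_right hv (norm_nonneg _)
      _ = _ := by ring
  case h0 =>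
    intro α β
    rw [← map_sub, PhiE.norm_map]
    by_cases h : α = β
    · subst h; simp
    · have := D.hchord0 α β
      rw [chordArcT, if_neg h] at this
      have hp : 0 < |α - β| := abs_pos.2 (sub_ne_zero.2 h)
      rw [le_div_iff₀ hp] at this
      rw [div_eq_inv_mul]; exact this


/-- **Geometry near a potential splash (Proposition 2.5(i)).**  There are constants
`ε₁, ε₄, ε₅, C` (depending only on `A`, `T`, `σ`, `g`, `ρ¹`, `ρ²`), with `ε₄ ≤ ε₅¹⁰⁰`, such that
`ε₁` satisfies the local chord-arc bound, and whenever `inf F(z)(·,·,t) = ε ≤ ε₄` there is a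
distance-minimizing pair `α₁, α₂` with `|α₁ − α₂| ∈ [2ε₁, ε₁⁻¹/2]`, `d := |z(α₂) − z(α₁)| ≈ ε`,
the open segment between `z(α₁,t)` and `z(α₂,t)` contained in `Ω²(t)`, `∂_α z(α₁), ∂_α z(α₂)`
orthogonal to `e := (z(α₂)−z(α₁))/d` and antiparallel to each other, and the four one-sided
collar inclusions into `Ω¹(t)` and `Ω²(t)`. -/
theorem near_splash_geometry (ρ1 ρ2 σ grav T A : ℝ)
    (hρ1 : 0 < ρ1) (hρ2 : 0 < ρ2) (hσ : 0 ≤ σ) (hgrav : 0 ≤ grav) (hT : 0 < T) (hA : 1 ≤ A) :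
    ∃ ε1 ε4 ε5 C : ℝ, 0 < ε1 ∧ 0 < ε4 ∧ ε4 < 1 ∧ 0 < ε5 ∧ ε5 < 1 ∧ ε4 ≤ ε5 ^ 100 ∧ 1 ≤ C ∧
      ∀ D : TwoFluid ρ1 ρ2 σ grav T A,
        (∀ t ∈ Icc (0:ℝ) T, ∀ α β : ℝ, |α - β| ≤ ε1 →
            ε1 * |α - β| ≤ ‖D.z α t - D.z β t‖) ∧
        (∀ t ∈ Icc (0:ℝ) T, ∀ ε : ℝ,
          ε = ⨅ p : ℝ × ℝ, chordArcT D.z p.1 p.2 t → ε ≤ ε4 →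
          ∃ α1 α2 : ℝ,
            |α1 - α2| ∈ Icc (2 * ε1) (ε1⁻¹ / 2) ∧
            ‖D.z α1 t - D.z α2 t‖ =
              sInf {r : ℝ | ∃ α β : ℝ, |α - β| ∈ Icc ε1 ε1⁻¹ ∧ r = ‖D.z α t - D.z β t‖} ∧
            C⁻¹ * ε ≤ ‖D.z α2 t - D.z α1 t‖ ∧ ‖D.z α2 t - D.z α1 t‖ ≤ C * ε ∧
            openSegment ℝ (D.z α1 t) (D.z α2 t) ⊆ D.Ω2 t ∧
            rinner (deriv (fun a => D.z a t) α1) (D.z α2 t - D.z α1 t) = 0 ∧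
            rinner (deriv (fun a => D.z a t) α2) (D.z α2 t - D.z α1 t) = 0 ∧
            rinner (deriv (fun a => D.z a t) α1) (deriv (fun a => D.z a t) α2) < 0 ∧
            (∀ β ρ : ℝ, |β - α1| ≤ ε5 → ρ ∈ Ioo 0 ε5 →
              D.z β t - (ρ / ‖D.z α2 t - D.z α1 t‖) • (D.z α2 t - D.z α1 t) ∈ D.Ω1 t) ∧
            (∀ β ρ : ℝ, |β - α2| ≤ ε5 → ρ ∈ Ioo 0 ε5 →
              D.z β t + (ρ / ‖D.z α2 t - D.z α1 t‖) • (D.z α2 t - D.z α1 t) ∈ D.Ω1 t) ∧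
            (∀ β ρ : ℝ, |β - α1| ≤ ε5 → ρ ∈ Ioo 0 ‖D.z α2 t - D.z α1 t‖ →
              D.z β t + (ρ / ‖D.z α2 t - D.z α1 t‖) • (D.z α2 t - D.z α1 t) ∈ D.Ω2 t) ∧
            (∀ β ρ : ℝ, |β - α2| ≤ ε5 → ρ ∈ Ioo 0 ‖D.z α2 t - D.z α1 t‖ →
              D.z β t - (ρ / ‖D.z α2 t - D.z α1 t‖) • (D.z α2 t - D.z α1 t) ∈ D.Ω2 t)) := by
  have hA0 : 0 < A := by linarith
  have he : 0 < eps1 A := by unfold eps1; positivity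
  have he8 : eps1 A ≤ 1 / 8 := by
    unfold eps1
    apply one_div_le_one_div_of_le (by norm_num)
    nlinarith
  have hinv : (eps1 A)⁻¹ = 8 * A ^ 2 := by unfold eps1; rw [one_div, inv_inv]
  have hc : 0 < Dyn.cc A T := by unfold Dyn.cc; positivity
  obtain ⟨m, hm⟩ : ∃ m, m = min (eps1 A / (2 * A)) (Dyn.cc A T) := ⟨_, rfl⟩
  have hm0 : 0 < m := by rw [hm]; exact lt_min (by positivity) hc
  have hm1 : m ≤ eps1 A / (2 * A) := by rw [hm]; exact min_le_left _ _
  have hm2 : m ≤ Dyn.cc A T := by rw [hm]; exact min_le_right _ _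
  have hme : m ≤ eps1 A := hm1.trans (div_le_self he.le (by linarith))
  have hA2 : 1 ≤ A ^ 2 := one_le_pow₀ hA
  have h40 : 0 < m / (8 * A ^ 2) := by positivity
  have h4m : m / (8 * A ^ 2) ≤ m / 8 := by
    apply div_le_div_of_nonneg_left hm0.le (by norm_num); linarith
  obtain ⟨e4, he4⟩ : ∃ e4, e4 = min (m ^ 100) (m / (8 * A ^ 2)) := ⟨_, rfl⟩
  have he40 : 0 < e4 := by rw [he4]; exact lt_min (by positivity) h40
  have he4a : e4 ≤ m ^ 100 := by rw [he4]; exact min_le_left _ _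
  have he4b : e4 ≤ m / (8 * A ^ 2) := by rw [he4]; exact min_le_right _ _
  have he4c : 4 * A ^ 2 * e4 < m := by
    rw [le_div_iff₀ (by positivity)] at he4b
    nlinarith
  have hAe : 4 * A ^ 2 * (2 * eps1 A) = 1 := by unfold eps1; field_simp; norm_num
  refine ⟨eps1 A, e4, m, 4 * A ^ 2, he, he40, by linarith, hm0, by linarith, he4a, by linarith, ?_⟩
  intro D
  obtain ⟨a, zt, Y⟩ := D.toDyn hT hA
  have hnorm : ∀ t α β, ‖PhiE (D.z α t) - PhiE (D.z β t)‖ = ‖D.z α t - D.z β t‖ := by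
    intro t α β; rw [← map_sub, PhiE.norm_map]
  refine ⟨?_, ?_⟩
  · intro t ht α β hab
    have C := Y.crv t ht
    have h := C.chord4 (α := α) (β := β) (by linarith)
    simp only [hnorm] at h
    have h1 : 2 * A * eps1 A ≤ 1 := by nlinarith
    have h2 : eps1 A * |α - β| ≤ eps1 A * (2 * A * ‖D.z α t - D.z β t‖) := mul_le_mul_of_nonneg_left h he.le
    nlinarith [norm_nonneg (D.z α t - D.z β t)]
  intro t ht ε hε hεle
  have C := Y.crv t ht
  have hD : ∀ α β, Adm (fun α => PhiE (D.z α t)) (PhiE.symm ⁻¹' D.Ω2 t) A α β →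
      Dyn.cc A T ≤ ‖PhiE (D.z α t) - PhiE (D.z β t)‖ := fun α β h => Y.lower ht h
  have hbdd : BddBelow (range fun p : ℝ × ℝ => chordArcT D.z p.1 p.2 t) := by
    refine ⟨0, ?_⟩
    rintro _ ⟨p, rfl⟩
    simp only [chordArcT]
    split_ifs <;> positivity
  have hF1 : ∀ α β, ε * |α - β| ≤ ‖PhiE (D.z α t) - PhiE (D.z β t)‖ := by
    intro α β
    rw [hnorm]
    by_cases h : α = β
    · subst h; simp
    · have h1 : ε ≤ chordArcT D.z α β t := by rw [hε]; exact ciInf_le hbdd (α, β)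
      rw [chordArcT, if_neg h] at h1
      rwa [le_div_iff₀ (abs_pos.2 (sub_ne_zero.2 h))] at h1
  have hsmall : e4 + 1 / (4 * A) < A⁻¹ := by
    have k1 : 4 * A * e4 < 1 := by nlinarith
    have k2 : e4 < 1 / (4 * A) := by rw [lt_div_iff₀ (by positivity)]; linarith
    have k3 : 1 / (4 * A) + 1 / (4 * A) = A⁻¹ / 2 := by field_simp; norm_num
    have k4 : 0 < A⁻¹ := inv_pos.2 hA0
    linarith
  have hF2 : ∀ η > 0, η < 1 / (4 * A) → ∃ α β, α ≠ β ∧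
      ‖PhiE (D.z α t) - PhiE (D.z β t)‖ < (ε + η) * |α - β| := by
    intro η hη hη2
    have h1 : ⨅ p : ℝ × ℝ, chordArcT D.z p.1 p.2 t < ε + η := by rw [← hε]; linarith
    obtain ⟨⟨α, β⟩, hp⟩ := exists_lt_of_ciInf_lt h1
    simp only [chordArcT] at hp
    by_cases h : α = β
    · rw [if_pos h] at hp
      have := D.hz_lower t ht α
      linarith
    · rw [if_neg h, div_lt_iff₀ (abs_pos.2 (sub_ne_zero.2 h))] at hp
      exact ⟨α, β, h, by rw [hnorm]; exact hp⟩
  obtain ⟨α1, α2, M, M', hlo, hhi, hmin, hd1, hd2⟩ := C.exists_MP hD hεle (by linarith) (by linarith) hF1 hF2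
  have an := C.anti M M'
  simp only [hnorm] at hmin hd1 hd2
  have hsym : ‖D.z α1 t - D.z α2 t‖ = ‖D.z α2 t - D.z α1 t‖ := norm_sub_rev _ _
  have hsc : ∀ (ρ : ℝ) (α β : ℝ), PhiE.symm ((ρ : ℂ) * ((PhiE (D.z α t) - PhiE (D.z β t)) / (‖PhiE (D.z α t) - PhiE (D.z β t)‖ : ℂ))) =
      (ρ / ‖D.z α t - D.z β t‖) • (D.z α t - D.z β t) := by
    intro ρ α β
    apply PhiE.injective
    rw [PhiE.apply_symm_apply, map_smul, map_sub, hnorm, Complex.real_smul]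
    push_cast
    ring
  have hneg : ∀ ρ : ℝ, (ρ / ‖D.z α1 t - D.z α2 t‖) • (D.z α1 t - D.z α2 t) = -((ρ / ‖D.z α2 t - D.z α1 t‖) • (D.z α2 t - D.z α1 t)) := by
    intro ρ
    rw [hsym, ← smul_neg, neg_sub]
  refine ⟨α1, α2, ⟨hlo, by rw [hinv]; linarith⟩, ?_, ?_, by rw [← hsym]; exact hd2, ?_, ?_, ?_, ?_, ?_, ?_, ?_, ?_⟩
  · symm
    apply IsLeast.csInf_eq
    refine ⟨⟨α1, α2, ⟨by linarith, by rw [hinv]; linarith⟩, rfl⟩, ?_⟩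
    rintro _ ⟨α, β, ⟨k1, k2⟩, rfl⟩
    rw [hinv] at k2
    exact hmin α β k1 k2
  · rw [← hsym]
    refine le_trans (le_of_eq ?_) hd1
    unfold eps1
    field_simp
    ring
  · intro x hx
    have h1 : PhiE x ∈ openSegment ℝ (PhiE (D.z α1 t)) (PhiE (D.z α2 t)) := by
      obtain ⟨p, q, hp, hq, hpq, rfl⟩ := hx
      exact ⟨p, q, hp, hq, hpq, by simp only [map_add, map_smul]⟩
    have h2 := M.seg h1
    rwa [mem_preimage, PhiE.symm_apply_apply] at h2
  · rw [PhiE_rinner, map_sub]; exact M.perp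
  · rw [PhiE_rinner, map_sub]
    have h1 := M'.perp
    unfold dot at h1 ⊢
    simp only [Complex.sub_re, Complex.sub_im] at h1 ⊢
    linear_combination -h1
  · rw [PhiE_rinner]; exact an
  · intro β ρ hβ hρ
    have h := C.collar1 M hD hm0 hm1 hm2 hβ hρ.1 hρ.2
    rw [mem_preimage, map_sub, hsc, PhiE.symm_apply_apply] at h
    exact h
  · intro β ρ hβ hρ
    have h := C.collar1 M' hD hm0 hm1 hm2 hβ hρ.1 hρ.2
    rw [mem_preimage, map_sub, hsc, PhiE.symm_apply_apply, hneg, sub_neg_eq_add] at h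
    exact h
  · intro β ρ hβ hρ
    have h := C.collar2 M hm0 hme hβ hρ.1 (by simp only [hnorm]; exact hρ.2)
    rw [mem_preimage, map_add, hsc, PhiE.symm_apply_apply] at h
    exact h
  · intro β ρ hβ hρ
    have h := C.collar2 M' hm0 hme hβ hρ.1 (by simp only [hnorm]; rw [hsym]; exact hρ.2)
    rw [mem_preimage, map_add, hsc, PhiE.symm_apply_apply, hneg, ← sub_eq_add_neg] at h
    exact h
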